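/- arXiv:1312.6023 — 2 statements merged into one kernel-verified Lean document; each statement's English description precedes it below -/
import Mathlib

section
/- Let A be a unital complex Banach algebra, let S = Σ_{i=1}^n M_{a_i,b_i} be a spectrally bounded elementary operator of length n on A, and let ρ be an irreducible representation of A on a complex Banach space E. Suppose dim V'_{S_ρ} = lDim V'_{S_ρ}, where V'_{S_ρ} = span{ρ(b_i a_j) : 1 ≤ i,j ≤ n} + ℂ·I. Then either (a) for every ζ ∈ E and every x ∈ A with ρ(x)ρ(b_i a_j)ζ ∈ ℂζ for all i, j, the operator Σ_{i=1}^n ρ(a_i)ρ(x)ρ(b_i) maps span{ρ(a_1)ζ,…,ρ(a_n)ζ} into itself and its restriction to this subspace is nilpotent; or (b) there exist u, v ∈ A and an elementary operator S₂ of length n−1 such that S = M_{u,v} + S₂ and ρ(vu) is a nonzero scalar multiple of the identity operator on E. -/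
open scoped ENNReal NNReal

/-- A map between complex algebras is spectrally bounded if `r(Tx) ≤ M·r(x)`
for some constant `M ≥ 0` and all `x`. -/
def SpectrallyBounded {A B : Type*} [Ring A] [Algebra ℂ A] [Ring B] [Algebra ℂ B]
    (T : A → B) : Prop :=
  ∃ M : ℝ≥0, ∀ x : A, spectralRadius ℂ (T x) ≤ (M : ℝ≥0∞) * spectralRadius ℂ x

/-- Evaluation of continuous linear operators at a vector, as a linear map. -/
def evalCLM {E : Type*} [NormedAddCommGroup E] [NormedSpace ℂ E] (ζ : E) :
    (E →L[ℂ] E) →ₗ[ℂ] E where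
  toFun v := v ζ
  map_add' _ _ := rfl
  map_smul' _ _ := rfl

/-- The local dimension `lDim V = max {dim V ζ : ζ ∈ E}` of a space `V` of
continuous linear operators on `E`. -/
noncomputable def localDim {E : Type*} [NormedAddCommGroup E] [NormedSpace ℂ E]
    (V : Submodule ℂ (E →L[ℂ] E)) : ℕ :=
  sSup {n : ℕ | ∃ ζ : E, n = Module.finrank ℂ (V.map (evalCLM ζ))}


section Helpers
variable {A : Type*} [NormedRing A] [NormedAlgebra ℂ A] [CompleteSpace A]
    {E : Type*} [NormedAddCommGroup E] [NormedSpace ℂ E] [CompleteSpace E]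

theorem aux_schur (ρ : A →ₐ[ℂ] (E →L[ℂ] E)) (hρcont : Continuous ρ)
    (hρirr : ∀ ζ : E, ζ ≠ 0 → ∀ η : E, ∃ y : A, ρ y ζ = η)
    (φ : E →+ E) (hφ : ∀ y e, φ (ρ y e) = ρ y (φ e)) : ∃ c : ℂ, ∀ e, φ e = c • e := by
  rcases subsingleton_or_nontrivial E with hE | hE
  · exact ⟨0, fun e => Subsingleton.elim _ _⟩
  obtain ⟨ζ, hζ⟩ := exists_ne (0 : E)
  have hlin : ∀ (c : ℂ) e, φ (c • e) = c • φ e := by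
    intro c e
    have := hφ (algebraMap ℂ A c) e
    simpa [AlgHom.commutes, Algebra.algebraMap_eq_smul_one] using this
  let ev : A →L[ℂ] E :=
    ⟨{ toFun := fun y => ρ y ζ, map_add' := by simp, map_smul' := by simp }, by
      exact hρcont.clm_apply continuous_const⟩
  have hev : ∀ y, ev y = ρ y ζ := fun _ => rfl
  have hsurj : Function.Surjective ev := hρirr ζ hζ
  have hq := ev.isQuotientMap hsurj
  have hcont : Continuous φ := by
    rw [hq.continuous_iff]
    have : (φ ∘ ev) = fun y => ρ y (φ ζ) := by
      ext y; simp [hev, hφ]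
    rw [this]
    exact hρcont.clm_apply continuous_const
  let Φ : E →L[ℂ] E := ⟨{ toFun := φ, map_add' := by simp, map_smul' := hlin }, hcont⟩
  have hΦ : ∀ e, Φ e = φ e := fun _ => rfl
  obtain ⟨c, hc⟩ := spectrum.nonempty Φ
  refine ⟨c, ?_⟩
  by_contra hne
  push Not at hne
  obtain ⟨e₀, he₀⟩ := hne
  apply hc
  show IsUnit (algebraMap ℂ (E →L[ℂ] E) c - Φ)
  set ψ := algebraMap ℂ (E →L[ℂ] E) c - Φ with hψ
  have hψa : ∀ e, ψ e = c • e - φ e := by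
    intro e; simp [hψ, Algebra.algebraMap_eq_smul_one, hΦ]
  have hcomm : ∀ y e, ψ (ρ y e) = ρ y (ψ e) := by
    intro y e; simp [hψa, hφ]
  have h0 : ψ e₀ ≠ 0 := by
    rw [hψa]; intro h; exact he₀ (sub_eq_zero.mp h).symm
  rw [ContinuousLinearMap.isUnit_iff_bijective]
  constructor
  · rw [injective_iff_map_eq_zero]
    intro e he
    by_contra hne
    obtain ⟨y, hy⟩ := hρirr e hne e₀
    apply h0
    rw [← hy, hcomm, he, map_zero]
  · intro θ
    obtain ⟨y, hy⟩ := hρirr _ h0 θ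
    exact ⟨ρ y e₀, by rw [hcomm, hy]⟩

theorem aux_density (ρ : A →ₐ[ℂ] (E →L[ℂ] E)) (hρcont : Continuous ρ)
    (hρirr : ∀ ζ : E, ζ ≠ 0 → ∀ η : E, ∃ y : A, ρ y ζ = η)
    (F : E →ₗ[ℂ] E) (s : Finset E) : ∃ y : A, ∀ e ∈ s, ρ y e = F e := by
  rcases subsingleton_or_nontrivial E with hE | hE
  · exact ⟨0, fun e _ => Subsingleton.elim _ _⟩
  let _ : Module A E := Module.compHom E (ρ : A →+* (E →L[ℂ] E))
  have hsm : ∀ (y : A) (e : E), y • e = ρ y e := fun _ _ => rfl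
  have : IsSimpleModule A E := by
    rw [isSimpleModule_iff_toSpanSingleton_surjective]
    refine ⟨hE, fun ζ hζ η => ?_⟩
    obtain ⟨y, hy⟩ := hρirr ζ hζ η
    exact ⟨y, hy⟩
  let F' : Module.End (Module.End A E) E :=
    { toFun := F
      map_add' := by simp
      map_smul' := by
        intro g e
        obtain ⟨c, hc⟩ := aux_schur ρ hρcont hρirr g.toAddMonoidHom
          (fun y e => g.map_smul y e)
        have hc' : ∀ e, g e = c • e := hc
        simp [hc'] }
  obtain ⟨r, hr⟩ := jacobson_density (R := A) F' s
  exact ⟨r, fun e he => (hr e he).symm⟩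

theorem aux_density' (ρ : A →ₐ[ℂ] (E →L[ℂ] E)) (hρcont : Continuous ρ)
    (hρirr : ∀ ζ : E, ζ ≠ 0 → ∀ η : E, ∃ y : A, ρ y ζ = η)
    (X : Set (E →L[ℂ] E)) (hX : X.Finite) (ζ₀ : E)
    (hinj : ∀ v ∈ Submodule.span ℂ X, v ζ₀ = 0 → v = 0)
    (G : (E →L[ℂ] E) →ₗ[ℂ] E) :
    ∃ y : A, ∀ v ∈ Submodule.span ℂ X, ρ y (v ζ₀) = G v := by
  classical
  let ι := (evalCLM ζ₀).comp (Submodule.span ℂ X).subtype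
  have hι : LinearMap.ker ι = ⊥ := by
    rw [LinearMap.ker_eq_bot']
    rintro ⟨v, hv⟩ h
    exact Subtype.ext (hinj v hv h)
  obtain ⟨g, hg⟩ := ι.exists_leftInverse_of_injective hι
  have hg' : ∀ v (hv : v ∈ Submodule.span ℂ X), g (v ζ₀) = ⟨v, hv⟩ := fun v hv =>
    congrArg (fun f => f ⟨v, hv⟩) hg
  obtain ⟨y, hy⟩ := aux_density ρ hρcont hρirr (G.comp ((Submodule.span ℂ X).subtype.comp g))
    (hX.toFinset.image fun v => v ζ₀)
  refine ⟨y, fun v hv => ?_⟩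
  have h := LinearMap.eqOn_span (s := X)
    (f := ((ρ y : E →ₗ[ℂ] E).comp (evalCLM ζ₀))) (g := G) (fun v hv => by
      have := hy (v ζ₀) (by simp; exact ⟨v, hv, rfl⟩)
      simp only [LinearMap.comp_apply, hg' v (Submodule.subset_span hv)] at this
      exact this)
  exact h hv

theorem aux_exp (ρ : A →ₐ[ℂ] (E →L[ℂ] E)) (hρcont : Continuous ρ) (h : A) (c : ℂ) (e : E)
    (he : ρ h e = c • e) : ρ (NormedSpace.exp h) e = Complex.exp c • e := by
  have h1 := NormedSpace.exp_series_hasSum_exp' (𝕂 := ℂ) h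
  have h2 := NormedSpace.exp_series_hasSum_exp' (𝕂 := ℂ) c
  rw [← Complex.exp_eq_exp_ℂ] at h2
  let ev : A →L[ℂ] E :=
    ⟨{ toFun := fun y => ρ y e, map_add' := by simp, map_smul' := by simp }, by
      exact hρcont.clm_apply continuous_const⟩
  have h3 := h1.mapL ev
  have h4 := h2.smul_const e
  refine h3.unique ?_
  convert h4 using 2 with k
  have : ρ (h ^ k) e = c ^ k • e := by
    induction k with
    | zero => simp
    | succ k ih => 
      rw [pow_succ, map_mul, mul_apply_eq_comp, he, map_smul, ih, smul_smul, pow_succ', ]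
  show ρ _ e = _
  rw [map_smul, ContinuousLinearMap.smul_apply, this, smul_smul, smul_eq_mul]


theorem aux_key {n : ℕ} (a b : Fin n → A) (S : A → A)
    (hSrep : ∀ x : A, S x = ∑ i, a i * x * b i)
    (hS : SpectrallyBounded S)
    (ρ : A →ₐ[ℂ] (E →L[ℂ] E)) (hρcont : Continuous ρ)
    (hρirr : ∀ ζ : E, ζ ≠ 0 → ∀ η : E, ∃ y : A, ρ y ζ = η)
    (ζ₀ : E)
    (hinj : ∀ v ∈ Submodule.span ℂ ({(1 : E →L[ℂ] E)} ∪
          Set.range fun p : Fin n × Fin n => ρ (b p.1 * a p.2)), v ζ₀ = 0 → v = 0)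
    (f : (E →L[ℂ] E) →ₗ[ℂ] ℂ) (hf : f 1 = 0) (t : Fin n → ℂ)
    (ht : ∀ i, f (∑ j, t j • ρ (b i * a j)) = t i) : t = 0 := by
  by_contra hne
  set X : Set (E →L[ℂ] E) := {(1 : E →L[ℂ] E)} ∪
          Set.range fun p : Fin n × Fin n => ρ (b p.1 * a p.2) with hX
  have hXf : X.Finite := (Set.finite_singleton _).union (Set.finite_range _)
  have h1X : (1 : E →L[ℂ] E) ∈ Submodule.span ℂ X := Submodule.subset_span (by simp [hX])
  have hbX : ∀ i, ∑ j, t j • ρ (b i * a j) ∈ Submodule.span ℂ X := fun i =>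
    Submodule.sum_mem _ fun j _ => Submodule.smul_mem _ _ <| Submodule.subset_span <|
      Or.inr ⟨(i, j), rfl⟩
  set w : E := ∑ j, t j • ρ (a j) ζ₀ with hw
  have hbw : ∀ i, ρ (b i) w = (∑ j, t j • ρ (b i * a j)) ζ₀ := by
    intro i
    simp [hw]
  have hw0 : w ≠ 0 := by
    intro h0
    apply hne
    ext i
    have := hbw i
    rw [h0, map_zero] at this
    rw [← ht i, hinj _ (hbX i) this.symm]
    simp
  -- a functional on operators with p 1 = 1
  have hone : (1 : E →L[ℂ] E) ≠ 0 := by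
    intro h
    apply hw0
    have := congrArg (fun T : E →L[ℂ] E => T w) h
    simpa using this
  obtain ⟨p, hp⟩ : ∃ p : (E →L[ℂ] E) →ₗ[ℂ] ℂ, p 1 = 1 := by
    obtain ⟨p, hp, -⟩ := Submodule.exists_le_ker_of_notMem
      (p := (⊥ : Submodule ℂ (E →L[ℂ] E))) (v := 1) (by simpa using hone)
    exact ⟨(p 1)⁻¹ • p, by simp [hp]⟩
  obtain ⟨x, hx⟩ := aux_density' ρ hρcont hρirr X hXf ζ₀ hinj (f.smulRight ζ₀)
  obtain ⟨h, hh⟩ := aux_density' ρ hρcont hρirr X hXf ζ₀ hinj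
    (evalCLM ζ₀ - p.smulRight ζ₀)
  have hζ : ρ h ζ₀ = 0 := by
    have := hh 1 h1X
    simpa [hp, evalCLM] using this
  have hxζ : ρ x ζ₀ = 0 := by
    have := hx 1 h1X
    simpa [hf] using this
  obtain ⟨M, hM⟩ := hS
  have hfin : spectralRadius ℂ x < ⊤ := by
    refine lt_of_le_of_lt (spectrum.spectralRadius_le_pow_nnnorm_pow_one_div ℂ x 0) ?_
    simp [ENNReal.mul_lt_top]
  have main : ∀ s : ℂ, (‖Complex.exp s‖₊ : ℝ≥0∞) ≤ M * spectralRadius ℂ x := by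
    intro s
    let _ : NormedAlgebra ℚ A := NormedAlgebra.restrictScalars ℚ ℂ A
    let g : Aˣ := ⟨NormedSpace.exp (s • h), NormedSpace.exp (-(s • h)),
      by
        rw [← NormedSpace.exp_add_of_commute (Commute.neg_right (Commute.refl _)),
          add_neg_cancel, NormedSpace.exp_zero], by
        rw [← NormedSpace.exp_add_of_commute (Commute.neg_left (Commute.refl _)),
          neg_add_cancel, NormedSpace.exp_zero]⟩
    have hg1 : ρ (g : A) ζ₀ = ζ₀ := by
      have := aux_exp ρ hρcont (s • h) 0 ζ₀ (by simp [hζ])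
      rw [Complex.exp_zero, one_smul] at this
      exact this
    have hg2 : ρ (↑g⁻¹ : A) ζ₀ = ζ₀ := by
      have := aux_exp ρ hρcont (-(s • h)) 0 ζ₀ (by simp [hζ])
      rw [Complex.exp_zero, one_smul] at this
      exact this
    have hg3 : ∀ v ∈ Submodule.span ℂ X,
        ρ (g : A) (v ζ₀) = p v • ζ₀ + Complex.exp s • (v ζ₀ - p v • ζ₀) := by
      intro v hv
      have := aux_exp ρ hρcont (s • h) s (v ζ₀ - p v • ζ₀) (by
        simp [hζ, hh v hv, evalCLM])
      have h2 : ρ (g : A) (v ζ₀ - p v • ζ₀) = Complex.exp s • (v ζ₀ - p v • ζ₀) := this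
      rw [← h2, map_sub, map_smul, hg1]
      abel
    have hconj : ∀ v ∈ Submodule.span ℂ X,
        ρ (↑g⁻¹ * x * ↑g) (v ζ₀) = (Complex.exp s * f v) • ζ₀ := by
      intro v hv
      rw [map_mul, map_mul, mul_apply_eq_comp, mul_apply_eq_comp, hg3 v hv]
      simp [hxζ, hx v hv, hg2, smul_smul]
    have heig : ρ (S (↑g⁻¹ * x * ↑g)) w = Complex.exp s • w := by
      rw [hSrep, map_sum ρ, sum_apply]
      have : ∀ i, ρ (a i * (↑g⁻¹ * x * ↑g) * b i) w = Complex.exp s • t i • ρ (a i) ζ₀ := by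
        intro i
        rw [map_mul, map_mul, mul_apply_eq_comp, mul_apply_eq_comp, hbw, hconj _ (hbX i), ht,
          map_smul, mul_smul]
      simp_rw [this]
      rw [hw, Finset.smul_sum]
    have hspec : Complex.exp s ∈ spectrum ℂ (S (↑g⁻¹ * x * ↑g)) := by
      apply AlgHom.spectrum_apply_subset ρ
      intro hu
      have hu : IsUnit (algebraMap ℂ (E →L[ℂ] E) (Complex.exp s) - ρ (S (↑g⁻¹ * x * ↑g))) := hu
      rw [ContinuousLinearMap.isUnit_iff_bijective] at hu
      apply hw0
      apply hu.1
      rw [map_zero, sub_apply, heig]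
      simp [Algebra.algebraMap_eq_smul_one]
    calc (‖Complex.exp s‖₊ : ℝ≥0∞) ≤ spectralRadius ℂ (S (↑g⁻¹ * x * ↑g)) := le_iSup₂ (α := ℝ≥0∞) _ hspec
      _ ≤ M * spectralRadius ℂ (↑g⁻¹ * x * ↑g) := hM _
      _ = M * spectralRadius ℂ x := by
          unfold spectralRadius
          rw [spectrum.units_conjugate']
  have hK : (M : ℝ≥0∞) * spectralRadius ℂ x ≠ ⊤ := ENNReal.mul_ne_top (by simp) hfin.ne
  set K := (M : ℝ≥0∞) * spectralRadius ℂ x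
  have := main (K.toReal : ℂ)
  rw [← ENNReal.toReal_le_toReal (by simp) hK] at this
  have h3 : ‖Complex.exp (K.toReal : ℂ)‖ = Real.exp K.toReal := by
    rw [Complex.norm_exp]; simp
  have h2 := Real.add_one_le_exp K.toReal
  simp [h3] at this
  linarith


theorem aux_eig {n : ℕ} (C : Matrix (Fin n) (Fin n) ℂ) (hC : ¬ IsNilpotent C) :
    ∃ (l : ℂ) (t : Fin n → ℂ), l ≠ 0 ∧ t ≠ 0 ∧ C.mulVec t = l • t := by
  by_contra hcon
  push Not at hcon
  apply hC
  have hroot : ∀ l ∈ C.charpoly.roots, l = 0 := by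
    intro l hl
    by_contra hl0
    have hl' := (Polynomial.mem_roots'.mp hl).2
    rw [Polynomial.IsRoot, Matrix.eval_charpoly] at hl'
    obtain ⟨t, ht0, ht⟩ := Matrix.exists_mulVec_eq_zero_iff.mpr hl'
    apply hcon l t hl0 ht0
    rw [Matrix.sub_mulVec, sub_eq_zero] at ht
    rw [← ht]
    simp [Matrix.scalar_apply, ← Matrix.smul_one_eq_diagonal, Matrix.smul_mulVec]
  have hs := (IsAlgClosed.splits C.charpoly).eq_prod_roots_of_monic C.charpoly_monic
  rw [Multiset.eq_replicate_card.mpr hroot] at hs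
  have hz := C.aeval_self_charpoly
  rw [hs] at hz
  refine ⟨C.charpoly.roots.card, ?_⟩
  simpa using hz

theorem aux_split {n : ℕ} (a b : Fin n → A) (s t : Fin n → ℂ) (hst : ∑ i, s i * t i = 1) :
    ∃ c d : Fin (n - 1) → A, ∀ x, ∑ i, a i * x * b i =
      (∑ j, t j • a j) * x * (∑ i, s i • b i) + ∑ i, c i * x * d i := by
  obtain ⟨k, hk⟩ : ∃ k, t k ≠ 0 := by
    by_contra h
    push Not at h
    simp [h] at hst
  obtain _ | m := n
  · exact k.elim0
  set u := ∑ j, t j • a j with hu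
  set v := ∑ j, s j • b j with hv
  refine ⟨fun i => a (k.succAbove i) - s (k.succAbove i) • u,
    fun i => b (k.succAbove i) - (t (k.succAbove i) * (t k)⁻¹) • b k, fun x => ?_⟩
  have h1 : ∑ j, (a j - s j • u) * x * (b j - (t j * (t k)⁻¹) • b k) =
      ∑ i : Fin m, (a (k.succAbove i) - s (k.succAbove i) • u) * x *
        (b (k.succAbove i) - (t (k.succAbove i) * (t k)⁻¹) • b k) := by
    rw [Fin.sum_univ_succAbove _ k, mul_inv_cancel₀ hk]
    simp
  show _ = _ + ∑ i : Fin m, _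
  rw [← h1]
  have h2 : ∀ j, (a j - s j • u) * x * (b j - (t j * (t k)⁻¹) • b k) =
      a j * x * b j - (t k)⁻¹ • ((t j • a j) * x * b k) - u * x * (s j • b j)
        + (s j * t j) • ((t k)⁻¹ • (u * x * b k)) := by
    intro j
    simp only [sub_mul, mul_sub, smul_mul_assoc, mul_smul_comm, smul_smul]
    module
  simp_rw [h2]
  rw [Finset.sum_add_distrib, Finset.sum_sub_distrib, Finset.sum_sub_distrib, ← Finset.sum_smul,
    hst, ← Finset.mul_sum, ← Finset.smul_sum, ← Finset.sum_mul, ← Finset.sum_mul, one_smul,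
    ← hu, ← hv]
  abel

theorem aux_sep {V : Submodule ℂ (E →L[ℂ] E)} [FiniteDimensional ℂ V]
    (hV : Module.finrank ℂ V = localDim V) : ∃ ζ : E, ∀ v ∈ V, v ζ = 0 → v = 0 := by
  have hmem : localDim V ∈ {n : ℕ | ∃ ζ : E, n = Module.finrank ℂ (V.map (evalCLM ζ))} := by
    apply Nat.sSup_mem
    · exact ⟨_, 0, rfl⟩
    · refine ⟨Module.finrank ℂ V, ?_⟩
      rintro _ ⟨ζ, rfl⟩
      exact Submodule.finrank_map_le _ _
  obtain ⟨ζ, hζ⟩ := hmem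
  refine ⟨ζ, fun v hv h0 => ?_⟩
  rw [← hV] at hζ
  let ι := (evalCLM ζ).comp V.subtype
  have hr : LinearMap.range ι = V.map (evalCLM ζ) := by
    rw [LinearMap.range_comp, Submodule.range_subtype]
  have h1 := ι.finrank_range_add_finrank_ker
  rw [hr, ← hζ] at h1
  have h2 : LinearMap.ker ι = ⊥ := by
    rw [← Submodule.finrank_eq_zero]; omega
  have h3 := LinearMap.ker_eq_bot'.mp h2 ⟨v, hv⟩ h0
  exact congrArg Subtype.val h3

end Helpers
set_option maxHeartbeats 400000 in
/-- **Proposition 3.5.** Let `A` be a unital complex Banach algebra, let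
`S = Σ_{i=1}^n M_{a_i,b_i}` be a spectrally bounded elementary operator of
length `n` on `A`, and let `ρ` be an irreducible representation of `A` on a
complex Banach space `E`.  Suppose `dim V'_{S_ρ} = lDim V'_{S_ρ}`, where
`V'_{S_ρ} = span{ρ(b_i a_j)} + ℂ·I`.  Then either (a) for every `ζ ∈ E` and
`x ∈ A` with `ρ(x)ρ(b_i a_j)ζ ∈ ℂζ` for all `i, j`, the operator
`Σ ρ(a_i)ρ(x)ρ(b_i)` leaves `span{ρ(a_1)ζ,…,ρ(a_n)ζ}` invariant and its
restriction thereto is nilpotent; or (b) there exist `u, v ∈ A` and an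
elementary operator `S₂` of length `n−1` with `S = M_{u,v} + S₂` and `ρ(vu)` a
nonzero scalar multiple of the identity. -/
theorem spectrally_bounded_elementary_operator_nilpotent_or_split
    {A : Type*} [NormedRing A] [NormedAlgebra ℂ A] [CompleteSpace A]
    {E : Type*} [NormedAddCommGroup E] [NormedSpace ℂ E] [CompleteSpace E]
    {n : ℕ} (a b : Fin n → A) (S : A → A)
    (hSrep : ∀ x : A, S x = ∑ i, a i * x * b i)
    (hSlen : ∀ m : ℕ, (∃ c d : Fin m → A, ∀ x : A, S x = ∑ i, c i * x * d i) → n ≤ m)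
    (hS : SpectrallyBounded S)
    (ρ : A →ₐ[ℂ] (E →L[ℂ] E)) (hρcont : Continuous ρ)
    (hρirr : ∀ ζ : E, ζ ≠ 0 → ∀ η : E, ∃ y : A, ρ y ζ = η)
    (hV' : Module.finrank ℂ
        (Submodule.span ℂ ({(1 : E →L[ℂ] E)} ∪
          Set.range fun p : Fin n × Fin n => ρ (b p.1 * a p.2))) =
      localDim (Submodule.span ℂ ({(1 : E →L[ℂ] E)} ∪
          Set.range fun p : Fin n × Fin n => ρ (b p.1 * a p.2)))) :
    (∀ (ζ : E) (x : A), (∀ i j : Fin n, ∃ c : ℂ, ρ x (ρ (b i * a j) ζ) = c • ζ) →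
        (∀ w ∈ Submodule.span ℂ (Set.range fun i => ρ (a i) ζ),
            (∑ i, ρ (a i) * ρ x * ρ (b i)) w ∈
              Submodule.span ℂ (Set.range fun i => ρ (a i) ζ)) ∧
          ∃ k : ℕ, ∀ w ∈ Submodule.span ℂ (Set.range fun i => ρ (a i) ζ),
            ((∑ i, ρ (a i) * ρ x * ρ (b i)) ^ k) w = 0) ∨
      (∃ (u v : A) (c d : Fin (n - 1) → A) (μ : ℂ),
        (∀ x : A, S x = u * x * v + ∑ i, c i * x * d i) ∧
        (∀ m : ℕ, (∃ c' d' : Fin m → A, ∀ x : A,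
            S x - u * x * v = ∑ i, c' i * x * d' i) → n - 1 ≤ m) ∧
        μ ≠ 0 ∧ ρ (v * u) = μ • (1 : E →L[ℂ] E)) := by
  classical
  rw [or_iff_not_imp_left]
  intro hna
  push Not at hna
  obtain ⟨ζ, x, hx, hna⟩ := hna
  choose C hC using hx
  set T : E →L[ℂ] E := ∑ i, ρ (a i) * ρ x * ρ (b i) with hT
  have hTa : ∀ j, T (ρ (a j) ζ) = ∑ i, C i j • ρ (a i) ζ := by
    intro j
    rw [hT, sum_apply]
    refine Finset.sum_congr rfl fun i _ => ?_
    have := hC i j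
    rw [map_mul, mul_apply_eq_comp] at this
    rw [mul_apply_eq_comp, mul_apply_eq_comp, this, map_smul]
  have hinv : ∀ w ∈ Submodule.span ℂ (Set.range fun i => ρ (a i) ζ),
      T w ∈ Submodule.span ℂ (Set.range fun i => ρ (a i) ζ) := by
    intro w hw
    induction hw using Submodule.span_induction with
    | mem w hw =>
      obtain ⟨j, rfl⟩ := hw
      show T (ρ (a j) ζ) ∈ _
      rw [hTa]
      exact Submodule.sum_mem _ fun i _ => Submodule.smul_mem _ _ (Submodule.subset_span ⟨i, rfl⟩)
    | zero => simp
    | add w w' _ _ h h' => rw [map_add]; exact Submodule.add_mem _ h h'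
    | smul c w _ h => rw [map_smul]; exact Submodule.smul_mem _ _ h
  have hnn := hna hinv
  have hCn : ¬ IsNilpotent (Matrix.of C) := by
    rintro ⟨k, hk⟩
    obtain ⟨w, hw, hne⟩ := hnn k
    apply hne
    have hpow : ∀ (k : ℕ) j, (T ^ k) (ρ (a j) ζ) = ∑ i, (Matrix.of C ^ k) i j • ρ (a i) ζ := by
      intro k
      induction k with
      | zero => intro j; simp [Matrix.one_apply]
      | succ k ih =>
        intro j
        rw [pow_succ, mul_apply_eq_comp, hTa, map_sum]
        simp_rw [map_smul, ih, pow_succ, Matrix.mul_apply, Finset.sum_smul, Finset.smul_sum,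
          smul_smul]
        rw [Finset.sum_comm]
        refine Finset.sum_congr rfl fun i _ => Finset.sum_congr rfl fun l _ => ?_
        rw [mul_comm]; rfl
    have hle : Submodule.span ℂ (Set.range fun i => ρ (a i) ζ) ≤
        LinearMap.ker ((T ^ k : E →L[ℂ] E) : E →ₗ[ℂ] E) := by
      rw [Submodule.span_le]
      rintro _ ⟨j, rfl⟩
      show (T ^ k) (ρ (a j) ζ) = 0
      rw [hpow, hk]; simp
    exact hle hw
  obtain ⟨l, t, hl, ht0, ht⟩ := aux_eig _ hCn
  have hζ : ζ ≠ 0 := by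
    rintro rfl
    obtain ⟨w, hw, hne⟩ := hnn 0
    apply hne
    have : w = 0 := by
      have h0 : (Set.range fun i => ρ (a i) (0 : E)) ⊆ {0} := by
        rintro _ ⟨i, rfl⟩; simp
      have := Submodule.span_mono (R := ℂ) h0 hw
      simpa using this
    simp [this]
  obtain ⟨q, hq⟩ : ∃ q : E →ₗ[ℂ] ℂ, q ζ = 1 := by
    obtain ⟨p, hp, -⟩ := Submodule.exists_le_ker_of_notMem
      (p := (⊥ : Submodule ℂ E)) (v := ζ) (by simpa using hζ)
    exact ⟨(p ζ)⁻¹ • p, by simp [hp]⟩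
  let f₀ : (E →L[ℂ] E) →ₗ[ℂ] ℂ := q.comp ((ρ x : E →ₗ[ℂ] E).comp (evalCLM ζ))
  have hf₀ : ∀ i j, f₀ (ρ (b i * a j)) = C i j := by
    intro i j
    show q (ρ x (ρ (b i * a j) ζ)) = _
    rw [hC, map_smul, hq]; simp
  have hfd : FiniteDimensional ℂ (Submodule.span ℂ ({(1 : E →L[ℂ] E)} ∪
          Set.range fun p : Fin n × Fin n => ρ (b p.1 * a p.2))) :=
    FiniteDimensional.span_of_finite ℂ ((Set.finite_singleton _).union (Set.finite_range _))
  obtain ⟨ζ₀, hinj⟩ := aux_sep hV'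
  have key := aux_key a b S hSrep hS ρ hρcont hρirr ζ₀ hinj
  let y : Fin n → (E →L[ℂ] E) := fun i => ∑ j, t j • ρ (b i * a j)
  let Ψ : ((E →L[ℂ] E) →ₗ[ℂ] ℂ) →ₗ[ℂ] (Fin n → ℂ) :=
    { toFun := fun f i => f (y i)
      map_add' := fun _ _ => rfl
      map_smul' := fun _ _ => rfl }
  let Z : Submodule ℂ ((E →L[ℂ] E) →ₗ[ℂ] ℂ) :=
    { carrier := {f | f 1 = 0}
      add_mem' := fun {f g} (hf : f 1 = 0) (hg : g 1 = 0) => by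
        show f 1 + g 1 = 0
        rw [hf, hg, add_zero]
      zero_mem' := by simp
      smul_mem' := fun c f (hf : f 1 = 0) => by
        show c • f 1 = 0
        rw [hf, smul_zero] }
  have htn : t ∉ Z.map Ψ := by
    rintro ⟨f, hf, hft⟩
    exact ht0 (key f hf t fun i => congrFun hft i)
  obtain ⟨σ, hσ, hσ'⟩ := Submodule.exists_le_ker_of_notMem htn
  let s : Fin n → ℂ := fun i => (σ t)⁻¹ * σ (Pi.single i 1)
  have hσs : ∀ z : Fin n → ℂ, ∑ i, s i * z i = (σ t)⁻¹ * σ z := by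
    intro z
    rw [LinearMap.pi_apply_eq_sum_univ σ z, Finset.mul_sum]
    refine Finset.sum_congr rfl fun i _ => ?_
    have : (Pi.single i 1 : Fin n → ℂ) = fun j => if i = j then 1 else 0 := by
      ext j; simp [Pi.single_apply, eq_comm]
    simp only [s, this, smul_eq_mul]; ring
  have hst : ∑ i, s i * t i = 1 := by rw [hσs, inv_mul_cancel₀ hσ]
  have hfy : ∀ f : (E →L[ℂ] E) →ₗ[ℂ] ℂ, f (∑ i, s i • y i) = (σ t)⁻¹ * σ (Ψ f) := by
    intro f
    rw [← hσs, map_sum]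
    refine Finset.sum_congr rfl fun i _ => ?_
    rw [map_smul]; rfl
  obtain ⟨μ, hμ⟩ : ∃ μ : ℂ, μ • (1 : E →L[ℂ] E) = ∑ i, s i • y i := by
    rw [← Submodule.mem_span_singleton]
    by_contra hno
    obtain ⟨f, hf, hf'⟩ := Submodule.exists_le_ker_of_notMem hno
    apply hf
    have h1 : f 1 = 0 := hf' (Submodule.mem_span_singleton_self _)
    rw [hfy]
    have : σ (Ψ f) = 0 := hσ' ⟨f, h1, rfl⟩
    rw [this, mul_zero]
  have hΨ₀ : Ψ f₀ = l • t := by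
    rw [← ht]
    ext i
    show f₀ (∑ j, t j • ρ (b i * a j)) = _
    rw [map_sum]
    simp only [map_smul, hf₀, Matrix.mulVec, dotProduct, Matrix.of_apply, smul_eq_mul]
    exact Finset.sum_congr rfl fun j _ => mul_comm _ _
  have hμ0 : μ ≠ 0 := by
    rintro rfl
    have := hfy f₀
    rw [← hμ, hΨ₀] at this
    simp [hσ, hl] at this
  obtain ⟨c, d, hcd⟩ := aux_split a b s t hst
  refine ⟨∑ j, t j • a j, ∑ i, s i • b i, c, d, μ, ?_, ?_, hμ0, ?_⟩
  · intro z; rw [hSrep, hcd]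
  · rintro m ⟨c', d', h⟩
    have := hSlen (m + 1) ⟨Fin.cons (∑ j, t j • a j) c', Fin.cons (∑ i, s i • b i) d', fun z => by
      rw [Fin.sum_univ_succ]
      simp only [Fin.cons_zero, Fin.cons_succ]
      rw [← h z]; abel⟩
    omega
  · rw [hμ]
    simp only [y, Finset.sum_mul, Finset.mul_sum, map_sum, Finset.smul_sum]
    rw [Finset.sum_comm]
    refine Finset.sum_congr rfl fun i _ => Finset.sum_congr rfl fun j _ => ?_
    rw [smul_mul_smul_comm, map_smul, smul_smul]
end

section
/- Let E be a complex Banach space with dim E ≥ 4 and let A be a closed subalgebra of B(E) acting irreducibly on E (i.e. {aζ : a ∈ A} = E for every nonzero ζ ∈ E). Let S : A → B(E) be an elementary operator of length 3. Then S is spectrally bounded if and only if there exist u_1, u_2, u_3, v_1, v_2, v_3 ∈ B(E) with Sx = Σ_{i=1}^3 u_i x v_i for all x ∈ A such that one of the following three cases occurs: (i) v_i u_j = 0 for all i > j and each v_i u_i is a scalar multiple of the identity; (ii) there exist λ ∈ ℂ, ζ₀, ζ₁ ∈ E and f ∈ E* with v_1u_1 = v_2u_2 = v_3u_3 = λI,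 v_1u_2 = ζ₁⊗f, v_1u_3 = 0, v_2u_1 = ζ₀⊗f, v_2u_3 = ζ₁⊗f, v_3u_1 = 0 and v_3u_2 = −ζ₀⊗f; (iii) there exist λ ∈ ℂ, ζ₀ ∈ E and f, g ∈ E* with v_1u_1 = v_2u_2 = v_3u_3 = λI, v_1u_2 = ζ₀⊗g, v_1u_3 = 0, v_2u_1 = ζ₀⊗f, v_2u_3 = ζ₀⊗g, v_3u_1 = 0 and v_3u_2 = −ζ₀⊗f. -/
open scoped ENNReal NNReal

section
open scoped ENNReal NNReal
set_option linter.unusedSectionVars false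
set_option linter.unusedSimpArgs false

section suff
variable {E : Type*} [NormedAddCommGroup E] [NormedSpace ℂ E] [CompleteSpace E]

lemma sr_le_of (T x : E →L[ℂ] E) (M : ℝ≥0)
    (h : ∀ k : ℂ, (M : ℝ≥0∞) * spectralRadius ℂ x < ‖k‖₊ → IsUnit (algebraMap ℂ (E →L[ℂ] E) k - T)) :
    spectralRadius ℂ T ≤ (M : ℝ≥0∞) * spectralRadius ℂ x := by
  refine iSup₂_le fun k hk => ?_
  by_contra hlt
  exact hk (h k (not_le.1 hlt))

lemma unit_of_sr (x : E →L[ℂ] E) (c : ℂ) (M : ℝ≥0) (hc : ‖c‖₊ ≤ M) (k : ℂ)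
    (h : (M : ℝ≥0∞) * spectralRadius ℂ x < ‖k‖₊) :
    k ≠ 0 ∧ IsUnit (algebraMap ℂ (E →L[ℂ] E) k - c • x) := by
  have hk : k ≠ 0 := by rintro rfl; simp at h
  refine ⟨hk, ?_⟩
  by_cases c0 : c = 0
  · subst c0
    simpa using (IsUnit.mk0 k hk).map (algebraMap ℂ (E →L[ℂ] E))
  · have h1 : spectralRadius ℂ x < ‖k / c‖₊ := by
      have h2 : (‖c‖₊ : ℝ≥0∞) * spectralRadius ℂ x < ‖k‖₊ :=
        lt_of_le_of_lt (by gcongr) h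
      rw [nnnorm_div, ENNReal.coe_div (by simpa using c0), ENNReal.lt_div_iff_mul_lt (by simp [c0]) (by simp)]
      rwa [mul_comm]
    have h3 := spectrum.mem_resolventSet_of_spectralRadius_lt h1
    rw [spectrum.mem_resolventSet_iff] at h3
    have h4 : algebraMap ℂ (E →L[ℂ] E) k - c • x = c • (algebraMap ℂ (E →L[ℂ] E) (k / c) - x) := by
      rw [smul_sub, Algebra.algebraMap_eq_smul_one, Algebra.algebraMap_eq_smul_one, smul_smul, mul_div_cancel₀ _ c0]
    rw [h4]
    exact (IsUnit.smul (Units.mk0 c c0) h3 : _)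

lemma suff_one (u v : Fin 3 → (E →L[ℂ] E)) (h0 : ∀ i j : Fin 3, j < i → v i * u j = 0)
    (c : Fin 3 → ℂ) (hc : ∀ i : Fin 3, v i * u i = c i • (1 : E →L[ℂ] E)) (x : E →L[ℂ] E) :
    spectralRadius ℂ (∑ i, u i * x * v i) ≤ ((∑ i, ‖c i‖₊ : ℝ≥0) : ℝ≥0∞) * spectralRadius ℂ x := by
  apply sr_le_of
  intro k hk
  have hu : ∀ i, IsUnit (algebraMap ℂ (E →L[ℂ] E) k - u i * x * v i) := by
    intro i
    obtain ⟨hk0, h1⟩ := unit_of_sr x (c i) _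
      (Finset.single_le_sum (f := fun i => ‖c i‖₊) (fun _ _ => zero_le) (Finset.mem_univ i)) k hk
    have h2 : (x * v i) * u i = c i • x := by rw [mul_assoc, hc]; simp
    rw [← h2] at h1
    by_contra hn
    have h3 : k ∈ spectrum ℂ (u i * (x * v i)) \ {0} := ⟨by rw [← mul_assoc]; exact hn, hk0⟩
    rw [spectrum.nonzero_mul_comm] at h3
    exact h3.1 h1
  have hk0 : k ≠ 0 := by rintro rfl; simp at hk
  have key : algebraMap ℂ (E →L[ℂ] E) k - ∑ i, u i * x * v i = 
      (k⁻¹ * k⁻¹) • ((algebraMap ℂ (E →L[ℂ] E) k - u 2 * x * v 2) * (algebraMap ℂ (E →L[ℂ] E) k - u 1 * x * v 1)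
       * (algebraMap ℂ (E →L[ℂ] E) k - u 0 * x * v 0)) := by
    have e : ∀ i j : Fin 3, j < i → (u i * x * v i) * (u j * x * v j) = 0 := by
      intro i j hij
      have : (u i * x * v i) * (u j * x * v j) = u i * x * (v i * u j) * (x * v j) := by simp only [mul_assoc]
      rw [this, h0 i j hij]; simp
    have e1 := e 2 1 (by decide)
    have e2 := e 2 0 (by decide)
    have e3 := e 1 0 (by decide)
    rw [Fin.sum_univ_three]
    generalize u 2 * x * v 2 = p2 at *
    generalize u 1 * x * v 1 = p1 at *
    generalize u 0 * x * v 0 = p0 at *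
    simp only [Algebra.algebraMap_eq_smul_one]
    have e1' : (k • (1 : E →L[ℂ] E) - p2) * (k • 1 - p1) = k • (k • 1 - p1 - p2) := by
      simp [sub_mul, mul_sub, e1, smul_sub]; abel
    rw [e1', smul_mul_assoc, smul_smul]
    have e2' : (k • (1 : E →L[ℂ] E) - p1 - p2) * (k • 1 - p0) = k • (k • 1 - p1 - p2 - p0) := by
      simp [sub_mul, mul_sub, e2, e3, smul_sub]
    rw [e2', smul_smul]
    have : k⁻¹ * k⁻¹ * k * k = 1 := by field_simp
    rw [this, one_smul]; abel
  rw [key]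
  have hki : k⁻¹ * k⁻¹ ≠ 0 := by simp [hk0]
  exact (IsUnit.smul (Units.mk0 _ hki) (((hu 2).mul (hu 1)).mul (hu 0)) : _)

lemma unit_swap {R : Type*} [Ring R] (u v : Fin 3 → R)
    (h : IsUnit (1 - Matrix.of fun i j => v i * u j : Matrix (Fin 3) (Fin 3) R)) :
    IsUnit (1 - ∑ i, u i * v i) := by
  let U : Matrix (Fin 1) (Fin 3) R := Matrix.of fun _ j => u j
  let V : Matrix (Fin 3) (Fin 1) R := Matrix.of fun i _ => v i
  have hVU : (Matrix.of fun i j => v i * u j : Matrix (Fin 3) (Fin 3) R) = V * U := by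
    ext i j; simp [U, V, Matrix.mul_apply]
  have hUV : (1 - ∑ i, u i * v i) = (1 - U * V : Matrix (Fin 1) (Fin 1) R) 0 0 := by
    simp [U, V, Matrix.mul_apply]
  rw [hVU] at h
  obtain ⟨w, hw⟩ := h
  have a1 : (1 - V * U) * (w⁻¹ : _ˣ).val = 1 := by rw [← hw]; simp
  have a2 : (w⁻¹ : _ˣ).val * (1 - V * U) = 1 := by rw [← hw]; simp
  generalize (w⁻¹ : _ˣ).val = r at a1 a2
  have a1' : V * (U * r) = r - 1 := by
    rw [sub_mul, one_mul, Matrix.mul_assoc] at a1; rw [← a1]; abel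
  have a2' : r * (V * U) = r - 1 := by
    rw [mul_sub, mul_one] at a2; rw [← a2]; abel
  have b1 : (1 - U * V) * (1 + U * (r * V)) = 1 := by
    have : U * V * (U * (r * V)) = U * ((V * (U * r)) * V) := by simp only [Matrix.mul_assoc]
    rw [sub_mul, one_mul, mul_add, mul_one, this, a1', Matrix.sub_mul, Matrix.mul_sub, Matrix.one_mul]
    abel
  have b2 : (1 + U * (r * V)) * (1 - U * V) = 1 := by
    have : (U * (r * V)) * (U * V) = U * ((r * (V * U)) * V) := by simp only [Matrix.mul_assoc]
    rw [mul_sub, mul_one, add_mul, one_mul, this, a2', Matrix.sub_mul, Matrix.mul_sub, Matrix.one_mul]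
    abel
  rw [hUV]
  refine ⟨⟨_, (1 + U * (r * V) : Matrix (Fin 1) (Fin 1) R) 0 0, ?_, ?_⟩, rfl⟩
  · have := congrFun (congrFun b1 0) 0
    rw [Matrix.mul_apply] at this
    simpa using this
  · have := congrFun (congrFun b2 0) 0
    rw [Matrix.mul_apply] at this
    simpa using this

lemma nil4_a {R : Type*} [Ring R] [Algebra ℂ R] (p q : R) (α β : ℂ)
    (h1 : p * p = α • p) (h2 : p * q = β • p) (h3 : q * p = α • q) (h4 : q * q = β • q) :
    (!![0, q, 0; p, 0, q; 0, -p, 0] : Matrix (Fin 3) (Fin 3) R) ^ 4 = 0 := by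
  have e : (!![0, q, 0; p, 0, q; 0, -p, 0] : Matrix (Fin 3) (Fin 3) R) ^ 2 = !![α • q, 0, β • q; 0, β • p - α • q, 0; -(α • p), 0, -(β • p)] := by
    rw [pow_two]; ext i j; fin_cases i <;> fin_cases j <;> simp [Matrix.mul_apply, Fin.sum_univ_three, h1, h2, h3, h4]
    abel
  rw [show 4 = 2 * 2 by norm_num, pow_mul, e, pow_two]
  ext i j; fin_cases i <;> fin_cases j <;> simp [Matrix.mul_apply, Fin.sum_univ_three, h1, h2, h3, h4, mul_sub, sub_mul, smul_smul] <;> module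

lemma nil4_b {R : Type*} [Ring R] [Algebra ℂ R] (p q : R) (α β : ℂ)
    (h1 : p * p = α • p) (h2 : p * q = α • q) (h3 : q * p = β • p) (h4 : q * q = β • q) :
    (!![0, q, 0; p, 0, q; 0, -p, 0] : Matrix (Fin 3) (Fin 3) R) ^ 4 = 0 := by
  have e : (!![0, q, 0; p, 0, q; 0, -p, 0] : Matrix (Fin 3) (Fin 3) R) ^ 2 = !![β • p, 0, β • q; 0, α • q - β • p, 0; -(α • p), 0, -(α • q)] := by
    rw [pow_two]; ext i j; fin_cases i <;> fin_cases j <;> simp [Matrix.mul_apply, Fin.sum_univ_three, h1, h2, h3, h4]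
    abel
  rw [show 4 = 2 * 2 by norm_num, pow_mul, e, pow_two]
  ext i j; fin_cases i <;> fin_cases j <;> simp [Matrix.mul_apply, Fin.sum_univ_three, h1, h2, h3, h4, mul_sub, sub_mul, smul_smul] <;> module

lemma suff_two (u v : Fin 3 → (E →L[ℂ] E)) (lam : ℂ) (P Q : E →L[ℂ] E)
    (h00 : v 0 * u 0 = lam • (1 : E →L[ℂ] E)) 
    (h11 : v 1 * u 1 = lam • (1 : E →L[ℂ] E))
    (h22 : v 2 * u 2 = lam • (1 : E →L[ℂ] E))
    (h01 : v 0 * u 1 = Q) (h02 : v 0 * u 2 = 0) (h10 : v 1 * u 0 = P)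
    (h12 : v 1 * u 2 = Q) (h20 : v 2 * u 0 = 0) (h21 : v 2 * u 1 = -P) 
    (hn : ∀ x y : E →L[ℂ] E, (!![0, y * Q * x, 0; y * P * x, 0, y * Q * x; 0, -(y * P * x), 0] : Matrix (Fin 3) (Fin 3) (E →L[ℂ] E)) ^ 4 = 0) (x : E →L[ℂ] E) :
    spectralRadius ℂ (∑ i, u i * x * v i) ≤ ((‖lam‖₊ : ℝ≥0) : ℝ≥0∞) * spectralRadius ℂ x := by
  apply sr_le_of
  intro k hk
  obtain ⟨hk0, h1⟩ := unit_of_sr x lam _ le_rfl k hk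
  obtain ⟨y, hy⟩ := h1
  have key := unit_swap (fun i => k⁻¹ • (u i * x)) v ?_
  · have : algebraMap ℂ (E →L[ℂ] E) k - ∑ i, u i * x * v i = k • (1 - ∑ i, k⁻¹ • (u i * x) * v i) := by
      rw [smul_sub, Algebra.algebraMap_eq_smul_one, Finset.smul_sum]
      congr 1
      refine Finset.sum_congr rfl fun i _ => ?_
      rw [smul_mul_assoc, smul_smul, mul_inv_cancel₀ hk0, one_smul]
    rw [this]
    exact (IsUnit.smul (Units.mk0 k hk0) key : _)
  · have hN := hn x (y⁻¹ : _ˣ).val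
    have hU := (IsNilpotent.isUnit_one_sub ⟨4, hN⟩)
    have hD : IsUnit (Matrix.diagonal fun _ => k⁻¹ • y.val : Matrix (Fin 3) (Fin 3) (E →L[ℂ] E)) := by
      have : IsUnit (k⁻¹ • y.val) := (IsUnit.smul (Units.mk0 k⁻¹ (inv_ne_zero hk0)) y.isUnit : _)
      exact this.map (Matrix.scalar (Fin 3) (α := E →L[ℂ] E))
    have := hD.mul hU
    convert this using 1
    have c1 : k⁻¹ • y.val = 1 - k⁻¹ • lam • x := by
      rw [hy, smul_sub, Algebra.algebraMap_eq_smul_one, smul_smul, inv_mul_cancel₀ hk0, one_smul]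
    have c2 : ∀ T, (k⁻¹ • y.val) * ((y⁻¹ : _ˣ).val * T * x) = k⁻¹ • (T * x) := by
      intro T
      rw [smul_mul_assoc, ← mul_assoc, ← mul_assoc, Units.mul_inv, one_mul]
    have c3 : ∀ (T : E →L[ℂ] E) z, (y⁻¹ : _ˣ).val (T (x z)) - k⁻¹ • lam • x ((y⁻¹ : _ˣ).val (T (x z))) = k⁻¹ • T (x z) := by
      intro T z
      have := congrArg (fun g : E →L[ℂ] E => g z) (c2 T)
      rw [c1] at this
      simpa using this
    ext i j : 2
    fin_cases i <;> fin_cases j <;> simp only [Matrix.diagonal_mul, Matrix.sub_apply, mul_sub, ← mul_assoc, mul_smul_comm] <;> simp [h00, h11, h22, h01, h02, h10, h12, h20, h21, c1] <;> rename_i z <;>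
      first | (rw [← c3 Q z]; abel) | (rw [← c3 P z]; abel) | (rw [← c3 P z])

lemma suff_two_ii (u v : Fin 3 → (E →L[ℂ] E)) (lam : ℂ) (ζ₀ ζ₁ : E) (f : E →L[ℂ] ℂ)
    (h00 : v 0 * u 0 = lam • (1 : E →L[ℂ] E)) 
    (h11 : v 1 * u 1 = lam • (1 : E →L[ℂ] E))
    (h22 : v 2 * u 2 = lam • (1 : E →L[ℂ] E))
    (h01 : v 0 * u 1 = f.smulRight ζ₁) (h02 : v 0 * u 2 = 0) (h10 : v 1 * u 0 = f.smulRight ζ₀)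
    (h12 : v 1 * u 2 = f.smulRight ζ₁) (h20 : v 2 * u 0 = 0) (h21 : v 2 * u 1 = -f.smulRight ζ₀) (x : E →L[ℂ] E) :
    spectralRadius ℂ (∑ i, u i * x * v i) ≤ ((‖lam‖₊ : ℝ≥0) : ℝ≥0∞) * spectralRadius ℂ x := by
  refine suff_two u v lam _ _ h00 h11 h22 h01 h02 h10 h12 h20 h21 (fun x y => ?_) x
  apply nil4_a _ _ (f (x (y ζ₀))) (f (x (y ζ₁))) <;> ext z <;> simp [smul_smul, mul_comm]

lemma suff_two_iii (u v : Fin 3 → (E →L[ℂ] E)) (lam : ℂ) (ζ₀ : E) (f g : E →L[ℂ] ℂ)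
    (h00 : v 0 * u 0 = lam • (1 : E →L[ℂ] E)) 
    (h11 : v 1 * u 1 = lam • (1 : E →L[ℂ] E))
    (h22 : v 2 * u 2 = lam • (1 : E →L[ℂ] E))
    (h01 : v 0 * u 1 = g.smulRight ζ₀) (h02 : v 0 * u 2 = 0) (h10 : v 1 * u 0 = f.smulRight ζ₀)
    (h12 : v 1 * u 2 = g.smulRight ζ₀) (h20 : v 2 * u 0 = 0) (h21 : v 2 * u 1 = -f.smulRight ζ₀) (x : E →L[ℂ] E) :
    spectralRadius ℂ (∑ i, u i * x * v i) ≤ ((‖lam‖₊ : ℝ≥0) : ℝ≥0∞) * spectralRadius ℂ x := by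
  refine suff_two u v lam _ _ h00 h11 h22 h01 h02 h10 h12 h20 h21 (fun x y => ?_) x
  apply nil4_b _ _ (f (x (y ζ₀))) (g (x (y ζ₀))) <;> ext z <;> simp [smul_smul, mul_comm]

end suff
end

section
open scoped ENNReal NNReal
set_option linter.unusedSectionVars false
set_option linter.unusedSimpArgs false

section dens
variable {E : Type*} [NormedAddCommGroup E] [NormedSpace ℂ E] [CompleteSpace E]

lemma density_aux [Nontrivial E] (A : Subalgebra ℂ (E →L[ℂ] E)) (hA : IsClosed (A : Set (E →L[ℂ] E)))
    (hirr : ∀ ζ : E, ζ ≠ 0 → ∀ η : E, ∃ a ∈ A, a ζ = η) [hs : IsSimpleModule A E] (T : E →ₗ[A] E) : ∃ c : ℂ, ∀ z, T z = c • z := by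
  obtain ⟨ζ, hζ⟩ := exists_ne (0 : E)
  have : CompleteSpace A := hA.completeSpace_coe
  have : CompleteSpace A.toSubmodule := hA.completeSpace_coe
  let π : A.toSubmodule →L[ℂ] E := (ContinuousLinearMap.apply ℂ E ζ).comp A.toSubmodule.subtypeL
  have hπ : Function.Surjective π := by
    intro η
    obtain ⟨a, ha, h⟩ := hirr ζ hζ η
    exact ⟨⟨a, ha⟩, h⟩
  obtain ⟨C, C0, hC⟩ := ContinuousLinearMap.exists_preimage_norm_le (E := A.toSubmodule) (F := E) (σ := RingHom.id ℂ) (σ' := RingHom.id ℂ) π hπ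
  have hsm : ∀ (c : ℂ) (z : E), T (c • z) = c • T z := by
    intro c z
    exact T.map_smul (algebraMap ℂ A c) z
  have hTa : ∀ (a : A) (z : E), T ((a : E →L[ℂ] E) z) = (a : E →L[ℂ] E) (T z) := by
    intro a z
    exact T.map_smul a z
  let Tl : E →ₗ[ℂ] E := { toFun := T, map_add' := T.map_add, map_smul' := hsm }
  let Tc : E →L[ℂ] E := Tl.mkContinuous (C * ‖T ζ‖) (by
    intro η
    obtain ⟨a, ha, hn⟩ := hC η
    have h1 : T η = (a : E →L[ℂ] E) (T ζ) := by
      rw [← ha]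
      exact hTa ⟨a.1, a.2⟩ ζ
    change ‖T η‖ ≤ _
    rw [h1]
    calc ‖(a : E →L[ℂ] E) (T ζ)‖ ≤ ‖(a : E →L[ℂ] E)‖ * ‖T ζ‖ := ContinuousLinearMap.le_opNorm _ _
      _ ≤ (C * ‖η‖) * ‖T ζ‖ := by gcongr; exact hn
      _ = _ := by ring)
  obtain ⟨c, hc⟩ := spectrum.nonempty (A := E →L[ℂ] E) Tc
  refine ⟨c, ?_⟩
  let D : E →ₗ[A] E := { toFun := fun z => c • z - T z, map_add' := by intro x y; simp; abel, map_smul' := by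
                          intro a z
                          have := hTa a z
                          change c • (a : E →L[ℂ] E) z - T ((a : E →L[ℂ] E) z) = (a : E →L[ℂ] E) (c • z - T z)
                          rw [this]; simp }
  rcases LinearMap.bijective_or_eq_zero D with h | h
  · exfalso
    apply hc
    rw [spectrum.mem_resolventSet_iff, ContinuousLinearMap.isUnit_iff_bijective]
    convert h using 1
    ext z
    simp [D, Algebra.algebraMap_eq_smul_one]
    rfl
  · intro z
    have : D z = 0 := by rw [h]; rfl
    change c • z - T z = 0 at this
    exact (sub_eq_zero.1 this).symm

lemma density (A : Subalgebra ℂ (E →L[ℂ] E)) (hA : IsClosed (A : Set (E →L[ℂ] E)))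
    (hirr : ∀ ζ : E, ζ ≠ 0 → ∀ η : E, ∃ a ∈ A, a ζ = η) (s : Set E) (hs : s.Finite) (L : E →ₗ[ℂ] E) :
    ∃ x : A, ∀ m ∈ s, (x : E →L[ℂ] E) m = L m := by
  rcases subsingleton_or_nontrivial E with hE | hE
  · exact ⟨0, fun m _ => Subsingleton.elim _ _⟩
  have hsimp : IsSimpleModule A E := by
    rw [isSimpleModule_iff_toSpanSingleton_surjective]
    refine ⟨hE, fun ζ hζ η => ?_⟩
    obtain ⟨a, ha, h⟩ := hirr ζ hζ η
    exact ⟨⟨a, ha⟩, h⟩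
  have hL : ∀ (T : Module.End A E) (z : E), L (T • z) = T • L z := by
    intro T z
    obtain ⟨c, hc⟩ := density_aux A hA hirr T
    change L (T z) = T (L z)
    rw [hc, hc, L.map_smul]
  let f : Module.End (Module.End A E) E := { toFun := L, map_add' := L.map_add, map_smul' := hL }
  obtain ⟨r, hr⟩ := jacobson_density f hs.toFinset
  exact ⟨r, fun m hm => (hr m (by simpa using hm)).symm⟩
end dens
end

section
open scoped ENNReal NNReal
set_option linter.unusedSectionVars false
set_option linter.unusedSimpArgs false

section kk
variable {E : Type*} [NormedAddCommGroup E] [NormedSpace ℂ E] [CompleteSpace E]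

lemma exp_apply_eig (y : E →L[ℂ] E) (w : E) (c : ℂ) (h : y w = c • w) :
    NormedSpace.exp y w = Complex.exp c • w := by
  have hp : ∀ n : ℕ, (y ^ n) w = c ^ n • w := by
    intro n
    induction n with
    | zero => simp
    | succ n ih => 
      rw [pow_succ', mul_apply_eq_comp, ih, map_smul, h, smul_smul, pow_succ]
  have h1 := (NormedSpace.exp_series_hasSum_exp' (𝕂 := ℂ) y).mapL (ContinuousLinearMap.apply ℂ E w)
  have h2 := (NormedSpace.exp_series_hasSum_exp' (𝕂 := ℂ) c).smul_const w
  rw [← Complex.exp_eq_exp_ℂ] at h2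
  refine h1.unique ?_
  convert h2 using 2 with n
  simp [hp, smul_smul]

lemma conj_family (A : Subalgebra ℂ (E →L[ℂ] E)) (hA : IsClosed (A : Set (E →L[ℂ] E)))
    (hirr : ∀ ζ : E, ζ ≠ 0 → ∀ η : E, ∃ a ∈ A, a ζ = η) (S : Set E) (hS : S.Finite) (L : E →ₗ[ℂ] E)
    (ρ : E) (h : E →ₗ[ℂ] ℂ) (hρ : h ρ = 1) :
    ∃ x0 : A, ∀ s : ℂ, s ≠ 0 → ∃ x : A, spectralRadius ℂ (x : E →L[ℂ] E) = spectralRadius ℂ (x0 : E →L[ℂ] E) ∧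
      ∀ w ∈ S, (x : E →L[ℂ] E) w = L (w + ((s⁻¹ - 1) * h w) • ρ) + ((s - 1) * h (L (w + ((s⁻¹ - 1) * h w) • ρ))) • ρ := by
  obtain ⟨x, hx⟩ := density A hA hirr (insert ρ S) (hS.insert ρ) L
  obtain ⟨y, hy⟩ := density A hA hirr (insert ρ (S ∪ L '' (insert ρ S))) 
    ((hS.union ((hS.insert ρ).image L)).insert ρ) (LinearMap.smulRight h ρ)
  have hyρ : (y : E →L[ℂ] E) ρ = ρ := by simpa [hρ] using hy ρ (by simp)
  have hexp : ∀ (t s : ℂ), Complex.exp t = s → ∀ w, (y : E →L[ℂ] E) w = h w • ρ → 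
      NormedSpace.exp (t • (y : E →L[ℂ] E)) w = w + ((s - 1) * h w) • ρ := by
    intro t s ht w hw
    have e1 := exp_apply_eig (t • (y : E →L[ℂ] E)) ρ t (by simp [hyρ])
    have e2 := exp_apply_eig (t • (y : E →L[ℂ] E)) (w - h w • ρ) 0 (by simp [hyρ, hw])
    have : w = (w - h w • ρ) + h w • ρ := by abel
    conv_lhs => rw [this]
    rw [map_add, e2, map_smul, e1, ht]
    simp only [Complex.exp_zero]
    module
  refine ⟨x, fun s hs => ?_⟩
  let _ : NormedAlgebra ℚ (E →L[ℂ] E) := NormedAlgebra.restrictScalars ℚ ℂ _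
  have : IsScalarTower ℚ ℂ (E →L[ℂ] E) := IsScalarTower.of_algebraMap_smul fun q a => rfl
  have ht := Complex.exp_log hs
  have ht' : Complex.exp (- Complex.log s) = s⁻¹ := by rw [Complex.exp_neg, ht]
  set t := Complex.log s
  have hm1 : NormedSpace.exp (t • (y : E →L[ℂ] E)) ∈ A := NormedSpace.exp_mem (R := ℂ) hA (A.smul_mem y.2 t)
  have hm2 : NormedSpace.exp ((-t) • (y : E →L[ℂ] E)) ∈ A := NormedSpace.exp_mem (R := ℂ) hA (A.smul_mem y.2 _)
  have i1 : NormedSpace.exp (t • (y : E →L[ℂ] E)) * NormedSpace.exp ((-t) • (y : E →L[ℂ] E)) = 1 := by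
    rw [← NormedSpace.exp_add_of_commute]
    · simp
    · simp
  have i2 : NormedSpace.exp ((-t) • (y : E →L[ℂ] E)) * NormedSpace.exp (t • (y : E →L[ℂ] E)) = 1 := by
    rw [← NormedSpace.exp_add_of_commute]
    · simp
    · simp
  let U : (E →L[ℂ] E)ˣ := ⟨_, _, i1, i2⟩
  refine ⟨⟨_, A.mul_mem (A.mul_mem hm1 x.2) hm2⟩, ?_, ?_⟩
  · have := spectrum.units_conjugate (R := ℂ) (a := (x : E →L[ℂ] E)) (u := U)
    change spectrum ℂ (NormedSpace.exp (t • (y : E →L[ℂ] E)) * x * NormedSpace.exp ((-t) • (y : E →L[ℂ] E))) = _ at this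
    simp only [spectralRadius, this]
  · intro w hw
    change NormedSpace.exp (t • (y : E →L[ℂ] E)) ((x : E →L[ℂ] E) (NormedSpace.exp ((-t) • (y : E →L[ℂ] E)) w)) = _
    rw [hexp (-t) _ ht' w (by simpa using hy w (by simp [hw]))]
    have hxw : (x : E →L[ℂ] E) (w + ((s⁻¹ - 1) * h w) • ρ) = L (w + ((s⁻¹ - 1) * h w) • ρ) := by
      rw [map_add, map_add, map_smul, map_smul, hx w (by simp [hw]), hx ρ (by simp)]
    rw [hxw, hexp t s ht]
    have q1 : (y : E →L[ℂ] E) (L w) = h (L w) • ρ := by simpa using hy (L w) (by right; right; exact ⟨w, by simp [hw], rfl⟩)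
    have q2 : (y : E →L[ℂ] E) (L ρ) = h (L ρ) • ρ := by simpa using hy (L ρ) (by right; right; exact ⟨ρ, by simp, rfl⟩)
    simp only [map_add, map_smul, q1, q2, smul_eq_mul]
    module

lemma eig_block (u v : Fin 3 → (E →L[ℂ] E)) (x : E →L[ℂ] E) (θ₁ θ₂ : E) (f₁ f₂ : E →ₗ[ℂ] ℂ)
    (h1 : ∀ i j, x (v i (u j θ₁)) = f₁ (v i (u j θ₁)) • θ₁ + f₂ (v i (u j θ₁)) • θ₂)
    (h2 : ∀ i j, x (v i (u j θ₂)) = f₁ (v i (u j θ₂)) • θ₁ + f₂ (v i (u j θ₂)) • θ₂)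
    (μ : ℂ) (hμ : μ ∈ spectrum ℂ (Matrix.fromBlocks (Matrix.of fun i j => f₁ (v i (u j θ₁)))
      (Matrix.of fun i j => f₁ (v i (u j θ₂))) (Matrix.of fun i j => f₂ (v i (u j θ₁)))
      (Matrix.of fun i j => f₂ (v i (u j θ₂))))) (hμ0 : μ ≠ 0) :
    μ ∈ spectrum ℂ (∑ i, u i * x * v i) := by
  rw [← Matrix.spectrum_toLin', ← Module.End.hasEigenvalue_iff_mem_spectrum] at hμ
  obtain ⟨c, hc⟩ := hμ.exists_hasEigenvector
  have hce := hc.apply_eq_smul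
  have hc0 := hc.2
  rw [Matrix.toLin'_apply] at hce
  set c1 : Fin 3 → ℂ := fun i => c (Sum.inl i)
  set c2 : Fin 3 → ℂ := fun i => c (Sum.inr i)
  have E1 : ∀ i, ∑ j, (c1 j * f₁ (v i (u j θ₁)) + c2 j * f₁ (v i (u j θ₂))) = μ * c1 i := by
    intro i
    have := congrFun hce (Sum.inl i)
    simp [Matrix.mulVec, dotProduct] at this
    rw [← this, Finset.sum_add_distrib]
    simp [c1, c2, mul_comm]
  have E2 : ∀ i, ∑ j, (c1 j * f₂ (v i (u j θ₁)) + c2 j * f₂ (v i (u j θ₂))) = μ * c2 i := by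
    intro i
    have := congrFun hce (Sum.inr i)
    simp [Matrix.mulVec, dotProduct] at this
    rw [← this, Finset.sum_add_distrib]
    simp [c1, c2, mul_comm]
  let w : E := ∑ j, u j (c1 j • θ₁ + c2 j • θ₂)
  have hv : ∀ i, v i w = ∑ j, (c1 j • v i (u j θ₁) + c2 j • v i (u j θ₂)) := by
    intro i; simp [w, map_sum]
  have hf1 : ∀ i, f₁ (v i w) = μ * c1 i := by
    intro i; rw [hv, ← E1]; simp [map_sum]
  have hf2 : ∀ i, f₂ (v i w) = μ * c2 i := by
    intro i; rw [hv, ← E2]; simp [map_sum]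
  have hxv : ∀ i, x (v i w) = μ • (c1 i • θ₁ + c2 i • θ₂) := by
    intro i
    have : x (v i w) = f₁ (v i w) • θ₁ + f₂ (v i w) • θ₂ := by
      rw [hv]
      simp only [map_sum, map_add, map_smul, h1, h2, Finset.sum_smul, ← Finset.sum_add_distrib]
      refine Finset.sum_congr rfl fun j _ => ?_
      simp only [smul_eq_mul]; module
    rw [this, hf1, hf2]; module
  have hT : (∑ i, u i * x * v i) w = μ • w := by
    simp only [sum_apply, mul_apply_eq_comp, hxv]
    simp [w, Finset.smul_sum]
  have hw : w ≠ 0 := by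
    intro h0
    apply hc0
    ext i
    rcases i with i | i
    · have := hf1 i; rw [h0] at this; simpa [hμ0, c1] using this.symm
    · have := hf2 i; rw [h0] at this; simpa [hμ0, c2] using this.symm
  intro hu
  rw [spectrum.mem_resolventSet_iff] at hu
  obtain ⟨g, hg⟩ := hu
  apply hw
  have : g.val w = 0 := by rw [hg]; simp [hT, Algebra.algebraMap_eq_smul_one]
  have h3 : (g⁻¹.val * g.val) w = 0 := by simp only [mul_apply_eq_comp, this, map_zero]
  rwa [Units.inv_mul, one_apply_eq_self] at h3

lemma tr_bound {n : Type*} [Fintype n] [DecidableEq n] (M : Matrix n n ℂ) (R : ℝ)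
    (h : ∀ μ ∈ spectrum ℂ M, ‖μ‖ ≤ R) (k : ℕ) (hk : 0 < k) :
    ‖(M ^ k).trace‖ ≤ Fintype.card n * R ^ k := by
  rw [Matrix.trace_eq_sum_roots_charpoly]
  have h1 : ∀ r ∈ (M ^ k).charpoly.roots, ‖r‖ ≤ R ^ k := by
    intro r hr
    have : r ∈ spectrum ℂ (M ^ k) := Matrix.mem_spectrum_of_isRoot_charpoly (Polynomial.isRoot_of_mem_roots hr)
    rw [spectrum.map_pow_of_pos _ hk] at this
    obtain ⟨μ, hμ, rfl⟩ := this
    simp only [norm_pow]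
    gcongr
    exact h μ hμ
  refine (norm_multiset_sum_le _).trans ((Multiset.sum_le_card_nsmul _ (R ^ k) ?_).trans ?_)
  · intro r hr
    obtain ⟨a, ha, rfl⟩ := Multiset.mem_map.1 hr
    exact h1 a ha
  · rw [nsmul_eq_mul, Multiset.card_map, Polynomial.splits_iff_card_roots.1 (IsAlgClosed.splits _), Matrix.charpoly_natDegree_eq_dim] 
end kk
end

section
set_option linter.unusedSectionVars false
set_option linter.unusedSimpArgs false

/-- The trace identities forced by boundedness. -/
def HC (X Y Z W : Matrix (Fin 3) (Fin 3) ℂ) : Prop :=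
  X.trace = 0 ∧ (X * W).trace = 0 ∧ (Z * X * W).trace = 0 ∧ (X * Y * W).trace = 0 ∧
    (X * W * X * W).trace + 2 * (Z * X * Y * W).trace = 0

lemma poly_bdd (c0 c1 c2 c3 c4 : ℂ) (C : ℝ)
    (h : ∀ s : ℂ, s ≠ 0 → ‖c0 + s * c1 + s ^ 2 * c2 + s ^ 3 * c3 + s ^ 4 * c4‖ ≤ C) :
    c1 = 0 ∧ c2 = 0 ∧ c3 = 0 ∧ c4 = 0 := by
  set F : ℂ → ℂ := fun s => c0 + s * c1 + s ^ 2 * c2 + s ^ 3 * c3 + s ^ 4 * c4 with hF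
  have hd : Differentiable ℂ F := by simp only [hF]; fun_prop
  have hb : Bornology.IsBounded (Set.range F) := by
    rw [isBounded_iff_forall_norm_le]
    refine ⟨max C ‖F 0‖, ?_⟩
    rintro _ ⟨s, rfl⟩
    by_cases hs : s = 0
    · subst hs; exact le_max_right _ _
    · exact (h s hs).trans (le_max_left _ _)
  have hc := fun s => hd.apply_eq_apply_of_bounded hb s 0
  have e1 := hc 1
  have e2 := hc (-1)
  have e3 := hc 2
  have e4 := hc (-2)
  simp only [hF] at e1 e2 e3 e4
  refine ⟨?_, ?_, ?_, ?_⟩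
  · linear_combination (2/3) * e1 - (2/3) * e2 - (1/12) * e3 + (1/12) * e4
  · linear_combination (2/3) * e1 + (2/3) * e2 - (1/24) * e3 - (1/24) * e4
  · linear_combination (-1/6) * e1 + (1/6) * e2 + (1/12) * e3 - (1/12) * e4
  · linear_combination (-1/6) * e1 - (1/6) * e2 + (1/24) * e3 + (1/24) * e4

lemma tr_fromBlocks (A B C D : Matrix (Fin 3) (Fin 3) ℂ) :
    (Matrix.fromBlocks A B C D).trace = A.trace + D.trace := by
  simp [Matrix.trace]

open Matrix in
lemma HC_aux (X Y Z W : Matrix (Fin 3) (Fin 3) ℂ) (R : ℝ)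
    (h : ∀ s : ℂ, s ≠ 0 → ∀ k : ℕ, 0 < k → ‖((Matrix.fromBlocks Z (s • X) W (s • Y)) ^ k).trace‖ ≤ 6 * R ^ k) :
    Y.trace = 0 ∧ (X * W).trace = 0 ∧ (Z * X * W).trace = 0 ∧ (X * Y * W).trace = 0 ∧
    (X * W * X * W).trace + 2 * (Z * X * Y * W).trace = 0 := by
  have k1 := poly_bdd Z.trace Y.trace 0 0 0 (6 * R ^ 1) (by
    intro s hs
    refine le_of_eq_of_le (congrArg _ ?_) (h s hs 1 (by norm_num))
    simp [tr_fromBlocks])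
  have sq : ∀ s : ℂ, (Matrix.fromBlocks Z (s • X) W (s • Y)) ^ 2 = 
     fromBlocks (Z * Z + s • (X * W)) (s • (Z * X) + s ^ 2 • (X * Y)) (W * Z + s • (Y * W)) (s • (W * X) + s ^ 2 • (Y * Y)) := by
    intro s
    rw [pow_two, fromBlocks_multiply]
    simp [smul_smul, pow_two]
  have k2 := poly_bdd (Z * Z).trace ((X * W).trace + (W * X).trace) (Y * Y).trace 0 0 (6 * R ^ 2) (by
    intro s hs
    refine le_of_eq_of_le (congrArg _ ?_) (h s hs 2 (by norm_num))
    rw [sq]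
    simp [tr_fromBlocks]; ring)
  have k3 := poly_bdd (Z * Z * Z).trace ((X * W * Z).trace + (Z * X * W).trace + (W * Z * X).trace) ((X * Y * W).trace + (Y * W * X).trace + (W * X * Y).trace) (Y * Y * Y).trace 0 (6 * R ^ 3) (by
    intro s hs
    refine le_of_eq_of_le (congrArg _ ?_) (h s hs 3 (by norm_num))
    rw [show (Matrix.fromBlocks Z (s • X) W (s • Y)) ^ 3 = (Matrix.fromBlocks Z (s • X) W (s • Y)) ^ 2 * (Matrix.fromBlocks Z (s • X) W (s • Y)) from pow_succ _ 2, sq, fromBlocks_multiply]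
    simp [tr_fromBlocks, add_mul, mul_add, smul_smul]; ring)
  have k4 := poly_bdd (Z * Z * Z * Z).trace ((Z * Z * X * W).trace + (X * W * Z * Z).trace + (Z * X * W * Z).trace + (W * Z * Z * X).trace)
    ((X * W * X * W).trace + (Z * X * Y * W).trace + (X * Y * W * Z).trace + (W * Z * X * Y).trace + (Y * W * Z * X).trace + (W * X * W * X).trace) 
    ((X * Y * Y * W).trace + (Y * W * X * Y).trace + (W * X * Y * Y).trace + (Y * Y * W * X).trace) (Y * Y * Y * Y).trace (6 * R ^ 4) (by
    intro s hs
    refine le_of_eq_of_le (congrArg _ ?_) (h s hs 4 (by norm_num))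
    rw [show (Matrix.fromBlocks Z (s • X) W (s • Y)) ^ 4 = (Matrix.fromBlocks Z (s • X) W (s • Y)) ^ 2 * (Matrix.fromBlocks Z (s • X) W (s • Y)) ^ 2 from pow_add _ 2 2, sq, fromBlocks_multiply]
    simp [tr_fromBlocks, add_mul, mul_add, smul_smul, ← Matrix.mul_assoc]; ring)
  refine ⟨k1.1, ?_, ?_, ?_, ?_⟩
  · have := k2.1
    rw [trace_mul_comm W X] at this
    linear_combination this / 2
  · have := k3.1
    rw [trace_mul_cycle X W Z, trace_mul_cycle W Z X, trace_mul_cycle X W Z] at this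
    linear_combination this / 3
  · have := k3.2.1
    rw [trace_mul_cycle Y W X, trace_mul_cycle W X Y, trace_mul_cycle Y W X] at this
    linear_combination this / 3
  · have := k4.2.1
    have r1 : (X * Y * W * Z).trace = (Z * X * Y * W).trace := by
      rw [trace_mul_comm (X * Y * W) Z]; simp only [Matrix.mul_assoc]
    have r2 : (Y * W * Z * X).trace = (X * Y * W * Z).trace := by
      rw [trace_mul_comm (Y * W * Z) X]; simp only [Matrix.mul_assoc]
    have r3 : (W * Z * X * Y).trace = (Y * W * Z * X).trace := by
      rw [trace_mul_comm (W * Z * X) Y]; simp only [Matrix.mul_assoc]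
    have r4 : (W * X * W * X).trace = (X * W * X * W).trace := by
      rw [trace_mul_comm (W * X * W) X]; simp only [Matrix.mul_assoc]
    rw [r3, r2, r1, r4] at this
    linear_combination this / 2
end

section
open scoped ENNReal NNReal
set_option linter.unusedSectionVars false
set_option linter.unusedSimpArgs false

section k3
variable {E : Type*} [NormedAddCommGroup E] [NormedSpace ℂ E] [CompleteSpace E]

/-- the matrix valued bilinear map attached to a representation -/
def NN (u v : Fin 3 → (E →L[ℂ] E)) : Module.Dual ℂ E →ₗ[ℂ] E →ₗ[ℂ] Matrix (Fin 3) (Fin 3) ℂ :=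
  LinearMap.mk₂ ℂ (fun f θ => Matrix.of fun i j => f (v i (u j θ)))
    (by intros; ext; simp) (by intros; ext; simp) (by intros; ext; simp) (by intros; ext; simp)

lemma NN_apply (u v : Fin 3 → (E →L[ℂ] E)) (f : Module.Dual ℂ E) (θ : E) :
    NN u v f θ = Matrix.of fun i j => f (v i (u j θ)) := rfl

lemma exists_dual_sep {V : Type*} [AddCommGroup V] [Module ℂ V] (θ η : V) (h : ∀ c : ℂ, θ ≠ c • η) :
    ∃ g : Module.Dual ℂ V, g η = 0 ∧ g θ = 1 := by
  have : θ ∉ Submodule.span ℂ {η} := by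
    rw [Submodule.mem_span_singleton]
    rintro ⟨c, hc⟩
    exact h c hc.symm
  obtain ⟨f, hf, hf2⟩ := Submodule.exists_dual_map_eq_bot_of_notMem this inferInstance
  have h0 : f η = 0 := by
    have : f η ∈ (Submodule.span ℂ {η}).map f := ⟨η, Submodule.mem_span_singleton_self η, rfl⟩
    rw [hf2] at this
    simpa using this
  exact ⟨(f θ)⁻¹ • f, by simp [h0], by simp [hf]⟩

lemma bound_common (u v : Fin 3 → (E →L[ℂ] E)) (A : Subalgebra ℂ (E →L[ℂ] E)) (M : ℝ≥0)
    (hM : ∀ x : A, spectralRadius ℂ (∑ i, u i * (x : E →L[ℂ] E) * v i) ≤ (M : ℝ≥0∞) * spectralRadius ℂ (x : E →L[ℂ] E))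
    (x0 x : A) (hx0 : spectralRadius ℂ (x : E →L[ℂ] E) = spectralRadius ℂ (x0 : E →L[ℂ] E))
    (θ₁ θ₂ : E) (f₁ f₂ : Module.Dual ℂ E)
    (h1 : ∀ i j, (x : E →L[ℂ] E) (v i (u j θ₁)) = f₁ (v i (u j θ₁)) • θ₁ + f₂ (v i (u j θ₁)) • θ₂)
    (h2 : ∀ i j, (x : E →L[ℂ] E) (v i (u j θ₂)) = f₁ (v i (u j θ₂)) • θ₁ + f₂ (v i (u j θ₂)) • θ₂)
    (k : ℕ) (hk : 0 < k) :
    ‖((Matrix.fromBlocks (NN u v f₁ θ₁) (NN u v f₁ θ₂) (NN u v f₂ θ₁) (NN u v f₂ θ₂)) ^ k).trace‖ ≤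
      6 * ((M : ℝ≥0∞) * spectralRadius ℂ (x0 : E →L[ℂ] E)).toReal ^ k := by
  have hfin : (M : ℝ≥0∞) * spectralRadius ℂ (x0 : E →L[ℂ] E) ≠ ∞ := by
    refine ENNReal.mul_ne_top (by simp) (ne_top_of_le_ne_top (b := (‖(x0 : E →L[ℂ] E)‖₊ : ℝ≥0∞) * (‖(1 : E →L[ℂ] E)‖₊ : ℝ≥0∞)) (by rw [← ENNReal.coe_mul]; exact ENNReal.coe_ne_top) ?_)
    refine iSup₂_le fun k hk => ?_
    have := spectrum.norm_le_norm_mul_of_mem hk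
    exact_mod_cast this
  have := tr_bound (Matrix.fromBlocks (NN u v f₁ θ₁) (NN u v f₁ θ₂) (NN u v f₂ θ₁) (NN u v f₂ θ₂)) ((M : ℝ≥0∞) * spectralRadius ℂ (x0 : E →L[ℂ] E)).toReal
    (fun μ hμ => ?_) k hk
  · simpa using this
  · by_cases h0 : μ = 0
    · subst h0; rw [norm_zero]; exact ENNReal.toReal_nonneg
    have h3 := eig_block u v x θ₁ θ₂ f₁ f₂ h1 h2 μ hμ h0
    have h4 : (‖μ‖₊ : ℝ≥0∞) ≤ (M : ℝ≥0∞) * spectralRadius ℂ (x0 : E →L[ℂ] E) := by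
      rw [← hx0]
      refine le_trans ?_ (hM x)
      exact le_iSup₂ (f := fun (k : ℂ) (_ : k ∈ spectrum ℂ (∑ i, u i * (x : E →L[ℂ] E) * v i)) => (‖k‖₊ : ℝ≥0∞)) μ h3
    have := (ENNReal.toReal_le_toReal (by simp) hfin).2 h4
    simpa using this

lemma HC_cont (X Y Z W X' Y' Z' W' : Matrix (Fin 3) (Fin 3) ℂ)
    (h : ∀ ε : ℂ, ε ≠ 0 → HC (X + ε • X') (Y + ε • Y') (Z + ε • Z') (W + ε • W')) : HC X Y Z W := by
  have key : ∀ F : ℂ → ℂ, Continuous F → (∀ ε, ε ≠ 0 → F ε = 0) → F 0 = 0 := by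
    intro F hF h0
    have : F = fun _ => 0 := Continuous.ext_on (dense_compl_singleton (0 : ℂ)) hF continuous_const
      (fun ε hε => h0 ε hε)
    rw [this]
  have cc : ∀ A B : Matrix (Fin 3) (Fin 3) ℂ, Continuous fun ε : ℂ => A + ε • B := by
    intro A B; fun_prop
  have hX := cc X X'
  have hY := cc Y Y'
  have hZ := cc Z Z'
  have hW := cc W W'
  refine ⟨?_, ?_, ?_, ?_, ?_⟩
  · simpa using key _ hX.matrix_trace (fun ε hε => (h ε hε).1)
  · simpa using key _ (hX.mul hW).matrix_trace (fun ε hε => (h ε hε).2.1)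
  · simpa using key _ ((hZ.mul hX).mul hW).matrix_trace (fun ε hε => (h ε hε).2.2.1)
  · simpa using key _ ((hX.mul hY).mul hW).matrix_trace (fun ε hε => (h ε hε).2.2.2.1)
  · simpa using key _ ((((hX.mul hW).mul hX).mul hW).matrix_trace.add (continuous_const.mul (((hZ.mul hX).mul hY).mul hW).matrix_trace)) (fun ε hε => (h ε hε).2.2.2.2)

lemma H_nd (u v : Fin 3 → (E →L[ℂ] E)) (A : Subalgebra ℂ (E →L[ℂ] E)) (hA : IsClosed (A : Set (E →L[ℂ] E)))
    (hirr : ∀ ζ : E, ζ ≠ 0 → ∀ η : E, ∃ a ∈ A, a ζ = η) (M : ℝ≥0)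
    (hM : ∀ x : A, spectralRadius ℂ (∑ i, u i * (x : E →L[ℂ] E) * v i) ≤ (M : ℝ≥0∞) * spectralRadius ℂ (x : E →L[ℂ] E))
    (f g : Module.Dual ℂ E) (θ η : E) (hf : f θ = 0) (hg : g θ = 0) (hηθ : ∀ c : ℂ, θ ≠ c • η) :
    (NN u v g θ).trace = 0 ∧ (HC (NN u v f θ) (NN u v g θ) (NN u v f η) (NN u v g η) ∨ (NN u v f θ).trace ≠ 0) := by
  obtain ⟨h, hh0, hh1⟩ := exists_dual_sep θ η hηθ
  obtain ⟨x0, hx0⟩ := conj_family A hA hirr (Set.range (fun p : Fin 3 × Fin 3 => v p.1 (u p.2 θ)) ∪ Set.range (fun p : Fin 3 × Fin 3 => v p.1 (u p.2 η)))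
    ((Set.finite_range _).union (Set.finite_range _)) (f.smulRight η + g.smulRight θ) θ h hh1
  have := HC_aux (NN u v f θ) (NN u v g θ) (NN u v f η) (NN u v g η) ((M : ℝ≥0∞) * spectralRadius ℂ (x0 : E →L[ℂ] E)).toReal (by
    intro s hs k hk
    obtain ⟨x, hxr, hx⟩ := hx0 s hs
    have h1 : ∀ i j, (x : E →L[ℂ] E) (v i (u j η)) = f (v i (u j η)) • η + g (v i (u j η)) • s • θ := by
      intro i j
      rw [hx _ (Or.inr ⟨(i, j), rfl⟩)]
      simp [hf, hg, hh0, hh1]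
      module
    have h2 : ∀ i j, (x : E →L[ℂ] E) (v i (u j (s • θ))) = f (v i (u j (s • θ))) • η + g (v i (u j (s • θ))) • s • θ := by
      intro i j
      simp only [map_smul]
      rw [hx _ (Or.inl ⟨(i, j), rfl⟩)]
      simp [hf, hg, hh0, hh1]
      module
    have := bound_common u v A M hM x0 x hxr η (s • θ) f g h1 h2 k hk
    simpa only [map_smul] using this)
  refine ⟨this.1, ?_⟩
  by_cases ht : (NN u v f θ).trace = 0
  · exact Or.inl ⟨ht, this.2⟩
  · exact Or.inr ht

lemma H_prim (u v : Fin 3 → (E →L[ℂ] E)) (A : Subalgebra ℂ (E →L[ℂ] E)) (hA : IsClosed (A : Set (E →L[ℂ] E)))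
    (hirr : ∀ ζ : E, ζ ≠ 0 → ∀ η : E, ∃ a ∈ A, a ζ = η) (M : ℝ≥0)
    (hM : ∀ x : A, spectralRadius ℂ (∑ i, u i * (x : E →L[ℂ] E) * v i) ≤ (M : ℝ≥0∞) * spectralRadius ℂ (x : E →L[ℂ] E))
    (hE : ∀ θ : E, ∃ η : E, ∀ c : ℂ, η ≠ c • θ)
    (f g : Module.Dual ℂ E) (θ η : E) (hf : f θ = 0) (hg : g θ = 0) :
    HC (NN u v f θ) (NN u v g θ) (NN u v f η) (NN u v g η) := by
  by_cases hθ : θ = 0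
  · subst hθ; simp [HC]
  have main : ∀ η, (∀ c : ℂ, θ ≠ c • η) → HC (NN u v f θ) (NN u v g θ) (NN u v f η) (NN u v g η) := by
    intro η hη
    exact (H_nd u v A hA hirr M hM f g θ η hf hg hη).2.resolve_right 
      (not_not.2 (H_nd u v A hA hirr M hM g f θ η hg hf hη).1)
  by_cases hη : ∀ c : ℂ, θ ≠ c • η
  · exact main η hη
  obtain ⟨η0, h0⟩ := hE θ
  apply HC_cont _ _ _ _ 0 0 (NN u v f η0) (NN u v g η0)
  intro ε hε
  have := main (η + ε • η0) (by
    intro c hc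
    by_cases hc0 : c = 0
    · subst hc0; simp at hc; exact hθ hc
    push Not at hη
    obtain ⟨d, hd⟩ := hη
    by_cases hd0 : d = 0
    · subst hd0; simp at hd; exact hθ hd
    have e1 : η = d⁻¹ • θ := by rw [hd, smul_smul, inv_mul_cancel₀ hd0, one_smul]
    apply h0 (ε⁻¹ * (c⁻¹ - d⁻¹))
    have e2 : c⁻¹ • θ = η + ε • η0 := by rw [hc, smul_smul, inv_mul_cancel₀ hc0, one_smul]
    rw [mul_smul, sub_smul, e2, ← e1, add_sub_cancel_left, smul_smul, inv_mul_cancel₀ hε, one_smul])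
  simpa only [map_add, map_smul, smul_zero, add_zero] using this

lemma sep_vec {V : Type*} [AddCommGroup V] [Module ℂ V] (φ ψ : Module.Dual ℂ V) (h : ∀ c : ℂ, φ ≠ c • ψ) :
    ∃ ρ : V, ψ ρ = 0 ∧ φ ρ = 1 := by
  by_contra hcon
  push Not at hcon
  have hk : LinearMap.ker ψ ≤ LinearMap.ker φ := by
    intro z hz
    by_contra hz2
    rw [LinearMap.mem_ker] at hz hz2
    exact hcon ((φ z)⁻¹ • z) (by simp [hz]) (by simp [hz2])
  by_cases hψ : ψ = 0
  · apply h 0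
    ext z
    have : z ∈ LinearMap.ker φ := hk (by simp [hψ])
    simpa using this
  obtain ⟨z, hz⟩ : ∃ z, ψ z ≠ 0 := by
    by_contra h0; push Not at h0; exact hψ (LinearMap.ext h0)
  apply h (φ z / ψ z)
  ext w
  have h1 : w - (ψ w / ψ z) • z ∈ LinearMap.ker φ := hk (by simp [hz])
  simp [sub_eq_zero] at h1
  rw [h1]; simp; ring

lemma Hd_nd (u v : Fin 3 → (E →L[ℂ] E)) (A : Subalgebra ℂ (E →L[ℂ] E)) (hA : IsClosed (A : Set (E →L[ℂ] E)))
    (hirr : ∀ ζ : E, ζ ≠ 0 → ∀ η : E, ∃ a ∈ A, a ζ = η) (M : ℝ≥0)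
    (hM : ∀ x : A, spectralRadius ℂ (∑ i, u i * (x : E →L[ℂ] E) * v i) ≤ (M : ℝ≥0∞) * spectralRadius ℂ (x : E →L[ℂ] E))
    (a b : E) (φ ψ : Module.Dual ℂ E) (ha : φ a = 0) (hb : φ b = 0) (hηθ : ∀ c : ℂ, φ ≠ c • ψ) :
    (NN u v φ b).transpose.trace = 0 ∧ (HC (NN u v φ a).transpose (NN u v φ b).transpose (NN u v ψ a).transpose (NN u v ψ b).transpose ∨ (NN u v φ a).transpose.trace ≠ 0) := by
  obtain ⟨ρ, hh0, hh1⟩ := sep_vec φ ψ hηθ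
  obtain ⟨x0, hx0⟩ := conj_family A hA hirr (Set.range (fun p : Fin 3 × Fin 3 => v p.1 (u p.2 a)) ∪ Set.range (fun p : Fin 3 × Fin 3 => v p.1 (u p.2 b)))
    ((Set.finite_range _).union (Set.finite_range _)) (ψ.smulRight a + φ.smulRight b) ρ φ hh1
  have := HC_aux (NN u v φ a).transpose (NN u v φ b).transpose (NN u v ψ a).transpose (NN u v ψ b).transpose ((M : ℝ≥0∞) * spectralRadius ℂ (x0 : E →L[ℂ] E)).toReal (by
    intro s hs k hk
    obtain ⟨x, hxr, hx⟩ := hx0 s⁻¹ (inv_ne_zero hs)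
    have h1 : ∀ i j, (x : E →L[ℂ] E) (v i (u j a)) = ψ (v i (u j a)) • a + (s • φ) (v i (u j a)) • b := by
      intro i j
      rw [hx _ (Or.inl ⟨(i, j), rfl⟩)]
      simp [ha, hb, hh0, hh1]
      module
    have h2 : ∀ i j, (x : E →L[ℂ] E) (v i (u j b)) = ψ (v i (u j b)) • a + (s • φ) (v i (u j b)) • b := by
      intro i j
      rw [hx _ (Or.inr ⟨(i, j), rfl⟩)]
      simp [ha, hb, hh0, hh1]
      module
    have := bound_common u v A M hM x0 x hxr a b ψ (s • φ) h1 h2 k hk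
    rw [← Matrix.trace_transpose, Matrix.transpose_pow, Matrix.fromBlocks_transpose] at this
    simpa only [map_smul, LinearMap.smul_apply, Matrix.transpose_smul] using this)
  refine ⟨this.1, ?_⟩
  by_cases ht : (NN u v φ a).transpose.trace = 0
  · exact Or.inl ⟨ht, this.2⟩
  · exact Or.inr ht

lemma Hd_prim (u v : Fin 3 → (E →L[ℂ] E)) (A : Subalgebra ℂ (E →L[ℂ] E)) (hA : IsClosed (A : Set (E →L[ℂ] E)))
    (hirr : ∀ ζ : E, ζ ≠ 0 → ∀ η : E, ∃ a ∈ A, a ζ = η) (M : ℝ≥0)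
    (hM : ∀ x : A, spectralRadius ℂ (∑ i, u i * (x : E →L[ℂ] E) * v i) ≤ (M : ℝ≥0∞) * spectralRadius ℂ (x : E →L[ℂ] E))
    (hE : ∀ θ : Module.Dual ℂ E, ∃ η : Module.Dual ℂ E, ∀ c : ℂ, η ≠ c • θ)
    (f g : E) (θ η : Module.Dual ℂ E) (hf : θ f = 0) (hg : θ g = 0) :
    HC (NN u v θ f).transpose (NN u v θ g).transpose (NN u v η f).transpose (NN u v η g).transpose := by
  by_cases hθ : θ = 0
  · subst hθ; simp [HC]
  have main : ∀ η, (∀ c : ℂ, θ ≠ c • η) → HC (NN u v θ f).transpose (NN u v θ g).transpose (NN u v η f).transpose (NN u v η g).transpose := by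
    intro η hη
    exact (Hd_nd u v A hA hirr M hM f g θ η hf hg hη).2.resolve_right 
      (not_not.2 (Hd_nd u v A hA hirr M hM g f θ η hg hf hη).1)
  by_cases hη : ∀ c : ℂ, θ ≠ c • η
  · exact main η hη
  obtain ⟨η0, h0⟩ := hE θ
  apply HC_cont _ _ _ _ 0 0 (NN u v η0 f).transpose (NN u v η0 g).transpose
  intro ε hε
  have := main (η + ε • η0) (by
    intro c hc
    by_cases hc0 : c = 0
    · subst hc0; simp at hc; exact hθ hc
    push Not at hη
    obtain ⟨d, hd⟩ := hη
    by_cases hd0 : d = 0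
    · subst hd0; simp at hd; exact hθ hd
    have e1 : η = d⁻¹ • θ := by rw [hd, smul_smul, inv_mul_cancel₀ hd0, one_smul]
    apply h0 (ε⁻¹ * (c⁻¹ - d⁻¹))
    have e2 : c⁻¹ • θ = η + ε • η0 := by rw [hc, smul_smul, inv_mul_cancel₀ hc0, one_smul]
    rw [mul_smul, sub_smul, e2, ← e1, add_sub_cancel_left, smul_smul, inv_mul_cancel₀ hε, one_smul])
  simpa only [map_add, map_smul, smul_zero, add_zero, LinearMap.add_apply, LinearMap.smul_apply, Matrix.transpose_add, Matrix.transpose_smul] using this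
end k3
end

section
set_option linter.unusedSectionVars false
set_option linter.unusedSimpArgs false
set_option linter.unusedVariables false

open Matrix

abbrev M3 := Matrix (Fin 3) (Fin 3) ℂ

section abs
variable {V V' : Type*} [AddCommGroup V] [Module ℂ V] [AddCommGroup V'] [Module ℂ V']

/-- transposed and flipped system -/
def tdual (N : V' →ₗ[ℂ] V →ₗ[ℂ] M3) : V →ₗ[ℂ] V' →ₗ[ℂ] M3 :=
  LinearMap.mk₂ ℂ (fun a φ => (N φ a).transpose) (by intros; simp) (by intros; simp) (by intros; simp) (by intros; simp)

/-- conjugated system -/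
def cj (P Q : M3) (N : V' →ₗ[ℂ] V →ₗ[ℂ] M3) : V' →ₗ[ℂ] V →ₗ[ℂ] M3 :=
  LinearMap.mk₂ ℂ (fun f θ => P * N f θ * Q) (by intros; simp [Matrix.mul_add, Matrix.add_mul]) (by intros; simp)
   (by intros; simp [Matrix.mul_add, Matrix.add_mul]) (by intros; simp)

lemma tdual_apply (N : V' →ₗ[ℂ] V →ₗ[ℂ] M3) (a : V) (φ : V') : tdual N a φ = (N φ a).transpose := rfl
lemma cj_apply (P Q : M3) (N : V' →ₗ[ℂ] V →ₗ[ℂ] M3) (f : V') (a : V) : cj P Q N f a = P * N f a * Q := rfl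

/-- the abstract hypotheses -/
structure Good (B : V' →ₗ[ℂ] V →ₗ[ℂ] ℂ) (N : V' →ₗ[ℂ] V →ₗ[ℂ] M3) : Prop where
  sep : ∀ v w : V, (∀ c : ℂ, v ≠ c • w) → ∃ g, B g w = 0 ∧ B g v = 1
  sep' : ∀ f h : V', (∀ c : ℂ, f ≠ c • h) → ∃ v, B h v = 0 ∧ B f v = 1
  H : ∀ f g θ η, B f θ = 0 → B g θ = 0 → HC (N f θ) (N g θ) (N f η) (N g η)
  H' : ∀ a b φ ψ, B φ a = 0 → B φ b = 0 → HC (N φ a).transpose (N φ b).transpose (N ψ a).transpose (N ψ b).transpose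
  dim : ∀ L : V →ₗ[ℂ] (Fin 3 → ℂ), ∃ v, v ≠ 0 ∧ L v = 0
  dim' : ∀ L : V' →ₗ[ℂ] (Fin 3 → ℂ), ∃ v, v ≠ 0 ∧ L v = 0

variable {B : V' →ₗ[ℂ] V →ₗ[ℂ] ℂ} {N : V' →ₗ[ℂ] V →ₗ[ℂ] M3}

lemma Good.dual (G : Good B N) : Good B.flip (tdual N) where
  sep := G.sep'
  sep' := G.sep
  H := fun f g θ η hf hg => G.H' f g θ η hf hg
  H' := fun a b φ ψ ha hb => by
    simp only [tdual_apply, Matrix.transpose_transpose]; exact G.H a b φ ψ ha hb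
  dim := G.dim'
  dim' := G.dim

lemma tr_cj {P Q : M3} (h : Q * P = 1) (X : M3) : (P * X * Q).trace = X.trace := by
  rw [trace_mul_comm, ← Matrix.mul_assoc, h, Matrix.one_mul]

lemma mul_cj {P Q : M3} (h : Q * P = 1) (X Y : M3) : (P * X * Q) * (P * Y * Q) = P * (X * Y) * Q := by
  calc (P * X * Q) * (P * Y * Q) = P * X * (Q * P) * Y * Q := by simp only [Matrix.mul_assoc]
    _ = _ := by rw [h]; simp only [Matrix.mul_assoc, Matrix.mul_one, Matrix.one_mul]

lemma HC_cj {P Q : M3} (h : Q * P = 1) {X Y Z W : M3} (H : HC X Y Z W) : HC (P * X * Q) (P * Y * Q) (P * Z * Q) (P * W * Q) := by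
  simp only [HC, mul_cj h, tr_cj h]; exact H

lemma Good.conj (G : Good B N) {P Q : M3} (h : Q * P = 1) : Good B (cj P Q N) where
  sep := G.sep
  sep' := G.sep'
  H := fun f g θ η hf hg => HC_cj h (G.H f g θ η hf hg)
  H' := fun a b φ ψ ha hb => by
    have h2 : P.transpose * Q.transpose = 1 := by rw [← Matrix.transpose_mul, h, Matrix.transpose_one]
    have := HC_cj h2 (G.H' a b φ ψ ha hb)
    simpa only [cj_apply, Matrix.transpose_mul, Matrix.mul_assoc] using this
  dim := G.dim
  dim' := G.dim'

/-- all consequences -/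
lemma Good.cons (G : Good B N) {f g : V'} {θ : V} (hf : B f θ = 0) (hg : B g θ = 0) (η : V) :
    (N f θ).trace = 0 ∧ (N f θ * N g η).trace = 0 ∧ (N f η * N f θ * N g η).trace = 0 ∧
    (N f θ * N g θ * N g η).trace = 0 ∧ (N f θ * N g η * N f θ * N g η).trace + 2 * (N f η * N f θ * N g θ * N g η).trace = 0 ∧
    (N f θ * N f η * N g θ).trace = 0 ∧ 
    (N f θ * N f θ * N g η).trace + (N f θ * N g θ * N f η).trace = 0 ∧
    (N f θ * N g η * N g η).trace + (N f η * N g θ * N g η).trace = 0 := by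
  obtain ⟨h1, h2, h3, h4, h5⟩ := G.H f g θ η hf hg
  have hs := G.H g f θ η hg hf
  have hff := G.H f f θ η hf hf
  have hgg := G.H g g θ η hg hg
  have hfg : B (f + g) θ = 0 := by simp [hf, hg]
  have hp := (G.H (f + g) (f + g) θ η hfg hfg).2.2.2.1
  have hmfg : B (f - g) θ = 0 := by simp [hf, hg]
  have hm := (G.H (f - g) (f - g) θ η hmfg hmfg).2.2.2.1
  have hq := (G.H (f + g) g θ η hfg hg).2.2.1
  have c1 : (N f θ * N f η * N g θ).trace = 0 := by
    rw [trace_mul_comm, ← Matrix.mul_assoc]; exact hs.2.2.2.1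
  refine ⟨h1, h2, h3, h4, h5, c1, ?_, ?_⟩
  · have c2 : (N g θ * N f θ * N f η).trace = 0 := hs.2.2.2.1
    have c3 := hff.2.2.2.1
    have c4 := hgg.2.2.2.1
    simp only [map_add, map_sub, LinearMap.add_apply, LinearMap.sub_apply, Matrix.add_mul, Matrix.mul_add, Matrix.sub_mul, Matrix.mul_sub, trace_add, trace_sub] at hp hm
    linear_combination (hp - hm) / 2 - c2 - c4
  · have c4 := hgg.2.2.1
    simp only [map_add, map_sub, LinearMap.add_apply, LinearMap.sub_apply, Matrix.add_mul, Matrix.mul_add, Matrix.sub_mul, Matrix.mul_sub, trace_add, trace_sub] at hq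
    have e : (N g η * N f θ * N g η).trace = (N f θ * N g η * N g η).trace := by
      rw [trace_mul_cycle, trace_mul_cycle]
    rw [← e]
    linear_combination hq - h3 - c4

lemma Good.pows (G : Good B N) {f g : V'} {θ : V} (hf : B f θ = 0) (hg : B g θ = 0) :
    (N f θ).trace = 0 ∧ (N f θ * N f θ).trace = 0 ∧ (N f θ * N f θ * N f θ).trace = 0 ∧
    (N f θ * N g θ).trace = 0 ∧ (N f θ * N f θ * N g θ).trace = 0 := by
  obtain ⟨h1, h2, h3, h4, h5⟩ := G.H f g θ θ hf hg
  have hff := G.H f f θ θ hf hf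
  exact ⟨h1, hff.2.1, hff.2.2.1, h2, h3⟩

lemma cayley3 (X : M3) (h1 : X.trace = 0) (h2 : (X * X).trace = 0) (h3 : (X * X * X).trace = 0) : X * X * X = 0 := by
  have e : ∀ i j, (X * X * X) i j = X.trace * (X * X) i j - ((X.trace ^ 2 - (X * X).trace) / 2) * X i j +
      ((X.trace ^ 3 - 3 * X.trace * (X * X).trace + 2 * (X * X * X).trace) / 6) * (1 : M3) i j := by
    intro i j
    fin_cases i <;> fin_cases j <;> simp [Matrix.trace, Fin.sum_univ_three, Matrix.mul_apply] <;> ring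
  ext i j
  rw [e, h1, h2, h3]; simp

lemma unit_of_mulVec (Q : M3) (h : ∀ c, Q *ᵥ c = 0 → c = 0) : ∃ P : M3, P * Q = 1 ∧ Q * P = 1 := by
  have : Function.Injective Q.mulVec := by
    intro a b hab
    have := h (a - b) (by rw [Matrix.mulVec_sub]; simpa [sub_eq_zero] using hab)
    exact sub_eq_zero.1 this
  rw [Matrix.mulVec_injective_iff_isUnit] at this
  obtain ⟨U, hU⟩ := this
  exact ⟨U⁻¹.val, by rw [← hU]; simp, by rw [← hU]; simp⟩

lemma mulVec_cols (Q : M3) (c : Fin 3 → ℂ) : Q *ᵥ c = c 0 • Q.col 0 + c 1 • Q.col 1 + c 2 • Q.col 2 := by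
  ext i; simp [Matrix.mulVec, dotProduct, Fin.sum_univ_three, Matrix.col]; ring

lemma nf1 (X : M3) (h1 : X * X * X = 0) (h2 : X * X ≠ 0) :
    ∃ P Q : M3, P * Q = 1 ∧ Q * P = 1 ∧ P * X * Q = !![0,1,0;0,0,1;0,0,0] := by
  obtain ⟨w, hw⟩ : ∃ w : Fin 3 → ℂ, X *ᵥ (X *ᵥ w) ≠ 0 := by
    by_contra hn
    push Not at hn
    apply h2
    apply Matrix.ext_of_mulVec_single
    intro i
    rw [← Matrix.mulVec_mulVec, hn]; simp; rfl
  have h3 : X *ᵥ (X *ᵥ (X *ᵥ w)) = 0 := by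
    simp only [Matrix.mulVec_mulVec]; rw [← Matrix.mul_assoc, h1]; simp
  let Q : M3 := (Matrix.of ![X *ᵥ (X *ᵥ w), X *ᵥ w, w]).transpose
  have c0 : Q.col 0 = X *ᵥ (X *ᵥ w) := rfl
  have c1 : Q.col 1 = X *ᵥ w := rfl
  have c2 : Q.col 2 = w := rfl
  obtain ⟨P, hP, hP'⟩ := unit_of_mulVec Q (by
    intro c hc
    rw [mulVec_cols, c0, c1, c2] at hc
    have e1 := congrArg (fun z => X *ᵥ (X *ᵥ z)) hc
    simp only [Matrix.mulVec_add, Matrix.mulVec_smul, h3, Matrix.mulVec_zero, smul_zero, zero_add] at e1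
    have k2 : c 2 = 0 := by simpa [-Matrix.mulVec_mulVec, hw] using e1
    have e2 := congrArg (fun z => X *ᵥ z) hc
    simp only [Matrix.mulVec_add, Matrix.mulVec_smul, h3, Matrix.mulVec_zero, smul_zero, zero_add, k2, zero_smul, add_zero] at e2
    have k1 : c 1 = 0 := by simpa [-Matrix.mulVec_mulVec, hw] using e2
    have k0 : c 0 = 0 := by simpa [-Matrix.mulVec_mulVec, hw, k1, k2] using hc
    ext i; fin_cases i <;> simp [k0, k1, k2])
  refine ⟨P, Q, hP, hP', ?_⟩
  have : X * Q = Q * !![0,1,0;0,0,1;0,0,0] := by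
    apply Matrix.ext_of_mulVec_single
    intro i
    rw [← Matrix.mulVec_mulVec, ← Matrix.mulVec_mulVec, mulVec_cols Q, mulVec_cols Q, c0, c1, c2]
    fin_cases i <;> simp [-Matrix.mulVec_mulVec, Matrix.mulVec_add, Matrix.mulVec_smul, h3]
  rw [Matrix.mul_assoc, this, ← Matrix.mul_assoc, hP, Matrix.one_mul]

lemma nf2 (X : M3) (h1 : X * X = 0) (h2 : X ≠ 0) :
    ∃ P Q : M3, P * Q = 1 ∧ Q * P = 1 ∧ P * X * Q = !![0,0,1;0,0,0;0,0,0] := by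
  obtain ⟨w, hw⟩ : ∃ w : Fin 3 → ℂ, X *ᵥ w ≠ 0 := by
    by_contra hn
    push Not at hn
    apply h2
    apply Matrix.ext_of_mulVec_single
    intro i
    rw [hn]; simp; rfl
  have h3 : ∀ z, X *ᵥ (X *ᵥ z) = 0 := by
    intro z
    rw [Matrix.mulVec_mulVec, h1]; simp
  obtain ⟨k, hk, hk2⟩ : ∃ k, X *ᵥ k = 0 ∧ ∀ c : ℂ, k ≠ c • (X *ᵥ w) := by
    by_contra hn
    push Not at hn
    have hle : LinearMap.ker X.mulVecLin ≤ Submodule.span ℂ {X *ᵥ w} := by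
      intro z hz
      obtain ⟨c, hc⟩ := hn z hz
      rw [hc]
      exact Submodule.smul_mem _ _ (Submodule.mem_span_singleton_self _)
    have hr : LinearMap.range X.mulVecLin ≤ LinearMap.ker X.mulVecLin := by
      rintro _ ⟨z, rfl⟩
      exact h3 z
    have d1 := Submodule.finrank_mono hle
    have d2 := Submodule.finrank_mono hr
    have d3 := LinearMap.finrank_range_add_finrank_ker X.mulVecLin
    have d4 := finrank_span_singleton (K := ℂ) hw
    simp at d3
    omega
  let Q : M3 := (Matrix.of ![X *ᵥ w, k, w]).transpose
  have c0 : Q.col 0 = X *ᵥ w := rfl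
  have c1 : Q.col 1 = k := rfl
  have c2 : Q.col 2 = w := rfl
  obtain ⟨P, hP, hP'⟩ := unit_of_mulVec Q (by
    intro c hc
    rw [mulVec_cols, c0, c1, c2] at hc
    have e1 := congrArg (fun z => X *ᵥ z) hc
    simp only [Matrix.mulVec_add, Matrix.mulVec_smul, h3, hk, Matrix.mulVec_zero, smul_zero, zero_add] at e1
    have k2 : c 2 = 0 := by simpa [hw] using e1
    have k1 : c 1 = 0 := by
      by_contra hc1
      apply hk2 (-(c 1)⁻¹ * c 0)
      rw [k2, zero_smul, add_zero] at hc
      have : c 1 • k = - (c 0 • (X *ᵥ w)) := by rw [eq_neg_iff_add_eq_zero, add_comm]; exact hc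
      calc k = (c 1)⁻¹ • (c 1 • k) := by rw [smul_smul, inv_mul_cancel₀ hc1, one_smul]
        _ = _ := by rw [this]; module
    have k0 : c 0 = 0 := by simpa [hw, k1, k2] using hc
    ext i; fin_cases i <;> simp [k0, k1, k2])
  refine ⟨P, Q, hP, hP', ?_⟩
  have : X * Q = Q * !![0,0,1;0,0,0;0,0,0] := by
    apply Matrix.ext_of_mulVec_single
    intro i
    rw [← Matrix.mulVec_mulVec, ← Matrix.mulVec_mulVec, mulVec_cols Q, mulVec_cols Q, c0, c1, c2]
    fin_cases i <;> simp [Matrix.mulVec_add, Matrix.mulVec_smul, h3, hk]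
  rw [Matrix.mul_assoc, this, ← Matrix.mul_assoc, hP, Matrix.one_mul]
end abs
end

section
set_option linter.unusedSectionVars false
set_option linter.unusedSimpArgs false
set_option linter.unusedVariables false

open Matrix

section abs1
variable {V V' : Type*} [AddCommGroup V] [Module ℂ V] [AddCommGroup V'] [Module ℂ V']
variable {B : V' →ₗ[ℂ] V →ₗ[ℂ] ℂ} {N : V' →ₗ[ℂ] V →ₗ[ℂ] M3}

lemma Good.split (G : Good B N) {θ1 θ2 : V} (h : ∀ c : ℂ, θ1 ≠ c • θ2) (g : V') :
    ∃ g1 g2, g = g1 + g2 ∧ B g1 θ1 = 0 ∧ B g2 θ2 = 0 := by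
  obtain ⟨g0, h1, h2⟩ := G.sep θ1 θ2 h
  refine ⟨g - B g θ1 • g0, B g θ1 • g0, by abel, ?_, ?_⟩
  · simp [h2]
  · simp [h1]

lemma prod_zero (p : Submodule ℂ V) (l1 l2 : V →ₗ[ℂ] ℂ) (h : ∀ v ∈ p, l1 v * l2 v = 0) :
    (∀ v ∈ p, l1 v = 0) ∨ (∀ v ∈ p, l2 v = 0) := by
  by_contra hn
  push Not at hn
  obtain ⟨⟨a, ha, ha'⟩, ⟨b, hb, hb'⟩⟩ := hn
  have h1 := (mul_eq_zero.1 (h a ha)).resolve_left ha'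
  have h2 := (mul_eq_zero.1 (h b hb)).resolve_right hb'
  have h3 := h (a + b) (p.add_mem ha hb)
  simp [h1, h2, ha', hb'] at h3

lemma bil_prod_zero (p : Submodule ℂ V') (F K : V' →ₗ[ℂ] V →ₗ[ℂ] ℂ) (h : ∀ g ∈ p, ∀ v, F g v * K g v = 0) :
    (∀ g ∈ p, ∀ v, F g v = 0) ∨ (∀ g ∈ p, ∀ v, K g v = 0) := by
  have h' : ∀ g ∈ p, (∀ v, F g v = 0) ∨ (∀ v, K g v = 0) := by
    intro g hg
    have := prod_zero ⊤ (F g) (K g) (fun v _ => h g hg v)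
    simpa using this
  by_contra hn
  push Not at hn
  obtain ⟨⟨a, ha, v, hv⟩, ⟨b, hb, w, hw⟩⟩ := hn
  have h1 := (h' a ha).resolve_left (fun h => hv (h v))
  have h2 := (h' b hb).resolve_right (fun h => hw (h w))
  rcases h' (a + b) (p.add_mem ha hb) with h3 | h3
  · have := h3 v; simp [h2] at this; exact hv this
  · have := h3 w; simp [h1] at this; exact hw this

def en (N : V' →ₗ[ℂ] V →ₗ[ℂ] M3) (i j : Fin 3) : V' →ₗ[ℂ] V →ₗ[ℂ] ℂ :=
  N.compr₂ (Matrix.entryLinearMap ℂ ℂ i j)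

lemma en_apply (N : V' →ₗ[ℂ] V →ₗ[ℂ] M3) (i j : Fin 3) (g : V') (v : V) : en N i j g v = N g v i j := rfl

lemma bil_scalar {W : Type*} [AddCommGroup W] [Module ℂ W] (G : Good B N) (F : V' →ₗ[ℂ] V →ₗ[ℂ] W)
    (h : ∀ f θ, B f θ = 0 → F f θ = 0) : ∃ m : W, ∀ f θ, F f θ = B f θ • m := by
  obtain ⟨θ0, hθ0, -⟩ := G.dim 0
  obtain ⟨f0, -, hf0⟩ := G.sep θ0 0 (by simpa using hθ0)
  have k1 : ∀ θ, F f0 θ = B f0 θ • F f0 θ0 := by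
    intro θ
    have := h f0 (θ - B f0 θ • θ0) (by simp [hf0])
    simpa [sub_eq_zero] using this
  have k2 : ∀ f θ, B f0 θ ≠ 0 → F f θ = B f θ • F f0 θ0 := by
    intro f θ hθ
    have := h (f - (B f θ / B f0 θ) • f0) θ (by simp [hθ])
    simp [sub_eq_zero] at this
    rw [this, k1 θ, smul_smul, div_mul_cancel₀ _ hθ]
  refine ⟨F f0 θ0, fun f θ => ?_⟩
  by_cases hθ : B f0 θ = 0
  · have e1 := k2 f (θ + θ0) (by simp [hθ, hf0])
    have e2 := k2 f θ0 (by simp [hf0])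
    simp [e2, add_smul] at e1
    exact e1
  · exact k2 f θ hθ

def Tri (N : V' →ₗ[ℂ] V →ₗ[ℂ] M3) : Prop := ∃ P Q : M3, P * Q = 1 ∧ Q * P = 1 ∧
  ∀ g η, (P * N g η * Q) 1 0 = 0 ∧ (P * N g η * Q) 2 0 = 0 ∧ (P * N g η * Q) 2 1 = 0

lemma cj_cj (P Q P' Q' : M3) (N : V' →ₗ[ℂ] V →ₗ[ℂ] M3) : cj P' Q' (cj P Q N) = cj (P' * P) (Q * Q') N := by
  ext1 g; ext1 v; simp only [cj_apply, Matrix.mul_assoc]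

lemma inv_comp {P Q P' Q' : M3} (h : P * Q = 1) (h' : P' * Q' = 1) : (P' * P) * (Q * Q') = 1 := by
  calc (P' * P) * (Q * Q') = P' * (P * Q) * Q' := by simp only [Matrix.mul_assoc]
    _ = 1 := by rw [h, Matrix.mul_one, h']

lemma Tri.of_cj {P Q : M3} (h : P * Q = 1) (h' : Q * P = 1) (T : Tri (cj P Q N)) : Tri N := by
  obtain ⟨P', Q', a, b, c⟩ := T
  refine ⟨P' * P, Q * Q', inv_comp h a, inv_comp b h', ?_⟩
  intro g η
  have := c g η
  simp only [cj_apply, Matrix.mul_assoc] at this ⊢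
  exact this

def Jm : M3 := !![0,0,1;0,1,0;1,0,0]
lemma Jm_sq : Jm * Jm = 1 := by
  ext i j; fin_cases i <;> fin_cases j <;> simp [Jm, Matrix.mul_apply, Fin.sum_univ_three, Matrix.vecMul, dotProduct]
lemma Jm_conj (X : M3) : Jm * X * Jm = !![X 2 2, X 2 1, X 2 0; X 1 2, X 1 1, X 1 0; X 0 2, X 0 1, X 0 0] := by
  ext i j; fin_cases i <;> fin_cases j <;> simp [Jm, Matrix.mul_apply, Fin.sum_univ_three, Matrix.vecMul, dotProduct]

lemma Tri.of_dual (T : Tri (tdual N)) : Tri N := by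
  obtain ⟨P, Q, a, b, c⟩ := T
  have e : cj Jm Jm (cj Qᵀ Pᵀ N) = cj (Jm * Qᵀ) (Pᵀ * Jm) N := cj_cj _ _ _ _ _
  have a' : Qᵀ * Pᵀ = 1 := by rw [← Matrix.transpose_mul, a, Matrix.transpose_one]
  have b' : Pᵀ * Qᵀ = 1 := by rw [← Matrix.transpose_mul, b, Matrix.transpose_one]
  refine Tri.of_cj a' b' ⟨Jm, Jm, Jm_sq, Jm_sq, fun g η => ?_⟩
  have h := c η g
  have e : P * tdual N η g * Q = (cj Qᵀ Pᵀ N g η)ᵀ := by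
    simp [cj_apply, tdual_apply, Matrix.mul_assoc]
  rw [e] at h
  simp only [Matrix.transpose_apply] at h
  rw [Jm_conj]
  simp [h]

lemma tri_of_line (h0 : ∀ g η, N g η 1 0 = 0 ∧ N g η 2 0 = 0)
    (h : (∃ t : ℂ, ∀ g η, N g η 2 1 + t * (N g η 2 2 - N g η 1 1) - t ^ 2 * N g η 1 2 = 0) ∨ (∀ g η, N g η 1 2 = 0)) : Tri N := by
  rcases h with ⟨t, h⟩ | h
  · refine ⟨!![1,0,0;0,1,0;0,-t,1], !![1,0,0;0,1,0;0,t,1], ?_, ?_, fun g η => ?_⟩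
    · ext i j; fin_cases i <;> fin_cases j <;> simp [Matrix.mul_apply, Fin.sum_univ_three, Matrix.vecMul, dotProduct]
    · ext i j; fin_cases i <;> fin_cases j <;> simp [Matrix.mul_apply, Fin.sum_univ_three, Matrix.vecMul, dotProduct]
    · have := h g η
      simp [Matrix.mul_apply, Fin.sum_univ_three, Matrix.vecMul, dotProduct, h0]
      linear_combination this
  · refine ⟨!![1,0,0;0,0,1;0,1,0], !![1,0,0;0,0,1;0,1,0], ?_, ?_, fun g η => ?_⟩
    · ext i j; fin_cases i <;> fin_cases j <;> simp [Matrix.mul_apply, Fin.sum_univ_three, Matrix.vecMul, dotProduct]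
    · ext i j; fin_cases i <;> fin_cases j <;> simp [Matrix.mul_apply, Fin.sum_univ_three, Matrix.vecMul, dotProduct]
    · have := h g η
      simp [Matrix.mul_apply, Fin.sum_univ_three, Matrix.vecMul, dotProduct, h0, this]

lemma quad_root (a b c : ℂ) (ha : a ≠ 0) : ∃ t, a * (t * t) + b * t + c = 0 := by
  obtain ⟨s, hs⟩ := IsAlgClosed.exists_pow_nat_eq (discrim a b c) (n := 2) (by norm_num)
  exact exists_quadratic_eq_zero ha ⟨s, by rw [← hs, sq]⟩

lemma R1c (G : Good B N) (h0 : ∀ g η, N g η 1 0 = 0 ∧ N g η 2 0 = 0)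
    (ha : ∀ f θ, B f θ = 0 → ∀ g η, (N f θ * N g η).trace = 0) : Tri N := by
  by_cases hz : ∀ f θ, B f θ = 0 → N f θ 1 1 = 0 ∧ N f θ 1 2 = 0 ∧ N f θ 2 1 = 0 ∧ N f θ 2 2 = 0
  · apply tri_of_line h0
    obtain ⟨a, ea⟩ := bil_scalar G (en N 1 1) (fun f θ h => (hz f θ h).1)
    obtain ⟨b, eb⟩ := bil_scalar G (en N 1 2) (fun f θ h => (hz f θ h).2.1)
    obtain ⟨c, ec⟩ := bil_scalar G (en N 2 1) (fun f θ h => (hz f θ h).2.2.1)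
    obtain ⟨d, ed⟩ := bil_scalar G (en N 2 2) (fun f θ h => (hz f θ h).2.2.2)
    simp only [en_apply, smul_eq_mul] at ea eb ec ed
    simp only [ea, eb, ec, ed]
    by_cases hb : b = 0
    · right; simp [hb]
    · left
      obtain ⟨t, ht⟩ := quad_root (-b) (d - a) c (neg_ne_zero.2 hb)
      refine ⟨t, fun g η => ?_⟩
      linear_combination B g η * ht
  · push Not at hz
    obtain ⟨f, θ, hf, hne⟩ := hz
    apply tri_of_line h0
    obtain ⟨p1, p2, p3, -, -⟩ := G.pows hf hf
    have h3 := cayley3 _ p1 p2 p3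
    set X := N f θ with hX
    obtain ⟨x10, x20⟩ := h0 f θ
    rw [← hX] at x10 x20
    have x00 : X 0 0 = 0 := by
      have := congrFun (congrFun h3 0) 0
      simp [Matrix.mul_apply, Fin.sum_univ_three, Matrix.vecMul, dotProduct, x10, x20] at this
      exact this
    simp [Matrix.trace, Matrix.mul_apply, Fin.sum_univ_three, Matrix.vecMul, dotProduct, x10, x20, x00] at p1 p2
    have x22 : X 2 2 = - X 1 1 := by linear_combination p1
    have hd : X 1 1 ^ 2 + X 1 2 * X 2 1 = 0 := by
      rw [x22] at p2; linear_combination p2 / 2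
    have hW : ∀ g η, X 1 1 * N g η 1 1 + X 1 2 * N g η 2 1 + X 2 1 * N g η 1 2 - X 1 1 * N g η 2 2 = 0 := by
      intro g η
      have := ha f θ hf g η
      rw [← hX] at this
      simp [Matrix.trace, Matrix.mul_apply, Fin.sum_univ_three, Matrix.vecMul, dotProduct, x10, x20, x00, x22, h0] at this
      linear_combination this
    by_cases hb : X 1 2 = 0
    · right
      rw [hb] at hd
      have x11 : X 1 1 = 0 := by simpa using hd
      have hc : X 2 1 ≠ 0 := by
        intro hc
        exact hne x11 hb hc (by rw [x22, x11, neg_zero])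
      intro g η
      have := hW g η
      simp [x11, hb, hc] at this
      exact this
    · left
      refine ⟨- X 1 1 / X 1 2, fun g η => ?_⟩
      have h1 := hW g η
      field_simp
      linear_combination X 1 2 * h1 - N g η 1 2 * hd

def R1 (B : V' →ₗ[ℂ] V →ₗ[ℂ] ℂ) (N : V' →ₗ[ℂ] V →ₗ[ℂ] M3) : Prop := ∀ f θ, B f θ = 0 → N f θ * N f θ = 0

lemma R1.conj (R : R1 B N) {P Q : M3} (h : Q * P = 1) : R1 B (cj P Q N) := by
  intro f θ hf
  rw [cj_apply, mul_cj h, R f θ hf]; simp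

lemma R1.dual (R : R1 B N) : R1 B.flip (tdual N) := by
  intro f θ hf
  rw [tdual_apply, ← Matrix.transpose_mul, R θ f hf]; simp

lemma shape (X Z : M3) (hX : X = !![0,0,1;0,0,0;0,0,0]) (hZ : Z * Z = 0) (hXZ : (X + Z) * (X + Z) = 0) :
    Z = !![0, Z 0 1, Z 0 2; 0, 0, Z 1 2; 0, 0, 0] ∧ Z 0 1 * Z 1 2 = 0 := by
  have h1 : X * Z + Z * X = 0 := by
    have hXX : X * X = 0 := by
      rw [hX]; ext i j; fin_cases i <;> fin_cases j <;> simp [Matrix.mul_apply, Fin.sum_univ_three, Matrix.vecMul, dotProduct]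
    rw [Matrix.add_mul, Matrix.mul_add, Matrix.mul_add, hXX, hZ] at hXZ
    simpa using hXZ
  rw [hX] at h1
  have e := fun i j => congrFun (congrFun h1 i) j
  have z20 := e 0 0
  have z21 := e 0 1
  have z22 := e 0 2
  have z10 := e 1 2
  simp [Matrix.mul_apply, Fin.sum_univ_three, Matrix.vecMul, dotProduct] at z20 z21 z22 z10
  have q := fun i j => congrFun (congrFun hZ i) j
  have q00 := q 0 0
  have q11 := q 1 1
  have q02 := q 0 2
  simp [Matrix.mul_apply, Fin.sum_univ_three, Matrix.vecMul, dotProduct, z20, z21, z10] at q00 q11 q02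
  rw [q00] at z22 q02
  simp at z22 q02
  rw [z22] at q02
  constructor
  · ext i j; fin_cases i <;> fin_cases j <;> simp [z20, z21, z22, z10, q00, q11]
  · simpa using q02

lemma R1_eta (G : Good B N) (R : R1 B N) {f : V'} {θ : V} (hf : B f θ = 0) (hne : N f θ ≠ 0) :
    ∃ η', η' ≠ 0 ∧ B f η' = 0 ∧ N f η' = 0 := by
  obtain ⟨P, Q, hP, hQ, hX⟩ := nf2 (N f θ) (R f θ hf) hne
  have key : ∃ η', η' ≠ 0 ∧ B f η' = 0 ∧ cj P Q N f η' = 0 := by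
    have R' := R.conj hQ
    set N' := cj P Q N
    have hX' : N' f θ = !![0,0,1;0,0,0;0,0,0] := hX
    have hs : ∀ η, B f η = 0 → N' f η = !![0, N' f η 0 1, N' f η 0 2; 0, 0, N' f η 1 2; 0, 0, 0] ∧ N' f η 0 1 * N' f η 1 2 = 0 := by
      intro η hη
      refine shape _ _ hX' (R' f η hη) ?_
      rw [← map_add]
      exact R' f (θ + η) (by simp [hf, hη])
    rcases prod_zero (LinearMap.ker (B f)) (en N' 0 1 f) (en N' 1 2 f) (fun v hv => (hs v hv).2) with h | h
    · obtain ⟨η', h0, h1⟩ := G.dim (LinearMap.pi ![B f, en N' 1 2 f, en N' 0 2 f])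
      have k := congrFun h1
      have k0 : B f η' = 0 := k 0
      have k1 : N' f η' 1 2 = 0 := k 1
      have k2 : N' f η' 0 2 = 0 := k 2
      refine ⟨η', h0, k0, ?_⟩
      have k3 : N' f η' 0 1 = 0 := h η' k0
      rw [(hs η' k0).1, k1, k2, k3]
      ext i j; fin_cases i <;> fin_cases j <;> simp
    · obtain ⟨η', h0, h1⟩ := G.dim (LinearMap.pi ![B f, en N' 0 1 f, en N' 0 2 f])
      have k := congrFun h1
      have k0 : B f η' = 0 := k 0
      have k1 : N' f η' 0 1 = 0 := k 1
      have k2 : N' f η' 0 2 = 0 := k 2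
      refine ⟨η', h0, k0, ?_⟩
      have k3 : N' f η' 1 2 = 0 := h η' k0
      rw [(hs η' k0).1, k1, k2, k3]
      ext i j; fin_cases i <;> fin_cases j <;> simp
  obtain ⟨η', h0, h1, h2⟩ := key
  refine ⟨η', h0, h1, ?_⟩
  rw [cj_apply] at h2
  have : N f η' = Q * (P * N f η' * Q) * P := by
    calc N f η' = (Q * P) * N f η' * (Q * P) := by rw [hQ]; simp
      _ = _ := by simp only [Matrix.mul_assoc]
  rw [this, h2]; simp

lemma indep_shift {f : V'} {θ η' : V} (hne : N f θ ≠ 0) (h0 : η' ≠ 0) (h1 : N f η' = 0) (a b : ℂ) (hab : a ≠ b) :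
    ∀ c : ℂ, θ + a • η' ≠ c • (θ + b • η') := by
  intro c hc
  have h2 := congrArg (N f) hc
  simp [h1] at h2
  have hc1 : c = 1 := by
    have : (1 - c) • N f θ = 0 := by rw [sub_smul, one_smul, ← h2, sub_self]
    have := (smul_eq_zero.1 this).resolve_right hne
    linear_combination -this
  rw [hc1, one_smul] at hc
  have : (a - b) • η' = 0 := by rw [sub_smul, sub_eq_zero]; exact add_left_cancel hc
  rcases smul_eq_zero.1 this with h | h
  · exact hab (sub_eq_zero.1 h)
  · exact h0 h

lemma R1a (G : Good B N) (R : R1 B N) : ∀ f θ, B f θ = 0 → ∀ g η, (N f θ * N g η).trace = 0 := by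
  intro f θ hf g η
  by_cases hne : N f θ = 0
  · simp [hne]
  obtain ⟨η', h0, h1, h2⟩ := R1_eta G R hf hne
  obtain ⟨g1, g2, rfl, e1, e2⟩ := G.split (indep_shift hne h0 h2 0 1 zero_ne_one) g
  simp only [zero_smul, add_zero, one_smul] at e1 e2
  have k1 := (G.H f g1 θ η hf e1).2.1
  have k2 := (G.H f g2 (θ + η') η (by simp [hf, h1]) e2).2.1
  simp [h2] at k2
  simp [Matrix.mul_add, k1, k2]

lemma R1b (G : Good B N) (R : R1 B N) {f : V'} {θ : V} (hf : B f θ = 0) (hX : N f θ = !![0,0,1;0,0,0;0,0,0]) :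
    (∀ g η, N g η 1 0 = 0 ∧ N g η 2 0 = 0) ∨ (∀ g η, N g η 2 0 = 0 ∧ N g η 2 1 = 0) := by
  have hne : N f θ ≠ 0 := by
    rw [hX]; intro h; simpa using congrFun (congrFun h 0) 2
  have Ra := R1a G R
  have w20 : ∀ g η, N g η 2 0 = 0 := by
    intro g η
    have := Ra f θ hf g η
    rw [hX] at this
    simpa [Matrix.trace, Matrix.mul_apply, Fin.sum_univ_three, Matrix.vecMul, dotProduct] using this
  suffices h : (∀ g η, N g η 1 0 = 0) ∨ (∀ g η, N g η 2 1 = 0) by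
    rcases h with h | h
    · left; exact fun g η => ⟨h g η, w20 g η⟩
    · right; exact fun g η => ⟨w20 g η, h g η⟩
  by_contra hcon
  obtain ⟨hc1, hc2⟩ := not_or.1 hcon
  obtain ⟨η', h0, h1, h2⟩ := R1_eta G R hf hne
  have key : ∀ δ : ℂ, (∀ g, B g (θ + δ • η') = 0 → ∀ η, N g η 1 0 = 0) ∨ (∀ g, B g (θ + δ • η') = 0 → ∀ η, N g η 2 1 = 0) := by
    intro δ
    set θ' := θ + δ • η' with hθ'
    have hf' : B f θ' = 0 := by simp [hθ', hf, h1]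
    have hX' : N f θ' = !![0,0,1;0,0,0;0,0,0] := by simp [hθ', h2, hX]
    have hY : ∀ g, B g θ' = 0 → N g θ' = !![0,0,N g θ' 0 2;0,0,0;0,0,0] := by
      intro g hg
      obtain ⟨s1, s2⟩ := shape _ (N g θ') hX' (R g θ' hg) (by
        have := R (f + g) θ' (by simp [hf', hg])
        simpa using this)
      have y01 : N g θ' 0 1 = 0 := by
        by_contra hy
        have hy' := (mul_eq_zero.1 s2).resolve_left hy
        apply hc1
        intro k η
        have := Ra g θ' hg k η
        rw [s1] at this
        simp [Matrix.trace, Matrix.mul_apply, Fin.sum_univ_three, Matrix.vecMul, dotProduct, w20, hy', hy] at this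
        exact this
      have y12 : N g θ' 1 2 = 0 := by
        by_contra hy
        apply hc2
        intro k η
        have := Ra g θ' hg k η
        rw [s1] at this
        simp [Matrix.trace, Matrix.mul_apply, Fin.sum_univ_three, Matrix.vecMul, dotProduct, w20, y01, hy] at this
        exact this
      rw [y01, y12] at s1
      exact s1
    have := bil_prod_zero (LinearMap.ker (B.flip θ')) (en N 2 1)
      (en N 1 0 + ((en N 0 2).flip θ').smulRight (en N 1 0 f)) (by
        intro g hg η
        have hg' : B g θ' = 0 := hg
        have e := (G.cons hf' hg' η).2.2.2.2.2.2.2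
        rw [hX', hY g hg'] at e
        simp [Matrix.trace, Matrix.mul_apply, Fin.sum_univ_three, Matrix.vecMul, dotProduct, w20] at e
        have e2 : N g η 2 1 * (N g η 1 0 + N g θ' 0 2 * N f η 1 0) = 0 := by linear_combination e
        exact e2)
    rcases this with h | h
    · right; exact fun g hg η => h g hg η
    · left
      have hz : ∀ η, N f η 1 0 = 0 := by
        intro η
        have := h f hf' η
        simp [en_apply, hX'] at this
        exact this
      intro g hg η
      have := h g hg η
      simpa [en_apply, hz] using this
  have pig : ∀ i j : Fin 3, ∀ a b : ℂ, a ≠ b → (∀ g, B g (θ + a • η') = 0 → ∀ η, N g η i j = 0) → (∀ g, B g (θ + b • η') = 0 → ∀ η, N g η i j = 0) → ∀ g η, N g η i j = 0 := by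
    intro i j a b hab ha hb g η
    obtain ⟨g1, g2, rfl, e1, e2⟩ := G.split (indep_shift hne h0 h2 a b hab) g
    simp [ha g1 e1, hb g2 e2]
  rcases key 0 with k0 | k0 <;> rcases key 1 with k1 | k1 <;> rcases key 2 with k2 | k2
  · exact hc1 (pig _ _ 0 1 (by norm_num) k0 k1)
  · exact hc1 (pig _ _ 0 1 (by norm_num) k0 k1)
  · exact hc1 (pig _ _ 0 2 (by norm_num) k0 k2)
  · exact hc2 (pig _ _ 1 2 (by norm_num) k1 k2)
  · exact hc1 (pig _ _ 1 2 (by norm_num) k1 k2)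
  · exact hc2 (pig _ _ 0 2 (by norm_num) k0 k2)
  · exact hc2 (pig _ _ 0 1 (by norm_num) k0 k1)
  · exact hc2 (pig _ _ 0 1 (by norm_num) k0 k1)

lemma eig_conj (m : M3) : ∃ P Q : M3, P * Q = 1 ∧ Q * P = 1 ∧ (P * m * Q) 1 0 = 0 ∧ (P * m * Q) 2 0 = 0 := by
  obtain ⟨μ, hμ⟩ := Module.End.exists_eigenvalue (Matrix.toLin' m)
  obtain ⟨w, hw⟩ := hμ.exists_hasEigenvector
  have hw0 := hw.2
  have hw1 : m *ᵥ w = μ • w := by simpa using hw.apply_eq_smul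
  obtain ⟨Q, hQ, hQ0⟩ : ∃ Q : M3, IsUnit Q.det ∧ Q *ᵥ ![1,0,0] = w := by
    by_cases h0 : w 0 = 0
    · by_cases h1 : w 1 = 0
      · have h2 : w 2 ≠ 0 := by
          intro h2; apply hw0; ext i; fin_cases i <;> simp [h0, h1, h2]
        refine ⟨!![w 0,0,1;w 1,1,0;w 2,0,0], by simp [Matrix.det_fin_three, h2], ?_⟩
        ext i; fin_cases i <;> simp [Matrix.mulVec, dotProduct, Fin.sum_univ_three]
      · refine ⟨!![w 0,1,0;w 1,0,0;w 2,0,1], by simp [Matrix.det_fin_three, h1], ?_⟩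
        ext i; fin_cases i <;> simp [Matrix.mulVec, dotProduct, Fin.sum_univ_three]
    · refine ⟨!![w 0,0,0;w 1,1,0;w 2,0,1], by simp [Matrix.det_fin_three, h0], ?_⟩
      ext i; fin_cases i <;> simp [Matrix.mulVec, dotProduct, Fin.sum_univ_three]
  refine ⟨Q⁻¹, Q, Matrix.nonsing_inv_mul _ hQ, Matrix.mul_nonsing_inv _ hQ, ?_⟩
  have e : (Q⁻¹ * m * Q) *ᵥ ![1,0,0] = μ • ![1,0,0] := by
    rw [← Matrix.mulVec_mulVec, hQ0, ← Matrix.mulVec_mulVec, hw1, Matrix.mulVec_smul, ← hQ0, Matrix.mulVec_mulVec, Matrix.nonsing_inv_mul _ hQ, Matrix.one_mulVec]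
  have e1 := congrFun e 1
  have e2 := congrFun e 2
  simp only [Matrix.mulVec, dotProduct, Fin.sum_univ_three] at e1 e2
  simp at e1 e2
  exact ⟨e1, e2⟩

theorem R1_main (G : Good B N) (R : R1 B N) : Tri N := by
  by_cases hz : ∀ f θ, B f θ = 0 → N f θ = 0
  · obtain ⟨m, hm⟩ := bil_scalar G N hz
    obtain ⟨P, Q, hP, hQ, e1, e2⟩ := eig_conj m
    refine Tri.of_cj hP hQ (R1c (G.conj hQ) (fun g η => ?_) ?_)
    · rw [cj_apply, hm]; simp [e1, e2]
    · intro f θ hf g η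
      rw [cj_apply, hz f θ hf]; simp
  · push Not at hz
    obtain ⟨f, θ, hf, hne⟩ := hz
    obtain ⟨P, Q, hP, hQ, hX⟩ := nf2 (N f θ) (R f θ hf) hne
    refine Tri.of_cj hP hQ ?_
    have G' := G.conj (P := P) hQ
    have R' := R.conj (P := P) hQ
    have hX' : cj P Q N f θ = _ := hX
    rcases R1b G' R' hf hX' with h | h
    · exact R1c G' h (R1a G' R')
    · apply Tri.of_dual
      refine Tri.of_cj Jm_sq Jm_sq ?_
      have G'' := G'.dual.conj Jm_sq
      have R'' := R'.dual.conj Jm_sq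
      refine R1c G'' ?_ (R1a G'' R'')
      intro η g
      rw [cj_apply, Jm_conj, tdual_apply]
      simp [h g η]
end abs1
end

section
set_option linter.unusedSectionVars false
set_option linter.unusedSimpArgs false
set_option linter.unusedVariables false

open Matrix

section abs2
variable {V V' : Type*} [AddCommGroup V] [Module ℂ V] [AddCommGroup V'] [Module ℂ V']
variable {B : V' →ₗ[ℂ] V →ₗ[ℂ] ℂ} {N : V' →ₗ[ℂ] V →ₗ[ℂ] M3}

def HT (B : V' →ₗ[ℂ] V →ₗ[ℂ] ℂ) (N : V' →ₗ[ℂ] V →ₗ[ℂ] M3) : Prop :=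
  ∀ f g θ, B f θ = 0 → B g θ = 0 → N f θ * N f θ * N g θ * N f θ = 0

lemma HT.conj (R : HT B N) {P Q : M3} (h : Q * P = 1) : HT B (cj P Q N) := by
  intro f g θ hf hg
  simp only [cj_apply, mul_cj h, R f g θ hf hg]; simp

def HT' (B : V' →ₗ[ℂ] V →ₗ[ℂ] ℂ) (N : V' →ₗ[ℂ] V →ₗ[ℂ] M3) : Prop :=
  ∀ f θ η, B f θ = 0 → B f η = 0 → N f θ * N f η * N f θ * N f θ = 0

lemma HT'.conj (R : HT' B N) {P Q : M3} (h : Q * P = 1) : HT' B (cj P Q N) := by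
  intro f g θ hf hg
  simp only [cj_apply, mul_cj h, R f g θ hf hg]; simp

lemma HT'_iff : HT' B N ↔ HT B.flip (tdual N) := by
  have e : ∀ f θ η, (N f θ * N f η * N f θ * N f θ)ᵀ = tdual N θ f * tdual N θ f * tdual N η f * tdual N θ f := by
    intro f θ η
    simp [tdual_apply, Matrix.mul_assoc]
  constructor
  · intro h θ η f hf hg
    rw [← e, h f θ η hf hg]; simp
  · intro h f θ η hf hg
    have := h θ η f hf hg
    rw [← e] at this
    exact Matrix.transpose_eq_zero.1 this

def SU (X : M3) : Prop := X = !![0, X 0 1, X 0 2; 0, 0, X 1 2; 0, 0, 0]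

lemma SU.mk {X : M3} (h00 : X 0 0 = 0) (h10 : X 1 0 = 0) (h11 : X 1 1 = 0) (h20 : X 2 0 = 0) (h21 : X 2 1 = 0) (h22 : X 2 2 = 0) : SU X := by
  unfold SU
  ext i j; fin_cases i <;> fin_cases j <;> simp [*]

lemma SU.ent {X : M3} (h : SU X) : X 0 0 = 0 ∧ X 1 0 = 0 ∧ X 1 1 = 0 ∧ X 2 0 = 0 ∧ X 2 1 = 0 ∧ X 2 2 = 0 := by
  refine ⟨?_, ?_, ?_, ?_, ?_, ?_⟩ <;> (rw [h]; simp)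

lemma SU.mul3 {X Y Z : M3} (hX : SU X) (hY : SU Y) (hZ : SU Z) : X * Y * Z = 0 := by
  rw [hX, hY, hZ]
  ext i j; fin_cases i <;> fin_cases j <;> simp [Matrix.mul_apply, Fin.sum_univ_three, Matrix.vecMul, dotProduct]

lemma SU.add {X Y : M3} (hX : SU X) (hY : SU Y) : SU (X + Y) := by
  obtain ⟨a1, a2, a3, a4, a5, a6⟩ := hX.ent
  obtain ⟨b1, b2, b3, b4, b5, b6⟩ := hY.ent
  apply SU.mk <;> simp [*]

lemma SU.smul {X : M3} (c : ℂ) (hX : SU X) : SU (c • X) := by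
  obtain ⟨a1, a2, a3, a4, a5, a6⟩ := hX.ent
  apply SU.mk <;> simp [*]

lemma su_nil {Y : M3} (h10 : Y 1 0 = 0) (h20 : Y 2 0 = 0) (h21 : Y 2 1 = 0) (h3 : Y * Y * Y = 0) : SU Y := by
  have e := fun i => congrFun (congrFun h3 i) i
  have e0 := e 0
  have e1 := e 1
  have e2 := e 2
  simp [Matrix.mul_apply, Fin.sum_univ_three, h10, h20, h21] at e0 e1 e2
  exact SU.mk e0 h10 e1 h20 h21 e2

lemma su_of {X Y : M3} (hX : SU X) (hp : X 0 1 ≠ 0) (hq : X 1 2 ≠ 0) (h1 : (X * Y).trace = 0) (h2 : (X * X * Y).trace = 0)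
    (h3 : Y * Y * Y = 0) (h : X * X * Y * X = 0 ∨ X * Y * X * X = 0) : SU Y := by
  obtain ⟨a1, a2, a3, a4, a5, a6⟩ := hX.ent
  have y20 : Y 2 0 = 0 := by
    simp [Matrix.trace, Matrix.mul_apply, Fin.sum_univ_three, *] at h2
    exact h2
  simp [Matrix.trace, Matrix.mul_apply, Fin.sum_univ_three, a1, a2, a3, a4, a5, a6, y20] at h1
  have key : Y 1 0 = 0 ∧ Y 2 1 = 0 := by
    rcases h with h | h
    · have e := congrFun (congrFun h 0) 2
      simp [Matrix.mul_apply, Fin.sum_univ_three, a1, a2, a3, a4, a5, a6, y20, hp, hq] at e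
      simp [e, hp] at h1
      exact ⟨h1, e⟩
    · have e := congrFun (congrFun h 0) 2
      simp [Matrix.mul_apply, Fin.sum_univ_three, a1, a2, a3, a4, a5, a6, y20, hp, hq] at e
      simp [e, hq] at h1
      exact ⟨e, h1⟩
  exact su_nil key.1 y20 key.2 h3

def Reg (B : V' →ₗ[ℂ] V →ₗ[ℂ] ℂ) (N : V' →ₗ[ℂ] V →ₗ[ℂ] M3) (f : V') (θ : V) : Prop :=
  B f θ = 0 ∧ SU (N f θ) ∧ N f θ 0 1 ≠ 0 ∧ N f θ 1 2 ≠ 0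

lemma Ta (G : Good B N) (h : HT B N) {f g : V'} {θ : V} (hr : Reg B N f θ) (hg : B g θ = 0) : SU (N g θ) := by
  obtain ⟨hf, hs, hp, hq⟩ := hr
  obtain ⟨-, -, -, p4, p5⟩ := G.pows hf hg
  obtain ⟨g1, g2, g3, -, -⟩ := G.pows hg hg
  exact su_of hs hp hq p4 p5 (cayley3 _ g1 g2 g3) (Or.inl (h f g θ hf hg))

lemma Ta' (G : Good B N) (h : HT' B N) {f : V'} {θ η : V} (hr : Reg B N f θ) (hg : B f η = 0) : SU (N f η) := by
  obtain ⟨hf, hs, hp, hq⟩ := hr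
  obtain ⟨-, -, -, p4, p5⟩ := G.dual.pows (f := θ) (g := η) (θ := f) hf hg
  obtain ⟨g1, g2, g3, -, -⟩ := G.pows hg hg
  refine su_of hs hp hq ?_ ?_ (cayley3 _ g1 g2 g3) (Or.inr (h f θ η hf hg))
  · rw [tdual_apply, tdual_apply, ← Matrix.transpose_mul, Matrix.trace_transpose, trace_mul_comm] at p4
    exact p4
  · rw [tdual_apply, tdual_apply, ← Matrix.transpose_mul, ← Matrix.transpose_mul, Matrix.trace_transpose, trace_mul_comm] at p5
    exact p5

def Up (W : M3) : Prop := W 1 0 = 0 ∧ W 2 0 = 0 ∧ W 2 1 = 0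

lemma Up.add {X Y : M3} (hX : Up X) (hY : Up Y) : Up (X + Y) := by
  obtain ⟨a1, a2, a3⟩ := hX
  obtain ⟨b1, b2, b3⟩ := hY
  refine ⟨?_, ?_, ?_⟩ <;> simp [*]

lemma Tb (G : Good B N) (h : HT B N) (h' : HT' B N) {f g : V'} {θ η : V} (hr : Reg B N f θ) (hg : B g θ = 0) (hη : B f η = 0) : Up (N g η) := by
  have hY := Ta G h hr hg
  have hZ := Ta' G h' hr hη
  obtain ⟨hf, hX, hp, hq⟩ := hr
  obtain ⟨-, c2, -, -, c5, -, c7, -⟩ := G.cons hf hg η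
  rw [hX.mul3 hY hZ] at c7
  rw [hZ.mul3 hX hY] at c5
  generalize N g η = W at *
  generalize N f θ = X at *
  obtain ⟨a1, a2, a3, a4, a5, a6⟩ := hX.ent
  have w20 : W 2 0 = 0 := by
    simp [Matrix.trace, Matrix.mul_apply, Fin.sum_univ_three, a1, a2, a3, a4, a5, a6, hp, hq] at c7
    exact c7
  simp [Matrix.trace, Matrix.mul_apply, Fin.sum_univ_three, a1, a2, a3, a4, a5, a6, w20] at c2 c5
  have : (X 0 1 * W 1 0) ^ 2 = 0 := by
    linear_combination c5 / 2 + (X 0 1 * W 1 0 - X 1 2 * W 2 1) / 2 * c2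
  have w10 : W 1 0 = 0 := by simpa [hp] using this
  rw [w10] at c2
  have w21 : W 2 1 = 0 := by simpa [hq] using c2
  exact ⟨w10, w20, w21⟩

lemma pick (p q p' q' : ℂ) (hp : p ≠ 0) (hq : q ≠ 0) : ∃ ε : ℂ, ε ≠ 0 ∧ p + ε * p' ≠ 0 ∧ q + ε * q' ≠ 0 := by
  by_contra hn
  push Not at hn
  have h1 := hn 1 (by norm_num)
  have h2 := hn 2 (by norm_num)
  have h3 := hn 3 (by norm_num)
  have two : ∀ p p' a b : ℂ, a ≠ b → p + a * p' = 0 → p + b * p' = 0 → p = 0 := by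
    intro p p' a b hab e1 e2
    have : (a - b) * p' = 0 := by linear_combination e1 - e2
    have := (mul_eq_zero.1 this).resolve_left (sub_ne_zero.2 hab)
    rw [this] at e1; simpa using e1
  by_cases k1 : p + 1 * p' = 0
  · by_cases k2 : p + 2 * p' = 0
    · exact hp (two _ _ 1 2 (by norm_num) k1 k2)
    · by_cases k3 : p + 3 * p' = 0
      · exact hp (two _ _ 1 3 (by norm_num) k1 k3)
      · exact hq (two _ _ 2 3 (by norm_num) (h2 k2) (h3 k3))
  · by_cases k2 : p + 2 * p' = 0
    · by_cases k3 : p + 3 * p' = 0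
      · exact hp (two _ _ 2 3 (by norm_num) k2 k3)
      · exact hq (two _ _ 1 3 (by norm_num) (h1 k1) (h3 k3))
    · exact hq (two _ _ 1 2 (by norm_num) (h1 k1) (h2 k2))

lemma indep2 {W : Type*} [AddCommGroup W] [Module ℂ W] (l : W →ₗ[ℂ] ℂ) {x y : W} (hx : l x = 1) (hy : l y = 0) (hy0 : y ≠ 0) {ε : ℂ} (hε : ε ≠ 0) :
    ∀ c : ℂ, x ≠ c • (x + ε • y) := by
  intro c hc
  have := congrArg l hc
  simp [hx, hy] at this
  rw [← this, one_smul] at hc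
  have : ε • y = 0 := by simpa using hc
  rcases smul_eq_zero.1 this with h | h
  · exact hε h
  · exact hy0 h

lemma Tc (G : Good B N) (h : HT B N) (h' : HT' B N) {f g : V'} {θ : V} (hr : Reg B N f θ) (hg : B g θ = 0) (η : V) : Up (N g η) := by
  have hf0 : f ≠ 0 := by
    rintro rfl
    exact hr.2.2.1 (by simp)
  obtain ⟨v, -, hv⟩ := G.sep' f 0 (by simpa using hf0)
  obtain ⟨g', hg'0, hL⟩ := G.dim' (LinearMap.pi ![B.flip θ, B.flip v, 0])
  have hg' : B g' θ = 0 := congrFun hL 0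
  have hg'v : B g' v = 0 := congrFun hL 1
  have hY := Ta G h hr hg'
  obtain ⟨ε, hε, e1, e2⟩ := pick _ _ (N g' θ 0 1) (N g' θ 1 2) hr.2.2.1 hr.2.2.2
  have hr2 : Reg B N (f + ε • g') θ := by
    refine ⟨by simp [hr.1, hg'], ?_, ?_, ?_⟩
    · simp only [map_add, map_smul, LinearMap.add_apply, LinearMap.smul_apply]
      exact hr.2.1.add (hY.smul _)
    · simpa using e1
    · simpa using e2
  obtain ⟨η1, η2, rfl, k1, k2⟩ := G.dual.split (indep2 (B.flip v) (x := f) (y := g') hv hg'v hg'0 hε) η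
  rw [map_add]
  exact (Tb G h h' hr hg k1).add (Tb G h h' hr2 hg k2)

lemma Td (G : Good B N) (h : HT B N) (h' : HT' B N) {f : V'} {θ : V} (hr : Reg B N f θ) (g : V') (η : V) : Up (N g η) := by
  have hθ0 : θ ≠ 0 := by
    rintro rfl
    exact hr.2.2.1 (by simp)
  obtain ⟨v, -, hv⟩ := G.sep θ 0 (by simpa using hθ0)
  obtain ⟨η', hη'0, hL⟩ := G.dim (LinearMap.pi ![B f, B v, 0])
  have hη' : B f η' = 0 := congrFun hL 0
  have hη'v : B v η' = 0 := congrFun hL 1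
  have hY := Ta' G h' hr hη'
  obtain ⟨ε, hε, e1, e2⟩ := pick _ _ (N f η' 0 1) (N f η' 1 2) hr.2.2.1 hr.2.2.2
  have hr2 : Reg B N f (θ + ε • η') := by
    refine ⟨by simp [hr.1, hη'], ?_, ?_, ?_⟩
    · simp only [map_add, map_smul, LinearMap.add_apply, LinearMap.smul_apply]
      exact hr.2.1.add (hY.smul _)
    · simpa using e1
    · simpa using e2
  obtain ⟨g1, g2, rfl, k1, k2⟩ := G.split (indep2 (B v) (x := θ) (y := η') hv hη'v hη'0 hε) g
  rw [map_add]
  exact (Tc G h h' hr k1 η).add (Tc G h h' hr2 k2 η)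

theorem caseT (G : Good B N) (h : HT B N) (h' : HT' B N) (hR : ¬ R1 B N) : Tri N := by
  unfold R1 at hR
  push Not at hR
  obtain ⟨f, θ, hf, hne⟩ := hR
  obtain ⟨p1, p2, p3, -, -⟩ := G.pows hf hf
  obtain ⟨P, Q, hP, hQ, hX⟩ := nf1 (N f θ) (cayley3 _ p1 p2 p3) hne
  refine Tri.of_cj hP hQ ⟨1, 1, by simp, by simp, fun g η => ?_⟩
  have hX' : cj P Q N f θ = !![0,1,0;0,0,1;0,0,0] := hX
  have := Td (G.conj hQ) (h.conj hQ) (h'.conj hQ) (f := f) (θ := θ) ⟨hf, by rw [hX']; simp [SU], by rw [hX']; simp, by rw [hX']; simp⟩ g η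
  simpa [Up] using this
end abs2
end

section
set_option linter.unusedSectionVars false
set_option linter.unusedSimpArgs false
set_option linter.unusedVariables false

open Matrix

def X0 : M3 := !![0,1,0;0,0,1;0,0,0]
def Y0 : M3 := !![0,0,0;1,0,0;0,-1,0]

lemma tr3 (A : M3) : A.trace = A 0 0 + A 1 1 + A 2 2 := by simp [Matrix.trace, Fin.sum_univ_three]
lemma mul3 (A B : M3) (i j : Fin 3) : (A * B) i j = A i 0 * B 0 j + A i 1 * B 1 j + A i 2 * B 2 j := by
  simp [Matrix.mul_apply, Fin.sum_univ_three]
lemma X0e : X0 0 0 = 0 ∧ X0 0 1 = 1 ∧ X0 0 2 = 0 ∧ X0 1 0 = 0 ∧ X0 1 1 = 0 ∧ X0 1 2 = 1 ∧ X0 2 0 = 0 ∧ X0 2 1 = 0 ∧ X0 2 2 = 0 := by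
  simp [X0]
lemma Y0e : Y0 0 0 = 0 ∧ Y0 0 1 = 0 ∧ Y0 0 2 = 0 ∧ Y0 1 0 = 1 ∧ Y0 1 1 = 0 ∧ Y0 1 2 = 0 ∧ Y0 2 0 = 0 ∧ Y0 2 1 = -1 ∧ Y0 2 2 = 0 := by
  simp [Y0]

section abs3
variable {V V' : Type*} [AddCommGroup V] [Module ℂ V] [AddCommGroup V'] [Module ℂ V']
variable {B : V' →ₗ[ℂ] V →ₗ[ℂ] ℂ} {N : V' →ₗ[ℂ] V →ₗ[ℂ] M3}

lemma Y_shape (G : Good B N) {f g : V'} {θ : V} (hf : B f θ = 0) (hg : B g θ = 0) (hX : N f θ = X0) :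
    N g θ 2 0 = 0 ∧ N g θ 2 1 = - N g θ 1 0 ∧ (N g θ 1 0 ≠ 0 → N g θ 2 2 = N g θ 0 0 ∧ N g θ 1 1 = -2 * N g θ 0 0) := by
  obtain ⟨-, -, -, p4, p5⟩ := G.pows hf hg
  obtain ⟨q1, -, -, -, q5⟩ := G.pows hg hf
  rw [hX] at p4 p5 q5
  generalize N g θ = Y at *
  simp only [tr3, mul3, X0e] at p4 p5 q1 q5
  have y20 : Y 2 0 = 0 := by linear_combination p5
  have y21 : Y 2 1 = - Y 1 0 := by linear_combination p4
  refine ⟨y20, y21, fun hy => ?_⟩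
  rw [y20, y21] at q5
  have : Y 1 0 * (Y 0 0 - Y 2 2) = 0 := by linear_combination q5
  have h1 := (mul_eq_zero.1 this).resolve_left hy
  exact ⟨by linear_combination -h1, by linear_combination q1 + h1⟩

structure XY (B : V' →ₗ[ℂ] V →ₗ[ℂ] ℂ) (N : V' →ₗ[ℂ] V →ₗ[ℂ] M3) (f g : V') (θ : V) : Prop where
  hf : B f θ = 0
  hg : B g θ = 0
  hX : N f θ = X0
  hY : N g θ = Y0

lemma Ex_norm (G : Good B N) (h : ¬ HT B N) : ∃ (P Q : M3) (f g : V') (θ : V), P * Q = 1 ∧ Q * P = 1 ∧ XY B (cj P Q N) f g θ := by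
  unfold HT at h
  push Not at h
  obtain ⟨f, g, θ, hf, hg, hne⟩ := h
  have hXX : N f θ * N f θ ≠ 0 := by
    intro h; apply hne; rw [h]; simp
  obtain ⟨p1, p2, p3, -, -⟩ := G.pows hf hf
  obtain ⟨P, Q, hP, hQ, hX⟩ := nf1 (N f θ) (cayley3 _ p1 p2 p3) hXX
  have G' := G.conj (P := P) hQ
  have hX' : cj P Q N f θ = X0 := hX
  have hne' : cj P Q N g θ 1 0 ≠ 0 := by
    intro h0
    apply hne
    obtain ⟨y20, y21, -⟩ := Y_shape G' hf hg hX'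
    rw [h0, neg_zero] at y21
    have : cj P Q N f θ * cj P Q N f θ * cj P Q N g θ * cj P Q N f θ = 0 := by
      rw [hX']
      ext i j
      fin_cases i <;> fin_cases j <;> simp [mul3, X0e, y20, y21]
    simp only [cj_apply, mul_cj hQ] at this
    calc N f θ * N f θ * N g θ * N f θ = (Q * P) * (N f θ * N f θ * N g θ * N f θ) * (Q * P) := by rw [hQ]; simp
      _ = Q * (P * (N f θ * N f θ * N g θ * N f θ) * Q) * P := by simp only [Matrix.mul_assoc]
      _ = 0 := by rw [this]; simp
  clear hne hXX p1 p2 p3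
  obtain ⟨-, y21, hy⟩ := Y_shape G' hf hg hX'
  obtain ⟨y22, y11⟩ := hy hne'
  set N1 := cj P Q N with hN1
  set ε : ℂ := - N1 g θ 0 0 / N1 g θ 1 0 with hε
  let C : M3 := !![1,ε,0;0,1,ε;0,0,1]
  let D : M3 := !![1,-ε,ε^2;0,1,-ε;0,0,1]
  have hCD : C * D = 1 := by
    ext i j; fin_cases i <;> fin_cases j <;> simp [C, D, mul3, Matrix.vecMul, dotProduct, Fin.sum_univ_three] <;> ring
  have hDC : D * C = 1 := by
    ext i j; fin_cases i <;> fin_cases j <;> simp [C, D, mul3, Matrix.vecMul, dotProduct, Fin.sum_univ_three] <;> ring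
  have G2 := G'.conj (P := C) hDC
  have hX2 : cj C D N1 f θ = X0 := by
    rw [cj_apply, hX']
    ext i j; fin_cases i <;> fin_cases j <;> simp [C, D, mul3, Matrix.vecMul, dotProduct, Fin.sum_univ_three, X0e] <;> ring
  have e10 : cj C D N1 g θ 1 0 = N1 g θ 1 0 := by
    rw [cj_apply]; simp [C, D, mul3, Matrix.vecMul, dotProduct, Fin.sum_univ_three, (Y_shape G' hf hg hX').1]
  have e00 : cj C D N1 g θ 0 0 = 0 := by
    rw [cj_apply]; simp only [C, D, mul3]; simp [hε, (Y_shape G' hf hg hX').1]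
    field_simp; ring
  set N2 := cj C D N1 with hN2
  obtain ⟨k20, k21, k⟩ := Y_shape G2 hf hg hX2
  rw [← e10] at hne'
  obtain ⟨k22, k11⟩ := k hne'
  rw [e00] at k22 k11
  obtain ⟨-, q2, q3, -, -⟩ := G2.pows hg hg
  simp only [tr3, mul3, k20, k21, k22, k11, e00] at q2 q3
  have k12 : N2 g θ 1 2 = N2 g θ 0 1 := by
    have : N2 g θ 1 0 * (N2 g θ 1 2 - N2 g θ 0 1) = 0 := by linear_combination - q2 / 2
    linear_combination (mul_eq_zero.1 this).resolve_left hne'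
  have k02 : N2 g θ 0 2 = 0 := by
    have : N2 g θ 1 0 ^ 2 * N2 g θ 0 2 = 0 := by linear_combination - q3 / 3
    exact (mul_eq_zero.1 this).resolve_left (pow_ne_zero _ hne')
  refine ⟨C * P, Q * D, f, (N2 g θ 1 0)⁻¹ • (g - N2 g θ 0 1 • f), θ, inv_comp hP hCD, inv_comp hDC hQ, ?_⟩
  have e : cj (C * P) (Q * D) N = N2 := by rw [hN2, hN1, cj_cj]
  rw [e]
  refine ⟨hf, by simp [hf, hg], hX2, ?_⟩
  simp only [map_smul, map_sub, LinearMap.smul_apply, LinearMap.sub_apply, hX2]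
  ext i j
  fin_cases i <;> fin_cases j <;> simp [X0e, Y0e, k20, k21, k22, k11, e00, k12, k02, hne']

lemma Ea (G : Good B N) {f g h : V'} {θ : V} (S : XY B N f g θ) (hh : B h θ = 0) :
    N h θ = N h θ 0 1 • X0 + N h θ 1 0 • Y0 := by
  have main : ∀ h, B h θ = 0 → N h θ 1 0 ≠ 0 → N h θ = N h θ 0 1 • X0 + N h θ 1 0 • Y0 := by
    intro h hh hne
    obtain ⟨k20, k21, k⟩ := Y_shape G S.hf hh S.hX
    obtain ⟨k22, k11⟩ := k hne
    obtain ⟨-, -, -, p4, p5⟩ := G.pows S.hg hh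
    obtain ⟨-, q2, -, -, -⟩ := G.pows hh hh
    rw [S.hY] at p4 p5
    generalize N h θ = U at *
    simp only [tr3, mul3, Y0e] at p4 p5
    have k02 : U 0 2 = 0 := by linear_combination - p5
    have k12 : U 1 2 = U 0 1 := by linear_combination - p4
    simp only [tr3, mul3, k20, k21, k22, k11, k02, k12] at q2
    have : U 0 0 ^ 2 = 0 := by linear_combination q2 / 6
    have k00 : U 0 0 = 0 := by simpa using this
    rw [k00] at k22 k11
    ext i j
    fin_cases i <;> fin_cases j <;> simp [X0e, Y0e, k20, k21, k22, k11, k00, k12, k02]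
  by_cases hne : N h θ 1 0 = 0
  · have := main (h + g) (by simp [hh, S.hg]) (by simp [hne, S.hY, Y0e])
    simp only [map_add, LinearMap.add_apply, S.hY, Matrix.add_apply, Y0e, add_zero, hne, zero_add, one_smul] at this
    rw [hne, zero_smul, add_zero]
    exact add_right_cancel this
  · exact main h hh hne

lemma Ec (G : Good B N) {f g : V'} {θ : V} (S : XY B N f g θ) (η : V) :
    N f η 1 0 = 0 ∧ N f η 2 0 = 0 ∧ N f η 2 1 = 0 ∧ N f η 1 2 = N f η 0 1 ∧ N f η 2 2 = N f η 1 1 ∧ N f η 0 2 = N g η 0 0 - N g η 2 2 ∧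
    N g η 0 1 = 0 ∧ N g η 0 2 = 0 ∧ N g η 1 2 = 0 ∧ N g η 1 0 = N f η 0 1 ∧ N g η 2 1 = - N f η 0 1 ∧ N g η 1 1 = N g η 0 0 ∧ N g η 2 0 = N f η 1 1 - N f η 0 0 := by
  have base : ∀ η, (N f η 2 0 = 0 ∧ N f η 2 1 = - N f η 1 0 ∧ N f η 1 2 = N f η 0 1 ∧ N f η 2 2 = N f η 1 1 ∧ N f η 0 2 = N g η 0 0 - N g η 2 2 ∧
     N g η 0 2 = 0 ∧ N g η 1 2 = N g η 0 1 ∧ N g η 2 1 = - N g η 1 0 ∧ N g η 1 1 = N g η 0 0 ∧ N g η 2 0 = N f η 1 1 - N f η 0 0) ∧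
     (N g η 1 0 ^ 2 - N g η 1 0 * N f η 0 1 + 2 * N f η 1 0 * N g η 0 1 = 0) ∧ 
     (N f η 0 1 ^ 2 - N g η 1 0 * N f η 0 1 + 2 * N f η 1 0 * N g η 0 1 = 0) ∧
     N g η 0 1 * (N g η 1 0 + N f η 0 1) = 0 ∧ N f η 1 0 * (N g η 1 0 + N f η 0 1) = 0 := by
    intro η
    have hfg : B (f + g) θ = 0 := by simp [S.hf, S.hg]
    obtain ⟨-, f2, f3, f4, f5, f6, f7, f8⟩ := G.cons S.hf S.hf η
    obtain ⟨-, g2, g3, g4, g5, g6, g7, g8⟩ := G.cons S.hg S.hg η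
    obtain ⟨-, r2, r3, r4, r5, r6, r7, r8⟩ := G.cons S.hf S.hg η
    obtain ⟨-, s2, s3, s4, s5, s6, s7, s8⟩ := G.cons S.hg S.hf η
    obtain ⟨-, -, -, -, m5, -, -, -⟩ := G.cons hfg S.hg η
    obtain ⟨-, -, -, -, n5, -, -, -⟩ := G.cons hfg S.hf η
    simp only [map_add, LinearMap.add_apply, S.hX, S.hY] at *
    generalize N f η = Z at *
    generalize N g η = W at *
    simp only [tr3, mul3, Matrix.add_apply, X0e, Y0e] at *
    clear f3 f6 f8 g3 g6 g8 r3 r8 s3 s8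
    have z20 : Z 2 0 = 0 := by linear_combination f4
    have z21 : Z 2 1 = - Z 1 0 := by linear_combination f2
    have z12 : Z 1 2 = Z 0 1 := by linear_combination -s2
    have z22 : Z 2 2 = Z 1 1 := by linear_combination -s4
    have w02 : W 0 2 = 0 := by linear_combination -g4
    have w12 : W 1 2 = W 0 1 := by linear_combination -g2
    have w21 : W 2 1 = - W 1 0 := by linear_combination r2
    have w11 : W 1 1 = W 0 0 := by linear_combination -r4
    have z02 : Z 0 2 = W 0 0 - W 2 2 := by linear_combination -s7 + w11
    have w20 : W 2 0 = Z 1 1 - Z 0 0 := by linear_combination r7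
    simp only [z20, z21, z12, z22, w02, w12, w21, w11, z02, w20] at r5 s5 m5 n5 f5 g5
    refine ⟨⟨z20, z21, z12, z22, z02, w02, w12, w21, w11, w20⟩, ?_, ?_, ?_, ?_⟩
    · linear_combination r5 / 2
    · linear_combination s5 / 2
    · linear_combination -(m5 - r5 - g5) / 2
    · linear_combination -(n5 - f5 - s5) / 2
  obtain ⟨⟨z20, z21, z12, z22, z02, w02, w12, w21, w11, w20⟩, a1, a2, a3, a4⟩ := base η
  obtain ⟨-, b1, b2, b3, b4⟩ := base (η + θ)
  simp only [map_add, LinearMap.add_apply, S.hX, S.hY, Matrix.add_apply, X0e, Y0e, add_zero] at b1 b2 b3 b4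
  have k1 : N g η 1 0 = N f η 0 1 := by linear_combination (b1 - b2 - a1 + a2) / 2
  rw [k1] at a3 a4 b3 b4
  have k2 : N g η 0 1 = 0 := by linear_combination (b3 - a3) / 2
  have k3 : N f η 1 0 = 0 := by linear_combination (b4 - a4) / 2
  refine ⟨k3, z20, by rw [z21, k3, neg_zero], z12, z22, z02, k2, w02, by rw [w12, k2], k1, by rw [w21, k1], w11, w20⟩

lemma Eb (G : Good B N) {f g h : V'} {θ : V} (S : XY B N f g θ) (hh : B h θ = 0) (hN : N h θ = 0) (η : V) :
    N h η = N h η 0 0 • (1 : M3) := by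
  have S2 : XY B N (f + h) g θ := ⟨by simp [S.hf, hh], S.hg, by simp [S.hX, hN], S.hY⟩
  have hfg : B (f + g) θ = 0 := by simp [S.hf, S.hg]
  obtain ⟨-, r2, -, -, r5, -, r7, -⟩ := G.cons S.hf hh η
  obtain ⟨-, s2, -, -, s5, -, s7, -⟩ := G.cons S.hg hh η
  obtain ⟨-, -, -, -, -, -, m7, -⟩ := G.cons hfg hh η
  have e1 := (Ec G S η).2.2.2.2.1
  have e2 := (Ec G S2 η).2.2.2.2.1
  simp only [map_add, LinearMap.add_apply, S.hX, S.hY, hN, Matrix.mul_zero, Matrix.zero_mul, trace_zero, mul_zero, add_zero, Matrix.add_apply] at *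
  generalize N h η = U at *
  simp only [tr3, mul3, Matrix.add_apply, X0e, Y0e] at *
  have u20 : U 2 0 = 0 := by linear_combination r7
  have u02 : U 0 2 = 0 := by linear_combination -s7
  have u12 : U 1 2 = U 0 1 := by linear_combination -s2
  have u21 : U 2 1 = - U 1 0 := by linear_combination r2
  have u22 : U 2 2 = U 0 0 := by linear_combination -m7 + r7 + s7
  have u11 : U 1 1 = U 0 0 := by linear_combination e1 - e2 + u22
  simp only [u20, u02, u12, u21] at r5 s5
  have u10 : U 1 0 = 0 := by
    have : U 1 0 ^ 2 = 0 := by linear_combination r5 / 2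
    simpa using this
  have u01 : U 0 1 = 0 := by
    have : U 0 1 ^ 2 = 0 := by linear_combination s5 / 2
    simpa using this
  ext i j
  fin_cases i <;> fin_cases j <;> simp [u20, u02, u12, u21, u22, u11, u10, u01]

lemma Eb2 (G : Good B N) {f g h : V'} {θ : V} (S : XY B N f g θ) (hh : B h θ = 0) (hN : N h θ = 0) {η0 : V} (h0 : B h η0 = 1) (η : V) :
    N h η = (N h η0 0 0 * B h η) • (1 : M3) := by
  have hk : B h (η - B h η • η0) = 0 := by simp [h0]
  have e := Eb G S hh hN (η - B h η • η0)
  have t := (G.pows hk hk).1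
  rw [e] at t
  have hz : N h (η - B h η • η0) 0 0 = 0 := by simpa using t
  rw [hz, zero_smul, map_sub, map_smul, sub_eq_zero] at e
  rw [e, Eb G S hh hN η0, smul_smul]
  congr 1
  simp; ring

lemma Ec2 (G : Good B N) {f g h : V'} {θ : V} (S : XY B N f g θ) (hh : B h θ = 0) (hN : N h θ = 0) {η0 : V} (h0 : B h η0 = 1) (η : V) :
    N f η = (N h η0 0 0 * B f η) • (1 : M3) + N f η 0 1 • X0 ∧ N g η = (N h η0 0 0 * B g η) • (1 : M3) + N f η 0 1 • Y0 := by
  have main : ∀ η, B h η ≠ 0 → N f η = (N h η0 0 0 * B f η) • (1 : M3) + N f η 0 1 • X0 ∧ N g η = (N h η0 0 0 * B g η) • (1 : M3) + N f η 0 1 • Y0 := by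
    intro η hη
    obtain ⟨z10, z20, z21, z12, z22, z02, w01, w02, w12, w10, w21, w11, w20⟩ := Ec G S η
    have hU := Eb2 G S hh hN h0 η
    set lam := N h η0 0 0
    have k1 : B (f - (B f η / B h η) • h) η = 0 := by simp [hη]
    have k2 : B (g - (B g η / B h η) • h) η = 0 := by simp [hη]
    have e1 : N (f - (B f η / B h η) • h) η = N f η - (lam * B f η) • 1 := by
      simp only [map_sub, map_smul, LinearMap.sub_apply, LinearMap.smul_apply]; rw [hU, smul_smul]; congr 2; field_simp
    have e2 : N (g - (B g η / B h η) • h) η = N g η - (lam * B g η) • 1 := by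
      simp only [map_sub, map_smul, LinearMap.sub_apply, LinearMap.smul_apply]; rw [hU, smul_smul]; congr 2; field_simp
    obtain ⟨p1, p2, -, -, -⟩ := G.pows k1 k1
    obtain ⟨q1, q2, -, -, -⟩ := G.pows k2 k2
    rw [e1] at p1 p2
    rw [e2] at q1 q2
    have one00 : ∀ i j : Fin 3, (1 : M3) i j = if i = j then 1 else 0 := fun i j => Matrix.one_apply
    simp [tr3, mul3, one00, z10, z20, z21, z22, w01, w02, w12, w11] at p1 p2 q1 q2
    have z11 : N f η 1 1 = lam * B f η := by
      have : (N f η 1 1 - lam * B f η) ^ 2 = 0 := by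
        linear_combination p2 / 6 - (N f η 0 0 - lam * B f η - 2 * (N f η 1 1 - lam * B f η)) / 6 * p1
      exact sub_eq_zero.1 (by simpa using this)
    have z00 : N f η 0 0 = lam * B f η := by linear_combination p1 - 2 * z11
    have w00 : N g η 0 0 = lam * B g η := by
      have : (N g η 0 0 - lam * B g η) ^ 2 = 0 := by
        linear_combination q2 / 6 - (N g η 2 2 - lam * B g η - 2 * (N g η 0 0 - lam * B g η)) / 6 * q1
      exact sub_eq_zero.1 (by simpa using this)
    have w22 : N g η 2 2 = lam * B g η := by linear_combination q1 - 2 * w00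
    rw [z11, z00, sub_self] at w20
    rw [w00, w22, sub_self] at z02
    rw [z11] at z22
    rw [w00] at w11
    constructor
    · ext i j
      fin_cases i <;> fin_cases j <;> simp [one00, X0e, z10, z20, z21, z12, z22, z02, z11, z00]
    · ext i j
      fin_cases i <;> fin_cases j <;> simp [one00, Y0e, w01, w02, w12, w10, w21, w11, w20, w00, w22]
  by_cases hη : B h η = 0
  · have h1 := main (η + η0) (by simp [hη, h0])
    have h2 := main η0 (by simp [h0])
    constructor
    · have a := h1.1
      have b := h2.1
      rw [map_add, map_add, Matrix.add_apply] at a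
      generalize N f η 0 1 = p at a ⊢
      generalize N f η0 0 1 = q at a b
      rw [eq_sub_of_add_eq a, b]
      module
    · have a := h1.2
      have b := h2.2
      rw [map_add, map_add, map_add, Matrix.add_apply] at a
      generalize N f η 0 1 = p at a ⊢
      generalize N f η0 0 1 = q at a b
      rw [eq_sub_of_add_eq a, b]
      module
  · exact main η hη

lemma Ed (G : Good B N) {f g : V'} {θ : V} (S : XY B N f g θ) : ∃ lam : ℂ, (∀ η, N f η = (lam * B f η) • (1 : M3) + N f η 0 1 • X0) ∧
    ∀ k, B k θ = 0 → ∃ s t : ℂ, ∀ η, N k η = (lam * B k η) • (1 : M3) + N f η 0 1 • (s • X0 + t • Y0) := by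
  obtain ⟨h0, hh0, hL⟩ := G.dim' (LinearMap.pi ![B.flip θ, (en N 0 1).flip θ, (en N 1 0).flip θ])
  have l0 : B h0 θ = 0 := congrFun hL 0
  have l1 : N h0 θ 0 1 = 0 := congrFun hL 1
  have l2 : N h0 θ 1 0 = 0 := congrFun hL 2
  have hN0 : N h0 θ = 0 := by rw [Ea G S l0, l1, l2]; simp
  obtain ⟨η0, -, hη0⟩ := G.sep' h0 0 (by simpa using hh0)
  refine ⟨N h0 η0 0 0, fun η => (Ec2 G S l0 hN0 hη0 η).1, ?_⟩
  intro k hk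
  set h := k - N k θ 0 1 • f - N k θ 1 0 • g with hh
  have hkz : B h θ = 0 := by simp [hh, S.hf, S.hg, hk]
  have hkN : N h θ = 0 := by
    simp only [hh, map_sub, map_smul, LinearMap.sub_apply, LinearMap.smul_apply, S.hX, S.hY]
    nth_rewrite 1 [Ea G S hk]
    module
  have S2 : XY B N (f + h) g θ := ⟨by simp [S.hf, hkz], S.hg, by simp [S.hX, hkN], S.hY⟩
  refine ⟨N k θ 0 1, N k θ 1 0, fun η => ?_⟩
  obtain ⟨c1, c2⟩ := Ec2 G S l0 hN0 hη0 η
  obtain ⟨d1, d2⟩ := Ec2 G S2 l0 hN0 hη0 η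
  have hb : N (f + h) η 0 1 = N f η 0 1 := by
    rw [← (Ec G S2 η).2.2.2.2.2.2.2.2.2.1, ← (Ec G S η).2.2.2.2.2.2.2.2.2.1]
  rw [hb] at d1
  have hk' : k = (f + h) - f + N k θ 0 1 • f + N k θ 1 0 • g := by rw [hh]; abel
  generalize N k θ 0 1 = s at *
  generalize N k θ 1 0 = t at *
  rw [hk']
  simp only [map_sub, map_add (f := N) (x := f + h - f + s • f), map_add (f := N) (x := f + h - f), map_add (f := B) (x := f + h - f + s • f), map_add (f := B) (x := f + h - f), map_smul, LinearMap.add_apply (f := N (f + h - f + s • f)), LinearMap.sub_apply, LinearMap.smul_apply, LinearMap.add_apply (f := N (f + h)  - N f), LinearMap.add_apply (f := N (f + h)  - N f + s • N f), LinearMap.add_apply (f := B (f + h)  - B f), LinearMap.add_apply (f := B (f + h)  - B f + s • B f)]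
  generalize N f η 0 1 = b at *
  rw [d1, c2, c1]
  simp only [smul_eq_mul]
  module

def ExC (B : V' →ₗ[ℂ] V →ₗ[ℂ] ℂ) (N : V' →ₗ[ℂ] V →ₗ[ℂ] M3) : Prop := ∃ (P Q : M3), P * Q = 1 ∧ Q * P = 1 ∧ 
  ∃ (lam : ℂ) (b : V →ₗ[ℂ] ℂ), ∀ k, ∃ s t : ℂ, ∀ η, P * N k η * Q = (lam * B k η) • (1 : M3) + b η • (s • X0 + t • Y0)

theorem caseEx (G : Good B N) (h : ¬ HT B N) : ExC B N := by
  obtain ⟨P, Q, f, g, θ, hP, hQ, S⟩ := Ex_norm G h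
  have G' := G.conj (P := P) hQ
  refine ⟨P, Q, hP, hQ, ?_⟩
  suffices hs : ∃ (lam : ℂ) (b : V →ₗ[ℂ] ℂ), ∀ k, ∃ s t : ℂ, ∀ η, cj P Q N k η = (lam * B k η) • (1 : M3) + b η • (s • X0 + t • Y0) from hs
  generalize cj P Q N = N1 at *
  obtain ⟨lam, e1, e2⟩ := Ed G' S
  obtain ⟨η', hη', hL⟩ := G'.dim (LinearMap.pi ![B f, B g, en N1 0 1 f])
  have l0 : B f η' = 0 := congrFun hL 0
  have l1 : B g η' = 0 := congrFun hL 1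
  have l2 : N1 f η' 0 1 = 0 := congrFun hL 2
  have S2 : XY B N1 f g (θ + η') := by
    refine ⟨by simp [l0, S.hf], by simp [l1, S.hg], ?_, ?_⟩
    · rw [map_add, S.hX, e1 η', l0, l2]; simp
    · obtain ⟨s, t, hst⟩ := e2 g S.hg
      rw [map_add, S.hY, hst η', l1, l2]; simp
  obtain ⟨lam2, e3, e4⟩ := Ed G' S2
  have hf0 : f ≠ 0 := by
    rintro rfl
    have := S.hX
    have := congrFun (congrFun this 0) 1
    simp [X0e] at this
  obtain ⟨v, -, hv⟩ := G'.sep' f 0 (by simpa using hf0)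
  have hlam : lam2 = lam := by
    have a := congrFun (congrFun (e1 v) 0) 0
    have b := congrFun (congrFun (e3 v) 0) 0
    simp [X0e, hv] at a b
    rw [← a, b]
  subst hlam
  refine ⟨lam2, en N1 0 1 f, fun k => ?_⟩
  have hθ1 : en N1 0 1 f θ = 1 := by rw [en_apply, S.hX]; simp [X0e]
  obtain ⟨k1, k2, rfl, h1, h2⟩ := G'.split (indep2 (en N1 0 1 f) (x := θ) (y := η') hθ1 l2 hη' (ε := 1) one_ne_zero) k
  rw [one_smul] at h2
  obtain ⟨s1, t1, r1⟩ := e2 k1 h1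
  obtain ⟨s2, t2, r2⟩ := e4 k2 h2
  refine ⟨s1 + s2, t1 + t2, fun η => ?_⟩
  rw [map_add, LinearMap.add_apply, r1, r2, map_add, LinearMap.add_apply, en_apply]
  module
end abs3
end

set_option linter.unusedSectionVars false
set_option linter.unusedSimpArgs false
set_option linter.unusedVariables false

section f0
variable {V V' : Type*} [AddCommGroup V] [Module ℂ V] [AddCommGroup V'] [Module ℂ V']
variable {B : V' →ₗ[ℂ] V →ₗ[ℂ] ℂ} {N : V' →ₗ[ℂ] V →ₗ[ℂ] M3}

lemma abs_main (G : Good B N) : Tri N ∨ ExC B N ∨ ExC B.flip (tdual N) := by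
  by_cases hR : R1 B N
  · exact Or.inl (R1_main G hR)
  by_cases hT : HT B N
  · by_cases hT' : HT' B N
    · exact Or.inl (caseT G hT hT' hR)
    · right; right
      exact caseEx G.dual (fun h => hT' (HT'_iff.2 h))
  · exact Or.inr (Or.inl (caseEx G hT))

lemma dim_of_rank (h : 4 ≤ Module.rank ℂ V) (L : V →ₗ[ℂ] (Fin 3 → ℂ)) : ∃ v, v ≠ 0 ∧ L v = 0 := by
  by_contra hcon
  push Not at hcon
  have hi : Function.Injective L := by
    rw [← LinearMap.ker_eq_bot, LinearMap.ker_eq_bot']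
    intro m hm
    by_contra h0
    exact hcon m h0 hm
  have h1 := LinearMap.lift_rank_le_of_injective L hi
  simp only [rank_fun', Fintype.card_fin, Cardinal.lift_natCast] at h1
  have h2 : Cardinal.lift.{0} (4 : Cardinal) ≤ Cardinal.lift.{0} (Module.rank ℂ V) := Cardinal.lift_le.2 h
  have h3 := h2.trans h1
  simp at h3
  norm_cast at h3

lemma dim_dual (h : 4 ≤ Module.rank ℂ V) (L : Module.Dual ℂ V →ₗ[ℂ] (Fin 3 → ℂ)) : ∃ v, v ≠ 0 ∧ L v = 0 := by
  by_contra hcon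
  push Not at hcon
  have hi : Function.Injective L := by
    rw [← LinearMap.ker_eq_bot, LinearMap.ker_eq_bot']
    intro m hm
    by_contra h0
    exact hcon m h0 hm
  have hfd : Module.Finite ℂ (Module.Dual ℂ V) := Module.Finite.of_injective L hi
  have hf : Module.Finite ℂ V := (Module.finite_dual_iff ℂ).1 hfd
  have h1 := LinearMap.finrank_le_finrank_of_injective hi
  rw [Subspace.dual_finrank_eq] at h1
  rw [← Module.finrank_eq_rank ℂ V] at h
  have h2 : 4 ≤ Module.finrank ℂ V := by exact_mod_cast h
  simp at h1
  omega

lemma indep_of_dim (h : ∀ L : V →ₗ[ℂ] (Fin 3 → ℂ), ∃ v, v ≠ 0 ∧ L v = 0) (θ : V) : ∃ η : V, ∀ c : ℂ, η ≠ c • θ := by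
  by_cases h0 : θ = 0
  · obtain ⟨v, hv, -⟩ := h 0
    exact ⟨v, by simpa [h0] using hv⟩
  · obtain ⟨f, -, hf⟩ := exists_dual_sep θ 0 (by simpa using h0)
    obtain ⟨v, hv, h1⟩ := h (LinearMap.pi ![f, 0, 0])
    refine ⟨v, ?_⟩
    rintro c rfl
    have := congrFun h1 0
    simp [hf] at this
    simp [this] at hv
end f0

section f1
variable {E : Type*} [NormedAddCommGroup E] [NormedSpace ℂ E] [CompleteSpace E]

lemma good_NN (hdim : 4 ≤ Module.rank ℂ E) (u v : Fin 3 → (E →L[ℂ] E)) (A : Subalgebra ℂ (E →L[ℂ] E)) (hA : IsClosed (A : Set (E →L[ℂ] E)))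
    (hirr : ∀ ζ : E, ζ ≠ 0 → ∀ η : E, ∃ a ∈ A, a ζ = η) (M : ℝ≥0)
    (hM : ∀ x : A, spectralRadius ℂ (∑ i, u i * (x : E →L[ℂ] E) * v i) ≤ (M : ℝ≥0∞) * spectralRadius ℂ (x : E →L[ℂ] E)) :
    Good (LinearMap.id : Module.Dual ℂ E →ₗ[ℂ] (E →ₗ[ℂ] ℂ)) (NN u v) where
  sep := fun v w h => exists_dual_sep v w h
  sep' := fun f h hh => sep_vec f h hh
  H := fun f g θ η hf hg => H_prim u v A hA hirr M hM (indep_of_dim (dim_of_rank hdim)) f g θ η hf hg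
  H' := fun a b φ ψ ha hb => Hd_prim u v A hA hirr M hM (indep_of_dim (dim_dual hdim)) a b φ ψ ha hb
  dim := dim_of_rank hdim
  dim' := dim_dual hdim

/-- change of representation -/
def cu (Q : M3) (u : Fin 3 → (E →L[ℂ] E)) : Fin 3 → (E →L[ℂ] E) := fun j => ∑ k, Q k j • u k
def cv (P : M3) (v : Fin 3 → (E →L[ℂ] E)) : Fin 3 → (E →L[ℂ] E) := fun i => ∑ k, P i k • v k

lemma NN_c (P Q : M3) (u v : Fin 3 → (E →L[ℂ] E)) (f : Module.Dual ℂ E) (θ : E) (i j : Fin 3) :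
    f (cv P v i (cu Q u j θ)) = (P * NN u v f θ * Q) i j := by
  simp only [cv, cu, Fin.sum_univ_three, NN_apply, Matrix.mul_apply, Matrix.of_apply]
  simp
  ring

lemma rep_c {P Q : M3} (h : Q * P = 1) (u v : Fin 3 → (E →L[ℂ] E)) (x : E →L[ℂ] E) :
    ∑ i, cu Q u i * x * cv P v i = ∑ i, u i * x * v i := by
  have e : ∀ k l, ∑ i, Q k i * P i l = if k = l then 1 else 0 := by
    intro k l
    have := congrFun (congrFun h k) l
    rwa [Matrix.mul_apply, Matrix.one_apply] at this
  calc ∑ i, cu Q u i * x * cv P v i = ∑ i, ∑ k, ∑ l, (Q k i * P i l) • (u k * x * v l) := by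
        refine Finset.sum_congr rfl fun i _ => ?_
        simp only [cu, cv, Finset.sum_mul, Finset.mul_sum, smul_mul_assoc, mul_smul_comm, smul_smul]
        rw [Finset.sum_comm]
        simp only [Finset.smul_sum, smul_smul, mul_comm]
    _ = ∑ k, ∑ l, (∑ i, Q k i * P i l) • (u k * x * v l) := by
        simp only [Finset.sum_smul]
        rw [Finset.sum_comm]
        refine Finset.sum_congr rfl fun k _ => ?_
        rw [Finset.sum_comm]
    _ = _ := by
        simp [e]

lemma op_ext {a b : E →L[ℂ] E} (h : ∀ (f : Module.Dual ℂ E) θ, f (a θ) = f (b θ)) : a = b := by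
  ext θ
  rw [← sub_eq_zero, ← Module.forall_dual_apply_eq_zero_iff ℂ]
  intro f
  rw [map_sub, h, sub_self]

lemma case_i {u v : Fin 3 → (E →L[ℂ] E)}
    (G : Good (LinearMap.id : Module.Dual ℂ E →ₗ[ℂ] (E →ₗ[ℂ] ℂ)) (NN u v)) (T : Tri (NN u v)) :
    ∃ P Q : M3, Q * P = 1 ∧ (∀ i j : Fin 3, j < i → cv P v i * cu Q u j = 0) ∧
            (∀ i : Fin 3, ∃ c : ℂ, cv P v i * cu Q u i = c • (1 : E →L[ℂ] E)) := by
  obtain ⟨P, Q, hPQ, hQP, h⟩ := T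
  refine ⟨P, Q, hQP, ?_, ?_⟩
  · intro i j hij
    apply op_ext
    intro f θ
    rw [ContinuousLinearMap.mul_apply, NN_c]
    obtain ⟨h1, h2, h3⟩ := h f θ
    fin_cases i <;> fin_cases j <;> simp at hij ⊢ <;> assumption
  · intro i
    obtain ⟨m, hm⟩ := bil_scalar (G.conj hQP) (en (cj P Q (NN u v)) i i) (by
      intro f θ hf
      rw [en_apply]
      have hp := (G.conj hQP).pows hf hf
      obtain ⟨h1, h2, h3⟩ := h f θ
      have := (su_nil (Y := cj P Q (NN u v) f θ) h1 h2 h3 (cayley3 _ hp.1 hp.2.1 hp.2.2.1)).ent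
      fin_cases i
      · exact this.1
      · exact this.2.2.1
      · exact this.2.2.2.2.2)
    refine ⟨m, op_ext fun f θ => ?_⟩
    rw [ContinuousLinearMap.mul_apply, NN_c]
    have := hm f θ
    rw [en_apply, cj_apply] at this
    rw [this]
    simp [mul_comm]

lemma rank1_a (a c : E →L[ℂ] E) (b : E →ₗ[ℂ] ℂ)
    (h : ∀ f : Module.Dual ℂ E, ∃ s t : ℂ, ∀ η, f (a η) = b η * s ∧ f (c η) = b η * t) :
    ∃ (ζ₀ ζ₁ : E) (g : E →L[ℂ] ℂ), a = g.smulRight ζ₁ ∧ c = g.smulRight ζ₀ := by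
  by_cases hb : b = 0
  · refine ⟨0, 0, 0, op_ext fun f η => ?_, op_ext fun f η => ?_⟩
    · obtain ⟨s, t, h⟩ := h f
      simp [(h η).1, hb]
    · obtain ⟨s, t, h⟩ := h f
      simp [(h η).2, hb]
  obtain ⟨θ0, hθ0⟩ : ∃ θ, b θ ≠ 0 := by
    by_contra hc
    push Not at hc
    exact hb (LinearMap.ext hc)
  obtain ⟨θ, hθ⟩ : ∃ θ, b θ = 1 := ⟨(b θ0)⁻¹ • θ0, by simp [hθ0]⟩
  have ha : ∀ η, a η = b η • a θ := by
    intro η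
    rw [← sub_eq_zero, ← Module.forall_dual_apply_eq_zero_iff ℂ]
    intro f
    obtain ⟨s, t, h⟩ := h f
    simp [(h η).1, (h θ).1, hθ]
  have hc : ∀ η, c η = b η • c θ := by
    intro η
    rw [← sub_eq_zero, ← Module.forall_dual_apply_eq_zero_iff ℂ]
    intro f
    obtain ⟨s, t, h⟩ := h f
    simp [(h η).2, (h θ).2, hθ]
  by_cases h1 : a θ = 0
  · by_cases h2 : c θ = 0
    · refine ⟨0, 0, 0, ?_, ?_⟩
      · ext η; rw [ha, h1]; simp
      · ext η; rw [hc, h2]; simp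
    · obtain ⟨φ, hφ⟩ := SeparatingDual.exists_eq_one (R := ℂ) h2
      refine ⟨c θ, a θ, φ.comp c, ?_, ?_⟩
      · ext η; rw [ha, h1]; simp
      · ext η; rw [hc]; simp [hc η, hφ]
  · obtain ⟨φ, hφ⟩ := SeparatingDual.exists_eq_one (R := ℂ) h1
    refine ⟨c θ, a θ, φ.comp a, ?_, ?_⟩
    · ext η; rw [ha]; simp [ha η, hφ]
    · ext η; rw [hc]; simp [ha η, hφ]

lemma rank1_b (a c : E →L[ℂ] E) (b : Module.Dual ℂ E →ₗ[ℂ] ℂ)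
    (h : ∀ η : E, ∃ s t : ℂ, ∀ f, f (a η) = b f * s ∧ f (c η) = b f * t) :
    ∃ (ζ₀ : E) (f g : E →L[ℂ] ℂ), a = g.smulRight ζ₀ ∧ c = f.smulRight ζ₀ := by
  have key : (∃ ζ : E, ζ ≠ 0 ∧ ∀ f, b f = f ζ) → ∃ (ζ₀ : E) (f g : E →L[ℂ] ℂ), a = g.smulRight ζ₀ ∧ c = f.smulRight ζ₀ := by
    rintro ⟨ζ, hζ, hb⟩
    obtain ⟨φ, hφ⟩ := SeparatingDual.exists_eq_one (R := ℂ) hζ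
    refine ⟨ζ, φ.comp c, φ.comp a, op_ext fun f η => ?_, op_ext fun f η => ?_⟩
    · obtain ⟨s, t, h⟩ := h η
      have := (h (φ : E →ₗ[ℂ] ℂ)).1
      rw [hb] at this
      simp at this
      simp [(h f).1, this, hb, hφ, mul_comm]
    · obtain ⟨s, t, h⟩ := h η
      have := (h (φ : E →ₗ[ℂ] ℂ)).2
      rw [hb] at this
      simp at this
      simp [(h f).2, this, hb, hφ, mul_comm]
  have sub : ∀ (w : E) (s : ℂ), w ≠ 0 → (∀ f : Module.Dual ℂ E, f w = b f * s) → ∃ ζ : E, ζ ≠ 0 ∧ ∀ f : Module.Dual ℂ E, b f = f ζ := by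
    intro w s hw hs
    have hs0 : s ≠ 0 := by
      rintro rfl
      apply hw
      rw [← Module.forall_dual_apply_eq_zero_iff ℂ]
      intro f; rw [hs]; simp
    exact ⟨s⁻¹ • w, by simp [hs0, hw], fun f => by simp [hs]; field_simp⟩
  by_cases ha : a = 0
  · by_cases hc : c = 0
    · exact ⟨0, 0, 0, by simp [ha], by simp [hc]⟩
    · obtain ⟨η, hη⟩ : ∃ η, c η ≠ 0 := by
        by_contra hcc
        push Not at hcc
        exact hc (ContinuousLinearMap.ext hcc)
      obtain ⟨s, t, h⟩ := h η
      exact key (sub _ t hη fun f => (h f).2)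
  · obtain ⟨η, hη⟩ : ∃ η, a η ≠ 0 := by
      by_contra hcc
      push Not at hcc
      exact ha (ContinuousLinearMap.ext hcc)
    obtain ⟨s, t, h⟩ := h η
    exact key (sub _ s hη fun f => (h f).1)

lemma ent_XY (l s t : ℂ) (W : M3) (h : W = l • (1 : M3) + (s • X0 + t • Y0)) :
    W 0 0 = l ∧ W 1 1 = l ∧ W 2 2 = l ∧ W 0 1 = s ∧ W 0 2 = 0 ∧ W 1 0 = t ∧ W 1 2 = s ∧ W 2 0 = 0 ∧ W 2 1 = -t := by
  subst h
  simp [X0e, Y0e]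

lemma case_common {u v : Fin 3 → (E →L[ℂ] E)} (lam : ℂ) (σ τ : Module.Dual ℂ E → E → ℂ) (P Q : M3)
    (h : ∀ (k : Module.Dual ℂ E) (η : E), P * NN u v k η * Q = (lam * k η) • (1 : M3) + (σ k η • X0 + τ k η • Y0)) :
    (∀ k η, k ((cv P v 0 * cu Q u 1) η) = σ k η ∧ k ((cv P v 1 * cu Q u 0) η) = τ k η) ∧
    cv P v 0 * cu Q u 0 = lam • (1 : E →L[ℂ] E) ∧
    cv P v 1 * cu Q u 1 = lam • (1 : E →L[ℂ] E) ∧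
    cv P v 2 * cu Q u 2 = lam • (1 : E →L[ℂ] E) ∧
    cv P v 0 * cu Q u 2 = 0 ∧
    cv P v 1 * cu Q u 2 = cv P v 0 * cu Q u 1 ∧
    cv P v 2 * cu Q u 0 = 0 ∧
    cv P v 2 * cu Q u 1 = -(cv P v 1 * cu Q u 0) := by
  have e := fun k η => ent_XY _ _ _ _ (h k η)
  simp only [← NN_c] at e
  refine ⟨fun k η => ⟨(e k η).2.2.2.1, (e k η).2.2.2.2.2.1⟩, ?_, ?_, ?_, ?_, ?_, ?_, ?_⟩ <;>
  · apply op_ext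
    intro f θ
    obtain ⟨h1, h2, h3, h4, h5, h6, h7, h8, h9⟩ := e f θ
    simp [*]

lemma case_ii {u v : Fin 3 → (E →L[ℂ] E)}
    (T : ExC (LinearMap.id : Module.Dual ℂ E →ₗ[ℂ] (E →ₗ[ℂ] ℂ)) (NN u v)) :
    ∃ P Q : M3, Q * P = 1 ∧ ∃ (lam : ℂ) (ζ₀ ζ₁ : E) (f : E →L[ℂ] ℂ),
            cv P v 0 * cu Q u 0 = lam • (1 : E →L[ℂ] E) ∧
            cv P v 1 * cu Q u 1 = lam • (1 : E →L[ℂ] E) ∧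
            cv P v 2 * cu Q u 2 = lam • (1 : E →L[ℂ] E) ∧
            cv P v 0 * cu Q u 1 = f.smulRight ζ₁ ∧
            cv P v 0 * cu Q u 2 = 0 ∧
            cv P v 1 * cu Q u 0 = f.smulRight ζ₀ ∧
            cv P v 1 * cu Q u 2 = f.smulRight ζ₁ ∧
            cv P v 2 * cu Q u 0 = 0 ∧
            cv P v 2 * cu Q u 1 = -(f.smulRight ζ₀) := by
  obtain ⟨P, Q, hPQ, hQP, lam, b, h⟩ := T
  choose s t h using h
  obtain ⟨h0, h1, h2, h3, h4, h5, h6, h7⟩ := case_common (u := u) (v := v) lam (fun k η => b η * s k) (fun k η => b η * t k) P Q (by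
    intro k η
    rw [h k η, smul_add, smul_smul, smul_smul]; rfl)
  obtain ⟨ζ₀, ζ₁, g, ha, hc⟩ := rank1_a (cv P v 0 * cu Q u 1) (cv P v 1 * cu Q u 0) b (fun f => ⟨s f, t f, fun η => h0 f η⟩)
  exact ⟨P, Q, hQP, lam, ζ₀, ζ₁, g, h1, h2, h3, ha, h4, hc, h5.trans ha, h6, by rw [h7, hc]⟩

def Dg : M3 := !![1,0,0;0,1,0;0,0,-1]
lemma Dg_sq : Dg * Dg = 1 := by
  ext i j; fin_cases i <;> fin_cases j <;> simp [Dg, Matrix.vecMul, dotProduct, Fin.sum_univ_three]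
lemma Dg_X : Dg * X0.transpose * Dg = Y0 := by
  ext i j; fin_cases i <;> fin_cases j <;> simp [Dg, X0, Y0, Matrix.mul_apply, Matrix.vecMul, dotProduct, Fin.sum_univ_three]
lemma Dg_Y : Dg * Y0.transpose * Dg = X0 := by
  ext i j; fin_cases i <;> fin_cases j <;> simp [Dg, X0, Y0, Matrix.mul_apply, Matrix.vecMul, dotProduct, Fin.sum_univ_three]

lemma case_iii {u v : Fin 3 → (E →L[ℂ] E)}
    (T : ExC (LinearMap.id : Module.Dual ℂ E →ₗ[ℂ] (E →ₗ[ℂ] ℂ)).flip (tdual (NN u v))) :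
    ∃ P Q : M3, Q * P = 1 ∧ ∃ (lam : ℂ) (ζ₀ : E) (f g : E →L[ℂ] ℂ),
            cv P v 0 * cu Q u 0 = lam • (1 : E →L[ℂ] E) ∧
            cv P v 1 * cu Q u 1 = lam • (1 : E →L[ℂ] E) ∧
            cv P v 2 * cu Q u 2 = lam • (1 : E →L[ℂ] E) ∧
            cv P v 0 * cu Q u 1 = g.smulRight ζ₀ ∧
            cv P v 0 * cu Q u 2 = 0 ∧
            cv P v 1 * cu Q u 0 = f.smulRight ζ₀ ∧
            cv P v 1 * cu Q u 2 = g.smulRight ζ₀ ∧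
            cv P v 2 * cu Q u 0 = 0 ∧
            cv P v 2 * cu Q u 1 = -(f.smulRight ζ₀) := by
  obtain ⟨P, Q, hPQ, hQP, lam, b, h⟩ := T
  choose s t h using h
  have hinv : (P.transpose * Dg) * (Dg * Q.transpose) = 1 := by
    rw [Matrix.mul_assoc, ← Matrix.mul_assoc Dg, Dg_sq, Matrix.one_mul, ← Matrix.transpose_mul, hQP, Matrix.transpose_one]
  obtain ⟨h0, h1, h2, h3, h4, h5, h6, h7⟩ := case_common (u := u) (v := v) lam (fun k η => b k * t η) (fun k η => b k * s η) (Dg * Q.transpose) (P.transpose * Dg) (by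
    intro k η
    have e := h η k
    rw [tdual_apply] at e
    have e2 := congrArg Matrix.transpose e
    rw [Matrix.transpose_mul, Matrix.transpose_mul, Matrix.transpose_transpose] at e2
    have e3 : Dg * Q.transpose * NN u v k η * (P.transpose * Dg) = Dg * (Q.transpose * (NN u v k η * P.transpose)) * Dg := by
      simp only [Matrix.mul_assoc]
    rw [e3, e2]
    simp only [Matrix.transpose_add, Matrix.transpose_smul, Matrix.transpose_one, Matrix.mul_add, Matrix.add_mul, Matrix.mul_smul, Matrix.smul_mul, Dg_X, Dg_Y, Matrix.mul_one, Dg_sq, smul_add, smul_smul, LinearMap.flip_apply, LinearMap.id_apply]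
    rw [add_comm ((b k * s η) • Y0)])
  obtain ⟨ζ₀, f, g, ha, hc⟩ := rank1_b (cv (Dg * Q.transpose) v 0 * cu (P.transpose * Dg) u 1) (cv (Dg * Q.transpose) v 1 * cu (P.transpose * Dg) u 0) b (fun η => ⟨t η, s η, fun f => h0 f η⟩)
  exact ⟨_, _, hinv, lam, ζ₀, f, g, h1, h2, h3, ha, h4, hc, h5.trans ha, h6, by rw [h7, hc]⟩
end f1

theorem length_three_elementary_operator_spectrally_bounded_iff
    {E : Type*} [NormedAddCommGroup E] [NormedSpace ℂ E] [CompleteSpace E]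
    (hdim : 4 ≤ Module.rank ℂ E)
    (A : Subalgebra ℂ (E →L[ℂ] E)) (hA : IsClosed (A : Set (E →L[ℂ] E)))
    (hirr : ∀ ζ : E, ζ ≠ 0 → ∀ η : E, ∃ a ∈ A, a ζ = η)
    (S : A → (E →L[ℂ] E))
    (hrep : ∃ u v : Fin 3 → (E →L[ℂ] E),
      ∀ x : A, S x = ∑ i, u i * (x : E →L[ℂ] E) * v i)
    (hlen : ∀ (m : ℕ) (u v : Fin m → (E →L[ℂ] E)),
      (∀ x : A, S x = ∑ i, u i * (x : E →L[ℂ] E) * v i) → 3 ≤ m) :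
    (∃ M : ℝ≥0, ∀ x : A,
        spectralRadius ℂ (S x) ≤ (M : ℝ≥0∞) * spectralRadius ℂ (x : E →L[ℂ] E)) ↔
      ∃ u v : Fin 3 → (E →L[ℂ] E),
        (∀ x : A, S x = ∑ i, u i * (x : E →L[ℂ] E) * v i) ∧
        (((∀ i j : Fin 3, j < i → v i * u j = 0) ∧
            (∀ i : Fin 3, ∃ c : ℂ, v i * u i = c • (1 : E →L[ℂ] E))) ∨
          (∃ (lam : ℂ) (ζ₀ ζ₁ : E) (f : E →L[ℂ] ℂ),
            v 0 * u 0 = lam • (1 : E →L[ℂ] E) ∧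
            v 1 * u 1 = lam • (1 : E →L[ℂ] E) ∧
            v 2 * u 2 = lam • (1 : E →L[ℂ] E) ∧
            v 0 * u 1 = f.smulRight ζ₁ ∧
            v 0 * u 2 = 0 ∧
            v 1 * u 0 = f.smulRight ζ₀ ∧
            v 1 * u 2 = f.smulRight ζ₁ ∧
            v 2 * u 0 = 0 ∧
            v 2 * u 1 = -(f.smulRight ζ₀)) ∨
          (∃ (lam : ℂ) (ζ₀ : E) (f g : E →L[ℂ] ℂ),
            v 0 * u 0 = lam • (1 : E →L[ℂ] E) ∧
            v 1 * u 1 = lam • (1 : E →L[ℂ] E) ∧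
            v 2 * u 2 = lam • (1 : E →L[ℂ] E) ∧
            v 0 * u 1 = g.smulRight ζ₀ ∧
            v 0 * u 2 = 0 ∧
            v 1 * u 0 = f.smulRight ζ₀ ∧
            v 1 * u 2 = g.smulRight ζ₀ ∧
            v 2 * u 0 = 0 ∧
            v 2 * u 1 = -(f.smulRight ζ₀))) := by
  constructor
  · rintro ⟨M, hM⟩
    obtain ⟨u, v, huv⟩ := hrep
    simp only [huv] at hM
    have G := good_NN hdim u v A hA hirr M hM
    rcases abs_main G with h | h | h
    · obtain ⟨P, Q, hQP, h1, h2⟩ := case_i G h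
      exact ⟨cu Q u, cv P v, fun x => by rw [huv, rep_c hQP], Or.inl ⟨h1, h2⟩⟩
    · obtain ⟨P, Q, hQP, h1⟩ := case_ii h
      exact ⟨cu Q u, cv P v, fun x => by rw [huv, rep_c hQP], Or.inr (Or.inl h1)⟩
    · obtain ⟨P, Q, hQP, h1⟩ := case_iii h
      exact ⟨cu Q u, cv P v, fun x => by rw [huv, rep_c hQP], Or.inr (Or.inr h1)⟩
  · rintro ⟨u, v, huv, h⟩
    rcases h with ⟨h0, hc⟩ | ⟨lam, ζ₀, ζ₁, f, h1, h2, h3, h4, h5, h6, h7, h8, h9⟩ | ⟨lam, ζ₀, f, g, h1, h2, h3, h4, h5, h6, h7, h8, h9⟩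
    · choose c hc using hc
      exact ⟨_, fun x => by rw [huv]; exact suff_one u v h0 c hc x⟩
    · exact ⟨_, fun x => by rw [huv]; exact suff_two_ii u v lam ζ₀ ζ₁ f h1 h2 h3 h4 h5 h6 h7 h8 h9 x⟩
    · exact ⟨_, fun x => by rw [huv]; exact suff_two_iii u v lam ζ₀ f g h1 h2 h3 h4 h5 h6 h7 h8 h9 x⟩
end
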